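/- arXiv:1504.03609 — 3 statements merged into one kernel-verified Lean document; each statement's English description precedes it below -/
import Mathlib

section
/- Theorem 3 (output agreement with optimal steady-state control allocation). Assume G_i = I_n for every node (so m = n). Let I_c = I_{11} ∪ I_{21}, let Q_i ∈ ℝ^{n×n} be symmetric positive definite for i ∈ I_c, fix y* ∈ ℝ^n, and set λ = −(Σ_{i∈I_c} Q_i^{-1})^{-1}(Σ_{i=1}^N (J_i − R_i)y* + Σ_{i=1}^N δ_i). Assume the feasibility condition: there exist x̄ ∈ (Ω_n)^N with ∇H_{n,i}(x̄_i) = y* for all i, and η̄ ∈ (Ω_e)^M such that 0 = (J_i − R_i)y* − (B_i ⊗ I_n)∇H_e(η̄) + Q_i^{-1}λ + δ_i for every i ∈ I_c and 0 = (J_i − R_i)y* − (B_i ⊗ I_n)∇H_e(η̄) + δ_i for every i ∈ I_{12} ∪ I_{22}. Let G_c be a connected undirected communication graph on I_c and consider the distributed controller ξ̇_i = Σ_{\{i,j\}∈E_c}(ξ_j − ξ_i) + Q_i^{-1}(y* − ∇H_{n,i}(x_i)), u_i = Q_i^{-1}ξ_i, for i ∈ I_c; set ξ̄_i = λ for all i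 ∈ I_c. Then there exists an open set U of initial conditions containing (x̄, η̄, ξ̄) such that every solution (x, η, ξ) of the closed-loop system with initial condition in U is defined for all t ≥ 0 and converges as t → ∞ to an equilibrium at which ∇H_{n,i}(x̃_i) = y* for every node i; moreover, for every i ∈ I_c the control u_i(t) = Q_i^{-1}ξ_i(t) converges to ū_i = Q_i^{-1}λ, which minimizes (1/2)Σ_{i∈I_c} ū_iᵀQ_iū_i subject to Σ_{i∈I_c} ū_i = −(Σ_{i=1}^N (J_i − R_i)y* + Σ_{i=1}^N δ_i). -/
open Matrix Filter Topology Set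

/-- The gradient of `H : ℝ^p → ℝ` in coordinates: `(∇H(x))_j = DH(x)[e_j]`. -/
noncomputable def grad {p : ℕ} (H : (Fin p → ℝ) → ℝ) (x : Fin p → ℝ) : Fin p → ℝ :=
  fun j => fderiv ℝ H x (Pi.single j 1)

/-- Barbalat-type lemma. -/
lemma barbalat {f g : ℝ → ℝ} {L : ℝ}
    (hf : ∀ t ∈ Ici (0:ℝ), HasDerivWithinAt f (g t) (Ici 0) t)
    (hL : Tendsto f atTop (𝓝 L)) (hg : UniformContinuousOn g (Ici 0)) :
    Tendsto g atTop (𝓝 0) := by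
  rw [Metric.uniformContinuousOn_iff] at hg
  rw [Metric.tendsto_atTop]
  intro ε hε
  obtain ⟨δ, hδ, h⟩ := hg (ε/2) (by positivity)
  rw [Metric.tendsto_atTop] at hL
  obtain ⟨T, hT⟩ := hL (ε * δ / 16) (by positivity)
  refine ⟨max T 0, fun t ht => ?_⟩
  have ht0 : 0 ≤ t := le_trans (le_max_right _ _) ht
  have htT : T ≤ t := le_trans (le_max_left _ _) ht
  obtain ⟨c, hc, hce⟩ := exists_hasDerivAt_eq_slope f g (a := t) (b := t + δ/2) (by linarith)
    (fun s hs => ((hf s (ht0.trans hs.1)).continuousWithinAt).mono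
      (fun r hr => ht0.trans hr.1))
    (fun s hs => (hf s (ht0.trans hs.1.le)).hasDerivAt (Ici_mem_nhds (ht0.trans_lt hs.1)))
  have h1 := hT t htT
  have h2 := hT (t + δ/2) (by linarith)
  have h3 := h t ht0 c (ht0.trans hc.1.le) (by
    rw [Real.dist_eq, abs_lt]; constructor <;> linarith [hc.1, hc.2])
  have h4 : g c * (δ/2) = f (t + δ/2) - f t := by
    rw [hce, add_sub_cancel_left, div_mul_cancel₀ _ (by positivity)]
  rw [Real.dist_eq, abs_lt] at h1 h2 h3
  rw [Real.dist_eq, sub_zero, abs_lt]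
  have h5 : g c < ε / 2 := by
    by_contra hcon
    push Not at hcon
    nlinarith
  have h6 : -(ε / 2) < g c := by
    by_contra hcon
    push Not at hcon
    nlinarith
  constructor <;> linarith

/-- An injective continuous map on a compact set reflects uniform continuity. -/
lemma uc_reflect {E F : Type*} [MetricSpace E] [MetricSpace F] {K : Set E} (hK : IsCompact K)
    {f : E → F} (hf : ContinuousOn f K) (hinj : InjOn f K) {u : ℝ → E} {s : Set ℝ}
    (hu : MapsTo u s K) (hfu : UniformContinuousOn (fun t => f (u t)) s) :
    UniformContinuousOn u s := by
  rw [Metric.uniformContinuousOn_iff] at hfu ⊢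
  intro ε hε
  set C : Set (E × E) := (K ×ˢ K) ∩ {p | ε ≤ dist p.1 p.2} with hC
  have hCc : IsCompact C := (hK.prod hK).inter_right
    (isClosed_le continuous_const (continuous_fst.dist continuous_snd))
  have hcont : ContinuousOn (fun p : E × E => dist (f p.1) (f p.2)) C := by
    have h1 : ContinuousOn (fun p : E × E => f p.1) C :=
      hf.comp continuousOn_fst (fun p hp => hp.1.1)
    have h2 : ContinuousOn (fun p : E × E => f p.2) C :=
      hf.comp continuousOn_snd (fun p hp => hp.1.2)
    exact continuous_dist.comp_continuousOn (h1.prodMk h2)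
  have key : ∃ m > 0, ∀ p ∈ C, m ≤ dist (f p.1) (f p.2) := by
    rcases C.eq_empty_or_nonempty with he | hne
    · exact ⟨1, one_pos, by simp [he]⟩
    · obtain ⟨p, hp, hmin⟩ := hCc.exists_isMinOn hne hcont
      refine ⟨_, ?_, fun q hq => hmin hq⟩
      refine dist_pos.2 ?_
      intro h
      have := hinj hp.1.1 hp.1.2 h
      have h2 : ε ≤ dist p.1 p.2 := hp.2
      rw [this, dist_self] at h2
      linarith
  obtain ⟨m, hm, hmC⟩ := key
  obtain ⟨δ, hδ, h⟩ := hfu m hm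
  refine ⟨δ, hδ, fun a ha b hb hab => ?_⟩
  by_contra hcon
  push Not at hcon
  exact absurd (h a ha b hb hab) (not_lt.2 (hmC (u a, u b) ⟨⟨hu ha, hu hb⟩, hcon⟩))

/-- First exit argument. -/
lemma trap {X : Type*} [TopologicalSpace X] {s : ℝ → X} (hs : ContinuousOn s (Ici 0))
    {G : Set X} (hG : IsOpen G)
    (h : ∀ T, 0 ≤ T → (∀ t, 0 ≤ t → t < T → s t ∈ G) → s T ∈ G) :
    ∀ t, 0 ≤ t → s t ∈ G := by
  by_contra hcon
  push Not at hcon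
  obtain ⟨t₀, ht₀, ht₀'⟩ := hcon
  set Z := Ici (0:ℝ) ∩ s ⁻¹' Gᶜ with hZ
  have hZc : IsClosed Z := hs.preimage_isClosed_of_isClosed isClosed_Ici hG.isClosed_compl
  have hb : BddBelow Z := ⟨0, fun x hx => hx.1⟩
  have hm := hZc.csInf_mem ⟨t₀, ht₀, ht₀'⟩ hb
  apply hm.2
  apply h _ hm.1
  intro t ht htl
  by_contra hc
  exact absurd (csInf_le hb (show t ∈ Z from ⟨ht, hc⟩)) (not_le.2 htl)

lemma cluster_zero {X Y : Type*} [TopologicalSpace X] [TopologicalSpace Y] [T2Space Y]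
    {s : ℝ → X} {K : Set X}
    (hs : ∀ t, 0 ≤ t → s t ∈ K) {φ : X → Y} (hφ : ContinuousOn φ K) {p : X} (hp : p ∈ K) {y : Y}
    (hc : MapClusterPt p atTop s) (hy : Tendsto (fun t => φ (s t)) atTop (𝓝 y)) : φ p = y := by
  rw [mapClusterPt_iff_ultrafilter] at hc
  obtain ⟨u, hu, hsu⟩ := hc
  have h1 : Tendsto s u (𝓝[K] p) := by
    apply tendsto_nhdsWithin_of_tendsto_nhds_of_eventually_within _ hsu
    apply hu
    filter_upwards [eventually_ge_atTop 0] with t ht using hs t ht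
  exact tendsto_nhds_unique ((hφ p hp).tendsto.comp h1) (hy.mono_left hu)

lemma contOn_dot {X : Type*} [TopologicalSpace X] {n : ℕ} {K : Set X} {f g : X → Fin n → ℝ}
    (hf : ContinuousOn f K) (hg : ContinuousOn g K) : ContinuousOn (fun x => f x ⬝ᵥ g x) K := by
  rw [continuousOn_iff_continuous_domRestrict] at *
  exact Continuous.dotProduct hf hg

lemma contOn_mulVec {X : Type*} [TopologicalSpace X] {n : ℕ} {K : Set X} {f : X → Fin n → ℝ}
    (A : Matrix (Fin n) (Fin n) ℝ)
    (hf : ContinuousOn f K) : ContinuousOn (fun x => A *ᵥ f x) K := by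
  rw [continuousOn_iff_continuous_domRestrict] at *
  exact Continuous.matrix_mulVec continuous_const hf

lemma grad_dot {n : ℕ} (H : (Fin n → ℝ) → ℝ) (x v : Fin n → ℝ) :
    fderiv ℝ H x v = grad H x ⬝ᵥ v := by
  conv_lhs => rw [pi_eq_sum_univ' v]
  simp only [map_sum, map_smul, grad, dotProduct, smul_eq_mul]
  refine Finset.sum_congr rfl fun i _ => ?_
  rw [mul_comm]

structure Pot {n : ℕ} (Ω : Set (Fin n → ℝ)) (D : (Fin n → ℝ) → ℝ)
    (g : (Fin n → ℝ) → (Fin n → ℝ)) (b : Fin n → ℝ) : Prop where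
  isOpen : IsOpen Ω
  mem : b ∈ Ω
  cont : ContinuousOn g Ω
  deriv : ∀ (x : ℝ → Fin n → ℝ) (x' : Fin n → ℝ) (t : ℝ) (s : Set ℝ),
    HasDerivWithinAt x x' s t → x t ∈ Ω → HasDerivWithinAt (fun t => D (x t)) (g (x t) ⬝ᵥ x') s t
  dcont : ContinuousOn D Ω
  zero : D b = 0
  gzero : g b = 0
  pos : ∀ x ∈ Ω, x ≠ b → 0 < D x
  mono : ∀ x ∈ Ω, ∀ y ∈ Ω, x ≠ y → 0 < (g x - g y) ⬝ᵥ (x - y)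

lemma bregman_nonneg {n : ℕ} {Ω : Set (Fin n → ℝ)} (ho : IsOpen Ω)
    {H : (Fin n → ℝ) → ℝ} (hH : DifferentiableOn ℝ H Ω) (hconv : ConvexOn ℝ Ω H)
    {x y : Fin n → ℝ} (hx : x ∈ Ω) (hy : y ∈ Ω) :
    0 ≤ H x - H y - grad H y ⬝ᵥ (x - y) := by
  have hd : HasFDerivAt H (fderiv ℝ H y) y :=
    ((hH y hy).differentiableAt (ho.mem_nhds hy)).hasFDerivAt
  have hl : HasDerivAt (fun t : ℝ => y + t • (x - y)) (x - y) 0 := by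
    simpa using ((hasDerivAt_id (0:ℝ)).smul_const (x - y)).const_add y
  have hc : HasDerivAt (fun t : ℝ => H (y + t • (x - y))) (fderiv ℝ H y (x - y)) 0 := by
    have hd' : HasFDerivAt H (fderiv ℝ H y) (y + (0:ℝ) • (x - y)) := by simpa using hd
    exact hd'.comp_hasDerivAt 0 hl
  have hcv : ConvexOn ℝ (Icc (0:ℝ) 1) (fun t : ℝ => H (y + t • (x - y))) := by
    refine ⟨convex_Icc _ _, ?_⟩
    intro a ha b hb p q hp hq hpq
    have mem : ∀ t ∈ Icc (0:ℝ) 1, y + t • (x - y) ∈ Ω := fun t ht => by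
      have := hconv.1 hy hx (show 0 ≤ 1 - t by linarith [ht.2]) ht.1 (by ring)
      convert this using 1
      module
    have := hconv.2 (mem a ha) (mem b hb) hp hq hpq
    convert this using 2
    have : y = (p + q) • y := by rw [hpq, one_smul]
    nth_rewrite 1 [this]
    simp only [smul_eq_mul]
    module
  have := hcv.le_slope_of_hasDerivAt (x := 0) (y := 1) (by simp) (by simp) one_pos hc
  rw [grad_dot] at this
  simp [slope_def_field] at this
  rw [dotProduct_sub]
  linarith

lemma pot_of {n : ℕ} {Ω : Set (Fin n → ℝ)} (ho : IsOpen Ω)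
    {H : (Fin n → ℝ) → ℝ} (hH : ContDiffOn ℝ 1 H Ω) (hconv : StrictConvexOn ℝ Ω H)
    {b : Fin n → ℝ} (hb : b ∈ Ω) :
    Pot Ω (fun x => H x - H b - grad H b ⬝ᵥ (x - b)) (fun x => grad H x - grad H b) b := by
  have hdiff : DifferentiableOn ℝ H Ω := hH.differentiableOn (by norm_num)
  have hpos : ∀ x ∈ Ω, ∀ y ∈ Ω, x ≠ y → 0 < H x - H y - grad H y ⬝ᵥ (x - y) := by
    intro x hx y hy hxy
    have h1 := hconv.2 hx hy hxy (show (0:ℝ) < 1/2 by norm_num) (show (0:ℝ) < 1/2 by norm_num) (by norm_num)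
    have hm : (1/2:ℝ) • x + (1/2:ℝ) • y ∈ Ω :=
      hconv.1 hx hy (by norm_num) (by norm_num) (by norm_num)
    have h2 := bregman_nonneg ho hdiff hconv.convexOn hm hy
    have h3 : (1/2:ℝ) • x + (1/2:ℝ) • y - y = (1/2:ℝ) • (x - y) := by module
    rw [h3, dotProduct_smul] at h2
    simp only [smul_eq_mul] at h1 h2
    linarith
  have hgc : ContinuousOn (fun x => grad H x - grad H b) Ω := by
    apply ContinuousOn.sub _ continuousOn_const
    apply continuousOn_pi.2
    intro j
    exact (hH.continuousOn_fderiv_of_isOpen ho (by norm_num)).clm_apply continuousOn_const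
  refine ⟨ho, hb, hgc, ?_, ?_, by simp, by simp, fun x hx hxb => hpos x hx b hb hxb, ?_⟩
  · intro x x' t s hx hxt
    have hd : HasFDerivAt H (fderiv ℝ H (x t)) (x t) :=
      ((hdiff _ hxt).differentiableAt (ho.mem_nhds hxt)).hasFDerivAt
    have h1 := hd.comp_hasDerivWithinAt t hx
    rw [grad_dot] at h1
    have h2 : HasDerivWithinAt (fun t => grad H b ⬝ᵥ (x t - b)) (grad H b ⬝ᵥ x') s t := by
      simp only [dotProduct]
      apply HasDerivWithinAt.fun_sum
      intro i _
      have := ((hasDerivWithinAt_pi.1 hx) i).sub_const (b i)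
      exact this.const_mul _
    have := (h1.sub_const (H b)).sub h2
    rw [sub_dotProduct]
    exact this
  · apply ContinuousOn.sub
    · exact hdiff.continuousOn.sub continuousOn_const
    · exact contOn_dot continuousOn_const (continuousOn_id.sub continuousOn_const)
  · intro x hx y hy hxy
    have h1 := hpos x hx y hy hxy
    have h2 := hpos y hy x hx hxy.symm
    have h3 : grad H x ⬝ᵥ (y - x) = - (grad H x ⬝ᵥ (x - y)) := by
      rw [← dotProduct_neg, neg_sub]
    have h4 : grad H x - grad H b - (grad H y - grad H b) = grad H x - grad H y := by abel
    rw [h4, sub_dotProduct]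
    linarith

section Core

variable {n : ℕ} {ν ε κ : Type*} [Fintype ν] [Fintype ε] [Fintype κ] [DecidableEq ν]

/-- State space. -/
abbrev St (n : ℕ) (ν ε κ : Type*) :=
  (ν → Fin n → ℝ) × (ε → Fin n → ℝ) × (κ → Fin n → ℝ)

/-- node vector field -/
noncomputable def Fx (A : ν → Matrix (Fin n) (Fin n) ℝ) (B : Matrix ν ε ℝ) (c : κ → ν)
    (P : κ → Matrix (Fin n) (Fin n) ℝ) (gx : ν → (Fin n → ℝ) → (Fin n → ℝ))
    (ge : ε → (Fin n → ℝ) → (Fin n → ℝ)) (s : St n ν ε κ) (i : ν) : Fin n → ℝ :=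
  A i *ᵥ gx i (s.1 i) - (∑ k, B i k • ge k (s.2.1 k)) +
    ∑ j, if c j = i then P j *ᵥ s.2.2 j else 0

/-- edge vector field -/
noncomputable def Fe (B : Matrix ν ε ℝ) (gx : ν → (Fin n → ℝ) → (Fin n → ℝ))
    (s : St n ν ε κ) (k : ε) : Fin n → ℝ :=
  ∑ i, B i k • gx i (s.1 i)

/-- Laplacian term -/
noncomputable def Lc (Gc : SimpleGraph κ) [DecidableRel Gc.Adj]
    (ξ : κ → Fin n → ℝ) (j : κ) : Fin n → ℝ :=
  ∑ l, if Gc.Adj j l then ξ l - ξ j else 0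

/-- controller vector field -/
noncomputable def Fc (Gc : SimpleGraph κ) [DecidableRel Gc.Adj] (c : κ → ν)
    (P : κ → Matrix (Fin n) (Fin n) ℝ) (gx : ν → (Fin n → ℝ) → (Fin n → ℝ))
    (s : St n ν ε κ) (j : κ) : Fin n → ℝ :=
  Lc Gc s.2.2 j - P j *ᵥ gx (c j) (s.1 (c j))

/-- dissipation -/
noncomputable def Wd (A : ν → Matrix (Fin n) (Fin n) ℝ) (Gc : SimpleGraph κ) [DecidableRel Gc.Adj]
    (gx : ν → (Fin n → ℝ) → (Fin n → ℝ)) (s : St n ν ε κ) : ℝ :=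
  (∑ i, gx i (s.1 i) ⬝ᵥ (A i *ᵥ gx i (s.1 i))) + ∑ j, s.2.2 j ⬝ᵥ Lc Gc s.2.2 j

/-- Lyapunov function -/
noncomputable def Vl (S : Finset ν) (DX : ν → (Fin n → ℝ) → ℝ) (DE : ε → (Fin n → ℝ) → ℝ)
    (s : St n ν ε κ) : ℝ :=
  (∑ i ∈ S, DX i (s.1 i)) + (∑ k, DE k (s.2.1 k)) + ∑ j, (1/2) * (s.2.2 j ⬝ᵥ s.2.2 j)

lemma lap_eq (Gc : SimpleGraph κ) [DecidableRel Gc.Adj] (ξ : κ → Fin n → ℝ) :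
    ∑ j, ξ j ⬝ᵥ Lc Gc ξ j =
      -(1/2) * ∑ j, ∑ l, if Gc.Adj j l then (ξ l - ξ j) ⬝ᵥ (ξ l - ξ j) else 0 := by
  have h1 : ∑ j, ξ j ⬝ᵥ Lc Gc ξ j =
      ∑ j, ∑ l, if Gc.Adj j l then ξ j ⬝ᵥ (ξ l - ξ j) else 0 := by
    refine Finset.sum_congr rfl fun j _ => ?_
    rw [Lc, dotProduct_sum]
    refine Finset.sum_congr rfl fun l _ => ?_
    split_ifs <;> simp
  have h2 : ∑ j, ξ j ⬝ᵥ Lc Gc ξ j =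
      ∑ j, ∑ l, if Gc.Adj j l then ξ l ⬝ᵥ (ξ j - ξ l) else 0 := by
    rw [h1, Finset.sum_comm]
    refine Finset.sum_congr rfl fun j _ => Finset.sum_congr rfl fun l _ => ?_
    simp only [Gc.adj_comm]
  have h3 : (∑ j, ξ j ⬝ᵥ Lc Gc ξ j) + (∑ j, ξ j ⬝ᵥ Lc Gc ξ j) =
      - ∑ j, ∑ l, if Gc.Adj j l then (ξ l - ξ j) ⬝ᵥ (ξ l - ξ j) else 0 := by
    nth_rewrite 1 [h1]
    rw [h2, ← Finset.sum_add_distrib, ← Finset.sum_neg_distrib]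
    refine Finset.sum_congr rfl fun j _ => ?_
    rw [← Finset.sum_add_distrib, ← Finset.sum_neg_distrib]
    refine Finset.sum_congr rfl fun l _ => ?_
    split_ifs
    · simp only [dotProduct_sub, sub_dotProduct]
      ring
    · simp
  linarith

lemma dot_self_nonneg' (v : Fin n → ℝ) : 0 ≤ v ⬝ᵥ v :=
  Finset.sum_nonneg fun i _ => mul_self_nonneg (v i)

lemma lap_nonpos (Gc : SimpleGraph κ) [DecidableRel Gc.Adj] (ξ : κ → Fin n → ℝ) :
    ∑ j, ξ j ⬝ᵥ Lc Gc ξ j ≤ 0 := by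
  rw [lap_eq]
  have : 0 ≤ ∑ j, ∑ l, if Gc.Adj j l then (ξ l - ξ j) ⬝ᵥ (ξ l - ξ j) else 0 :=
    Finset.sum_nonneg fun j _ => Finset.sum_nonneg fun l _ => by
      split_ifs
      · exact dot_self_nonneg' _
      · exact le_rfl
  linarith

lemma lap_zero (Gc : SimpleGraph κ) [DecidableRel Gc.Adj] (hG : Gc.Connected) (ξ : κ → Fin n → ℝ)
    (h : ∑ j, ξ j ⬝ᵥ Lc Gc ξ j = 0) (j l : κ) : ξ j = ξ l := by
  rw [lap_eq] at h
  have hnn : ∀ j l, 0 ≤ if Gc.Adj j l then (ξ l - ξ j) ⬝ᵥ (ξ l - ξ j) else 0 := by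
    intro j l
    split_ifs
    · exact dot_self_nonneg' _
    · exact le_rfl
  have h0 : ∑ j, ∑ l, (if Gc.Adj j l then (ξ l - ξ j) ⬝ᵥ (ξ l - ξ j) else 0) = 0 := by linarith
  have hadj : ∀ a b, Gc.Adj a b → ξ a = ξ b := by
    intro a b hab
    have h1 := (Finset.sum_eq_zero_iff_of_nonneg
      (fun j _ => Finset.sum_nonneg fun l _ => hnn j l)).1 h0 a (Finset.mem_univ _)
    have h2 := (Finset.sum_eq_zero_iff_of_nonneg (fun l _ => hnn a l)).1 h1 b (Finset.mem_univ _)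
    rw [if_pos hab, dotProduct_self_eq_zero, sub_eq_zero] at h2
    exact h2.symm
  obtain ⟨w⟩ := hG.preconnected j l
  induction w with
  | nil => rfl
  | cons h _ ih => exact (hadj _ _ h).trans ih

lemma power_balance (A : ν → Matrix (Fin n) (Fin n) ℝ) (B : Matrix ν ε ℝ) (c : κ → ν)
    (P : κ → Matrix (Fin n) (Fin n) ℝ) (hP : ∀ j, (P j)ᵀ = P j)
    (Gc : SimpleGraph κ) [DecidableRel Gc.Adj]
    (gx : ν → (Fin n → ℝ) → (Fin n → ℝ))
    (ge : ε → (Fin n → ℝ) → (Fin n → ℝ)) (S : Finset ν) (s : St n ν ε κ)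
    (hS : ∀ i, i ∉ S → Fx A B c P gx ge s i = 0) :
    (∑ i ∈ S, gx i (s.1 i) ⬝ᵥ Fx A B c P gx ge s i) + (∑ k, ge k (s.2.1 k) ⬝ᵥ Fe B gx s k)
      + ∑ j, s.2.2 j ⬝ᵥ Fc Gc c P gx s j = Wd A Gc gx s := by
  have h0 : ∑ i ∈ S, gx i (s.1 i) ⬝ᵥ Fx A B c P gx ge s i =
      ∑ i, gx i (s.1 i) ⬝ᵥ Fx A B c P gx ge s i := by
    apply Finset.sum_subset (Finset.subset_univ _)
    intro i _ hi
    rw [hS i hi, dotProduct_zero]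
  have h1 : ∑ i, gx i (s.1 i) ⬝ᵥ Fx A B c P gx ge s i =
      (∑ i, gx i (s.1 i) ⬝ᵥ (A i *ᵥ gx i (s.1 i)))
      - (∑ i, ∑ k, B i k * (gx i (s.1 i) ⬝ᵥ ge k (s.2.1 k)))
      + ∑ j, gx (c j) (s.1 (c j)) ⬝ᵥ (P j *ᵥ s.2.2 j) := by
    have e1 : ∑ j, gx (c j) (s.1 (c j)) ⬝ᵥ (P j *ᵥ s.2.2 j) =
        ∑ i, ∑ j, if c j = i then gx i (s.1 i) ⬝ᵥ (P j *ᵥ s.2.2 j) else 0 := by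
      rw [Finset.sum_comm]
      refine Finset.sum_congr rfl fun j _ => ?_
      simp
    rw [e1, ← Finset.sum_sub_distrib, ← Finset.sum_add_distrib]
    refine Finset.sum_congr rfl fun i _ => ?_
    rw [Fx, dotProduct_add, dotProduct_sub, dotProduct_sum, dotProduct_sum]
    congr 1
    · congr 1
      refine Finset.sum_congr rfl fun k _ => ?_
      rw [dotProduct_smul, smul_eq_mul]
    · refine Finset.sum_congr rfl fun j _ => ?_
      split_ifs <;> simp
  have h2 : ∑ k, ge k (s.2.1 k) ⬝ᵥ Fe B gx s k =
      ∑ i, ∑ k, B i k * (gx i (s.1 i) ⬝ᵥ ge k (s.2.1 k)) := by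
    rw [Finset.sum_comm]
    refine Finset.sum_congr rfl fun k _ => ?_
    rw [Fe, dotProduct_sum]
    refine Finset.sum_congr rfl fun i _ => ?_
    rw [dotProduct_smul, smul_eq_mul, dotProduct_comm]
  have h3 : ∑ j, s.2.2 j ⬝ᵥ Fc Gc c P gx s j =
      (∑ j, s.2.2 j ⬝ᵥ Lc Gc s.2.2 j) - ∑ j, gx (c j) (s.1 (c j)) ⬝ᵥ (P j *ᵥ s.2.2 j) := by
    rw [← Finset.sum_sub_distrib]
    refine Finset.sum_congr rfl fun j _ => ?_
    rw [Fc, dotProduct_sub]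
    congr 1
    rw [dotProduct_mulVec, ← mulVec_transpose, hP, dotProduct_comm]
  rw [h0, h1, h2, h3, Wd]
  ring

end Core

section Stab

set_option linter.unusedSectionVars false

variable {n : ℕ} {ν ε κ : Type*} [Fintype ν] [Fintype ε] [Fintype κ] [DecidableEq ν]

/-- Standing hypotheses on the error system. -/
structure Sys (A : ν → Matrix (Fin n) (Fin n) ℝ) (B : Matrix ν ε ℝ)
    (P : κ → Matrix (Fin n) (Fin n) ℝ) (Gc : SimpleGraph κ)
    (gx : ν → (Fin n → ℝ) → (Fin n → ℝ)) (ge : ε → (Fin n → ℝ) → (Fin n → ℝ))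
    (DX : ν → (Fin n → ℝ) → ℝ) (DE : ε → (Fin n → ℝ) → ℝ)
    (Ωn Ωe : Set (Fin n → ℝ)) (xb : ν → Fin n → ℝ) (ηb : ε → Fin n → ℝ) : Prop where
  hA : ∀ i v, v ≠ 0 → v ⬝ᵥ (A i *ᵥ v) < 0
  hP : ∀ j, (P j)ᵀ = P j
  hPs : ∀ v, (∑ j, P j) *ᵥ v = 0 → v = 0
  hB : ∀ k, ∑ i, B i k = 0
  hG : Gc.Connected
  px : ∀ i, Pot Ωn (DX i) (gx i) (xb i)
  pe : ∀ k, Pot Ωe (DE k) (ge k) (ηb k)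

/-- Solutions of the error system. -/
structure Sol (A : ν → Matrix (Fin n) (Fin n) ℝ) (B : Matrix ν ε ℝ) (c : κ → ν)
    (P : κ → Matrix (Fin n) (Fin n) ℝ) (Gc : SimpleGraph κ) [DecidableRel Gc.Adj]
    (gx : ν → (Fin n → ℝ) → (Fin n → ℝ)) (ge : ε → (Fin n → ℝ) → (Fin n → ℝ))
    (S : Finset ν) (s : ℝ → St n ν ε κ) : Prop where
  cont : ContinuousOn s (Ici 0)
  dx : ∀ t, 0 ≤ t → ∀ i ∈ S,
    HasDerivWithinAt (fun r => (s r).1 i) (Fx A B c P gx ge (s t) i) (Ici 0) t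
  alg : ∀ t, 0 ≤ t → ∀ i, i ∉ S → Fx A B c P gx ge (s t) i = 0
  de : ∀ t, 0 ≤ t → ∀ k, HasDerivWithinAt (fun r => (s r).2.1 k) (Fe B gx (s t) k) (Ici 0) t
  dc : ∀ t, 0 ≤ t → ∀ j, HasDerivWithinAt (fun r => (s r).2.2 j) (Fc Gc c P gx (s t) j) (Ici 0) t

/-- Domain. -/
def Dom (n : ℕ) (ν ε κ : Type*) (Ωn Ωe : Set (Fin n → ℝ)) : Set (St n ν ε κ) :=
  {s | (∀ i, s.1 i ∈ Ωn) ∧ ∀ k, s.2.1 k ∈ Ωe}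

/-- The part of the node vector field depending on edges and controllers. -/
noncomputable def rho (B : Matrix ν ε ℝ) (c : κ → ν)
    (P : κ → Matrix (Fin n) (Fin n) ℝ)
    (ge : ε → (Fin n → ℝ) → (Fin n → ℝ)) (i : ν)
    (q : (ε → Fin n → ℝ) × (κ → Fin n → ℝ)) : Fin n → ℝ :=
  (∑ k, B i k • ge k (q.1 k)) - ∑ j, if c j = i then P j *ᵥ q.2 j else 0

variable {A : ν → Matrix (Fin n) (Fin n) ℝ} {B : Matrix ν ε ℝ} {c : κ → ν}
    {P : κ → Matrix (Fin n) (Fin n) ℝ} {Gc : SimpleGraph κ} [DecidableRel Gc.Adj]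
    {gx : ν → (Fin n → ℝ) → (Fin n → ℝ)} {ge : ε → (Fin n → ℝ) → (Fin n → ℝ)}
    {DX : ν → (Fin n → ℝ) → ℝ} {DE : ε → (Fin n → ℝ) → ℝ}
    {Ωn Ωe : Set (Fin n → ℝ)} {xb : ν → Fin n → ℝ} {ηb : ε → Fin n → ℝ}
    {S : Finset ν} {s : ℝ → St n ν ε κ}

lemma Fx_eq (s : St n ν ε κ) (i : ν) :
    Fx A B c P gx ge s i = A i *ᵥ gx i (s.1 i) - rho B c P ge i s.2 := by
  rw [Fx, rho]; abel

lemma rho_cont (hs : Sys A B P Gc gx ge DX DE Ωn Ωe xb ηb) (i : ν) :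
    ContinuousOn (rho B c P ge i) {q | ∀ k, q.1 k ∈ Ωe} := by
  unfold rho
  apply ContinuousOn.sub
  · apply continuousOn_finsetSum
    intro k _
    apply ContinuousOn.fun_const_smul
    apply (hs.pe k).cont.comp
    · fun_prop
    · intro q hq; exact hq k
  · apply continuousOn_finsetSum
    intro j _
    split_ifs
    · apply contOn_mulVec
      fun_prop
    · exact continuousOn_const

lemma gx_cont (hs : Sys A B P Gc gx ge DX DE Ωn Ωe xb ηb) (i : ν) :
    ContinuousOn (fun s : St n ν ε κ => gx i (s.1 i)) (Dom n ν ε κ Ωn Ωe) := by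
  apply (hs.px i).cont.comp
  · fun_prop
  · intro q hq; exact hq.1 i

lemma Fx_cont (hs : Sys A B P Gc gx ge DX DE Ωn Ωe xb ηb) (i : ν) :
    ContinuousOn (fun s => Fx A B c P gx ge s i) (Dom n ν ε κ Ωn Ωe) := by
  simp only [Fx_eq]
  apply ContinuousOn.sub
  · exact contOn_mulVec _ (gx_cont hs i)
  · apply (rho_cont hs i).comp
    · fun_prop
    · intro q hq; exact hq.2

lemma Fe_cont (hs : Sys A B P Gc gx ge DX DE Ωn Ωe xb ηb) (k : ε) :
    ContinuousOn (fun s => Fe B gx s k) (Dom n ν ε κ Ωn Ωe) := by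
  unfold Fe
  apply continuousOn_finsetSum
  intro i _
  exact ContinuousOn.fun_const_smul (gx_cont hs i) _

lemma Lc_cont (j : κ) : Continuous (fun s : St n ν ε κ => Lc Gc s.2.2 j) := by
  unfold Lc
  apply continuous_finsetSum
  intro l _
  split_ifs
  · fun_prop
  · fun_prop

lemma Fc_cont (hs : Sys A B P Gc gx ge DX DE Ωn Ωe xb ηb) (j : κ) :
    ContinuousOn (fun s => Fc Gc c P gx s j) (Dom n ν ε κ Ωn Ωe) := by
  unfold Fc
  exact (Lc_cont j).continuousOn.sub (contOn_mulVec _ (gx_cont hs _))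

lemma Wd_cont (hs : Sys A B P Gc gx ge DX DE Ωn Ωe xb ηb) :
    ContinuousOn (Wd A Gc gx) (Dom n ν ε κ Ωn Ωe) := by
  unfold Wd
  apply ContinuousOn.add
  · apply continuousOn_finsetSum
    intro i _
    exact contOn_dot (gx_cont hs i) (contOn_mulVec _ (gx_cont hs i))
  · apply continuousOn_finsetSum
    intro j _
    exact contOn_dot (by fun_prop) (Lc_cont j).continuousOn

lemma Vl_cont (hs : Sys A B P Gc gx ge DX DE Ωn Ωe xb ηb) :
    ContinuousOn (Vl S DX DE) (Dom n ν ε κ Ωn Ωe) := by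
  unfold Vl
  apply ContinuousOn.add
  · apply ContinuousOn.add
    · apply continuousOn_finsetSum
      intro i _
      apply (hs.px i).dcont.comp
      · fun_prop
      · intro q hq; exact hq.1 i
    · apply continuousOn_finsetSum
      intro k _
      apply (hs.pe k).dcont.comp
      · fun_prop
      · intro q hq; exact hq.2 k
  · apply continuousOn_finsetSum
    intro j _
    exact continuousOn_const.mul (contOn_dot (by fun_prop) (by fun_prop))

lemma A_nonpos (hs : Sys A B P Gc gx ge DX DE Ωn Ωe xb ηb) (i : ν) (v : Fin n → ℝ) :
    v ⬝ᵥ (A i *ᵥ v) ≤ 0 := by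
  by_cases h : v = 0
  · simp [h]
  · exact (hs.hA i v h).le

lemma A_inj (hs : Sys A B P Gc gx ge DX DE Ωn Ωe xb ηb) (i : ν) (v : Fin n → ℝ)
    (h : A i *ᵥ v = 0) : v = 0 := by
  by_contra hv
  have := hs.hA i v hv
  rw [h, dotProduct_zero] at this
  exact lt_irrefl _ this

lemma Wd_nonpos (hs : Sys A B P Gc gx ge DX DE Ωn Ωe xb ηb) (s : St n ν ε κ) :
    Wd A Gc gx s ≤ 0 :=
  add_nonpos (Finset.sum_nonpos fun i _ => A_nonpos hs i _) (lap_nonpos _ _)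

lemma Pot.nonneg {Ω : Set (Fin n → ℝ)} {D : (Fin n → ℝ) → ℝ}
    {g : (Fin n → ℝ) → (Fin n → ℝ)} {b : Fin n → ℝ} (h : Pot Ω D g b) {x : Fin n → ℝ}
    (hx : x ∈ Ω) : 0 ≤ D x := by
  by_cases hb : x = b
  · rw [hb, h.zero]
  · exact (h.pos x hx hb).le

lemma Pot.inj {Ω : Set (Fin n → ℝ)} {D : (Fin n → ℝ) → ℝ}
    {g : (Fin n → ℝ) → (Fin n → ℝ)} {b : Fin n → ℝ} (h : Pot Ω D g b) : InjOn g Ω := by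
  intro x hx y hy hxy
  by_contra hne
  have := h.mono x hx y hy hne
  rw [hxy, sub_self, zero_dotProduct] at this
  exact lt_irrefl _ this

lemma Pot.gne {Ω : Set (Fin n → ℝ)} {D : (Fin n → ℝ) → ℝ}
    {g : (Fin n → ℝ) → (Fin n → ℝ)} {b : Fin n → ℝ} (h : Pot Ω D g b) {x : Fin n → ℝ}
    (hx : x ∈ Ω) (h0 : g x = 0) : x = b :=
  h.inj hx h.mem (h0.trans h.gzero.symm)

lemma V_deriv (hs : Sys A B P Gc gx ge DX DE Ωn Ωe xb ηb) (hsol : Sol A B c P Gc gx ge S s)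
    {t : ℝ} (ht : 0 ≤ t) (hd : s t ∈ Dom n ν ε κ Ωn Ωe) :
    HasDerivWithinAt (fun r => Vl S DX DE (s r)) (Wd A Gc gx (s t)) (Ici 0) t := by
  rw [← power_balance A B c P hs.hP Gc gx ge S (s t) (hsol.alg t ht)]
  unfold Vl
  apply HasDerivWithinAt.add
  · apply HasDerivWithinAt.add
    · apply HasDerivWithinAt.fun_sum
      intro i hi
      exact (hs.px i).deriv (fun r => (s r).1 i) _ t _ (hsol.dx t ht i hi) (hd.1 i)
    · apply HasDerivWithinAt.fun_sum
      intro k _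
      exact (hs.pe k).deriv (fun r => (s r).2.1 k) _ t _ (hsol.de t ht k) (hd.2 k)
  · apply HasDerivWithinAt.fun_sum
    intro j _
    have h := hsol.dc t ht j
    rw [hasDerivWithinAt_pi] at h
    have h2 : HasDerivWithinAt (fun r => (s r).2.2 j ⬝ᵥ (s r).2.2 j)
        (2 * ((s t).2.2 j ⬝ᵥ Fc Gc c P gx (s t) j)) (Ici 0) t := by
      simp only [dotProduct, Finset.mul_sum]
      apply HasDerivWithinAt.fun_sum
      intro a _
      exact ((h a).mul (h a)).congr_deriv (by ring)
    exact (h2.const_mul (1/2 : ℝ)).congr_deriv (by ring)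

lemma V_anti (hs : Sys A B P Gc gx ge DX DE Ωn Ωe xb ηb) (hsol : Sol A B c P Gc gx ge S s)
    {D : Set ℝ} (hD : Convex ℝ D) (hD0 : D ⊆ Ici 0)
    (hd : ∀ t ∈ D, s t ∈ Dom n ν ε κ Ωn Ωe) :
    AntitoneOn (fun r => Vl S DX DE (s r)) D := by
  have h : ∀ t ∈ D, HasDerivWithinAt (fun r => Vl S DX DE (s r)) (Wd A Gc gx (s t)) D t :=
    fun t ht => (V_deriv hs hsol (hD0 ht) (hd t ht)).mono hD0
  apply antitoneOn_of_hasDerivWithinAt_nonpos hD (fun t ht => (h t ht).continuousWithinAt)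
    (f' := fun t => Wd A Gc gx (s t))
  · intro t ht
    exact (h t (interior_subset ht)).mono interior_subset
  · intro t _
    exact Wd_nonpos hs _

lemma V_nonneg (hs : Sys A B P Gc gx ge DX DE Ωn Ωe xb ηb) {q : St n ν ε κ}
    (hq : q ∈ Dom n ν ε κ Ωn Ωe) : 0 ≤ Vl S DX DE q := by
  unfold Vl
  have h1 : 0 ≤ ∑ i ∈ S, DX i (q.1 i) := Finset.sum_nonneg fun i _ => (hs.px i).nonneg (hq.1 i)
  have h2 : 0 ≤ ∑ k, DE k (q.2.1 k) := Finset.sum_nonneg fun k _ => (hs.pe k).nonneg (hq.2 k)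
  have h3 : 0 ≤ ∑ j, (1/2) * (q.2.2 j ⬝ᵥ q.2.2 j) := Finset.sum_nonneg fun j _ =>
    mul_nonneg (by norm_num) (dot_self_nonneg' _)
  linarith

lemma V_ge (hs : Sys A B P Gc gx ge DX DE Ωn Ωe xb ηb) {q : St n ν ε κ}
    (hq : q ∈ Dom n ν ε κ Ωn Ωe) :
    (∀ i ∈ S, DX i (q.1 i) ≤ Vl S DX DE q) ∧ (∀ k, DE k (q.2.1 k) ≤ Vl S DX DE q) ∧
    (∀ j, (1/2) * (q.2.2 j ⬝ᵥ q.2.2 j) ≤ Vl S DX DE q) := by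
  unfold Vl
  have e1 : ∀ i ∈ S, 0 ≤ DX i (q.1 i) := fun i _ => (hs.px i).nonneg (hq.1 i)
  have e2 : ∀ k ∈ Finset.univ, 0 ≤ DE k (q.2.1 k) := fun k _ => (hs.pe k).nonneg (hq.2 k)
  have e3 : ∀ j ∈ Finset.univ, 0 ≤ (1/2) * (q.2.2 j ⬝ᵥ q.2.2 j) := fun j _ =>
    mul_nonneg (by norm_num) (dot_self_nonneg' _)
  have h1 := Finset.sum_nonneg e1
  have h2 := Finset.sum_nonneg e2
  have h3 := Finset.sum_nonneg e3
  refine ⟨fun i hi => ?_, fun k => ?_, fun j => ?_⟩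
  · have := Finset.single_le_sum e1 hi
    linarith
  · have := Finset.single_le_sum e2 (Finset.mem_univ k)
    linarith
  · have := Finset.single_le_sum e3 (Finset.mem_univ j)
    linarith

lemma sphere_min {b : Fin n → ℝ} {r : ℝ} {f : (Fin n → ℝ) → ℝ}
    (hf : ContinuousOn f (Metric.sphere b r)) (hp : ∀ x ∈ Metric.sphere b r, 0 < f x) :
    ∃ m > 0, ∀ x ∈ Metric.sphere b r, m ≤ f x := by
  rcases (Metric.sphere b r).eq_empty_or_nonempty with he | hne
  · exact ⟨1, one_pos, by simp [he]⟩
  · obtain ⟨p, hp', hmin⟩ := (isCompact_sphere b r).exists_isMinOn hne hf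
    exact ⟨f p, hp p hp', fun q hq => hmin hq⟩

end Stab

section Conv

set_option linter.unusedSectionVars false

variable {n : ℕ} {ν ε κ : Type*} [Fintype ν] [Fintype ε] [Fintype κ] [DecidableEq ν]
variable {A : ν → Matrix (Fin n) (Fin n) ℝ} {B : Matrix ν ε ℝ} {c : κ → ν}
    {P : κ → Matrix (Fin n) (Fin n) ℝ} {Gc : SimpleGraph κ} [DecidableRel Gc.Adj]
    {gx : ν → (Fin n → ℝ) → (Fin n → ℝ)} {ge : ε → (Fin n → ℝ) → (Fin n → ℝ)}
    {DX : ν → (Fin n → ℝ) → ℝ} {DE : ε → (Fin n → ℝ) → ℝ}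
    {Ωn Ωe : Set (Fin n → ℝ)} {xb : ν → Fin n → ℝ} {ηb : ε → Fin n → ℝ}
    {S : Finset ν} {s : ℝ → St n ν ε κ}

lemma gzero_rho (hs : Sys A B P Gc gx ge DX DE Ωn Ωe xb ηb) (i : ν) :
    rho B c P ge i (ηb, 0) = 0 := by
  simp [rho, (hs.pe _).gzero]

lemma pi_open {ι : Type*} [Fintype ι] {Ω : Set (Fin n → ℝ)} (h : IsOpen Ω) :
    IsOpen {x : ι → Fin n → ℝ | ∀ i, x i ∈ Ω} := by
  have := isOpen_set_pi (i := (univ : Set ι)) (s := fun _ => Ω) finite_univ (fun _ _ => h)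
  convert this using 1
  ext x
  simp

lemma A_gx_ne (hs : Sys A B P Gc gx ge DX DE Ωn Ωe xb ηb) (i : ν) {x : Fin n → ℝ} (hx : x ∈ Ωn)
    (hne : x ≠ xb i) : A i *ᵥ gx i x ≠ 0 := fun h =>
  hne ((hs.px i).gne hx (A_inj hs i _ h))

theorem trapping [Nonempty ν] (hs : Sys A B P Gc gx ge DX DE Ωn Ωe xb ηb) (hΩn : IsOpen Ωn)
    (hΩe : IsOpen Ωe) :
    ∃ r r' : ℝ, (Metric.closedBall xb r ×ˢ
        Metric.closedBall ((ηb, 0) : (ε → Fin n → ℝ) × (κ → Fin n → ℝ)) r' ⊆ Dom n ν ε κ Ωn Ωe) ∧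
      ∃ U : Set (St n ν ε κ), IsOpen U ∧ (xb, ηb, 0) ∈ U ∧
      ∀ s, Sol A B c P Gc gx ge S s → s 0 ∈ U →
        ∀ t, 0 ≤ t → s t ∈ Metric.closedBall xb r ×ˢ
          Metric.closedBall ((ηb, 0) : (ε → Fin n → ℝ) × (κ → Fin n → ℝ)) r' := by
  -- radius for nodes
  obtain ⟨r, hr, hrΩ⟩ := Metric.nhds_basis_closedBall.mem_iff.1
    ((pi_open hΩn).mem_nhds (show xb ∈ {x : ν → Fin n → ℝ | ∀ i, x i ∈ Ωn} from
      fun i => (hs.px i).mem))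
  have hballx : ∀ i, Metric.closedBall (xb i) r ⊆ Ωn := by
    intro i y hy
    have hm : Function.update xb i y ∈ Metric.closedBall xb r := by
      rw [Metric.mem_closedBall, dist_pi_le_iff hr.le]
      intro l
      by_cases h : l = i
      · subst h; simpa using hy
      · simp [h, hr.le]
    simpa using hrΩ hm i
  have hmi : ∀ i, ∃ m > 0, ∀ x ∈ Metric.sphere (xb i) r, m ≤ ‖A i *ᵥ gx i x‖ := by
    intro i
    apply sphere_min
    · apply ContinuousOn.norm
      apply contOn_mulVec
      exact (hs.px i).cont.mono (Metric.sphere_subset_closedBall.trans (hballx i))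
    · intro x hx
      rw [norm_pos_iff]
      exact A_gx_ne hs i (hballx i (Metric.sphere_subset_closedBall hx))
        (Metric.ne_of_mem_sphere hx hr.ne')
  choose mi hmi0 hmi using hmi
  -- radius for the others
  have hEo : IsOpen {q : (ε → Fin n → ℝ) × (κ → Fin n → ℝ) | ∀ k, q.1 k ∈ Ωe} :=
    (pi_open hΩe).preimage continuous_fst
  have hEm : ((ηb, 0) : (ε → Fin n → ℝ) × (κ → Fin n → ℝ)) ∈
      {q : (ε → Fin n → ℝ) × (κ → Fin n → ℝ) | ∀ k, q.1 k ∈ Ωe} := fun k => (hs.pe k).mem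
  have hev : ∀ᶠ q in 𝓝 ((ηb, 0) : (ε → Fin n → ℝ) × (κ → Fin n → ℝ)),
      (∀ k, q.1 k ∈ Ωe) ∧ ∀ i, ‖rho B c P ge i q‖ < mi i := by
    refine Eventually.and (hEo.mem_nhds hEm) ?_
    rw [eventually_all]
    intro i
    have hc := ((rho_cont (c := c) hs i).continuousAt (hEo.mem_nhds hEm)).norm
    apply hc.eventually_lt_const
    show ‖rho B c P ge i (ηb, 0)‖ < mi i
    rw [gzero_rho hs, norm_zero]
    exact hmi0 i
  obtain ⟨r', hr', hr'Ω⟩ := Metric.nhds_basis_closedBall.mem_iff.1 hev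
  have hballe : ∀ k, Metric.closedBall (ηb k) r' ⊆ Ωe := by
    classical
    intro k y hy
    have hm : ((Function.update ηb k y, 0) : (ε → Fin n → ℝ) × (κ → Fin n → ℝ)) ∈
        Metric.closedBall (ηb, 0) r' := by
      rw [Metric.mem_closedBall, Prod.dist_eq, max_le_iff, dist_pi_le_iff hr'.le]
      refine ⟨?_, by simpa using hr'.le⟩
      intro l
      by_cases h : l = k
      · subst h; simpa using hy
      · simp [h, hr'.le]
    simpa using (hr'Ω hm).1 k
  have hKD : Metric.closedBall xb r ×ˢ
        Metric.closedBall ((ηb, 0) : (ε → Fin n → ℝ) × (κ → Fin n → ℝ)) r' ⊆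
        Dom n ν ε κ Ωn Ωe := fun q hq => ⟨hrΩ hq.1, (hr'Ω hq.2).1⟩
  refine ⟨r, r', hKD, ?_⟩
  -- lower bounds on spheres
  have h1 : ∀ i, ∃ m > 0, ∀ x ∈ Metric.sphere (xb i) r, m ≤ DX i x := fun i =>
    sphere_min ((hs.px i).dcont.mono (Metric.sphere_subset_closedBall.trans (hballx i)))
      fun x hx => (hs.px i).pos x (hballx i (Metric.sphere_subset_closedBall hx))
        (Metric.ne_of_mem_sphere hx hr.ne')
  have h2 : ∀ k, ∃ m > 0, ∀ x ∈ Metric.sphere (ηb k) r', m ≤ DE k x := fun k =>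
    sphere_min ((hs.pe k).dcont.mono (Metric.sphere_subset_closedBall.trans (hballe k)))
      fun x hx => (hs.pe k).pos x (hballe k (Metric.sphere_subset_closedBall hx))
        (Metric.ne_of_mem_sphere hx hr'.ne')
  have h3 : ∃ m > 0, ∀ x ∈ Metric.sphere (0 : Fin n → ℝ) r', m ≤ (1/2) * (x ⬝ᵥ x) := by
    apply sphere_min
    · exact continuousOn_const.mul (contOn_dot continuousOn_id continuousOn_id)
    · intro x hx
      have : x ≠ 0 := Metric.ne_of_mem_sphere hx hr'.ne'
      have h0 := dot_self_nonneg' x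
      have : x ⬝ᵥ x ≠ 0 := fun h => this (dotProduct_self_eq_zero.1 h)
      positivity
  choose m1 hm1 h1 using h1
  choose m2 hm2 h2 using h2
  obtain ⟨m3, hm3, h3⟩ := h3
  have hDo : IsOpen (Dom n ν ε κ Ωn Ωe) :=
    ((pi_open hΩn).preimage continuous_fst).inter
      ((pi_open hΩe).preimage (continuous_fst.comp continuous_snd))
  have hbD : ((xb, ηb, 0) : St n ν ε κ) ∈ Dom n ν ε κ Ωn Ωe :=
    ⟨fun i => (hs.px i).mem, fun k => (hs.pe k).mem⟩
  have hV0 : Vl S DX DE ((xb, ηb, 0) : St n ν ε κ) = 0 := by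
    simp [Vl, (hs.px _).zero, (hs.pe _).zero]
  have hVc : ContinuousAt (Vl S DX DE) ((xb, ηb, 0) : St n ν ε κ) :=
    (Vl_cont hs).continuousAt (hDo.mem_nhds hbD)
  have hVlt : ∀ m > 0, ∀ᶠ q in 𝓝 ((xb, ηb, 0) : St n ν ε κ), Vl S DX DE q < m := fun m hm =>
    hVc.eventually_lt_const (by rw [hV0]; exact hm)
  set G : Set (St n ν ε κ) := Metric.ball xb r ×ˢ
        Metric.ball ((ηb, 0) : (ε → Fin n → ℝ) × (κ → Fin n → ℝ)) r' with hGdef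
  have hGo : IsOpen G := Metric.isOpen_ball.prod Metric.isOpen_ball
  have hGb : ((xb, ηb, 0) : St n ν ε κ) ∈ G :=
    ⟨Metric.mem_ball_self hr, Metric.mem_ball_self hr'⟩
  have hUev : ∀ᶠ q in 𝓝 ((xb, ηb, 0) : St n ν ε κ), q ∈ G ∧ (∀ i, Vl S DX DE q < m1 i) ∧
      (∀ k, Vl S DX DE q < m2 k) ∧ Vl S DX DE q < m3 :=
    Eventually.and (hGo.mem_nhds hGb) ((eventually_all.2 fun i => hVlt _ (hm1 i)).and
      ((eventually_all.2 fun k => hVlt _ (hm2 k)).and (hVlt _ hm3)))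
  obtain ⟨U, hU, hUo, hUb⟩ := mem_nhds_iff.1 hUev
  refine ⟨U, hUo, hUb, fun s hsol hs0 => ?_⟩
  have hGK : G ⊆ Metric.closedBall xb r ×ˢ
        Metric.closedBall ((ηb, 0) : (ε → Fin n → ℝ) × (κ → Fin n → ℝ)) r' :=
    prod_mono Metric.ball_subset_closedBall Metric.ball_subset_closedBall
  suffices hG : ∀ t, 0 ≤ t → s t ∈ G from fun t ht => hGK (hG t ht)
  apply trap hsol.cont hGo
  intro T hT hlt
  rcases hT.eq_or_lt with h0 | hTpos
  · rw [← h0]; exact (hU hs0).1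
  have hTK : s T ∈ Metric.closedBall xb r ×ˢ
        Metric.closedBall ((ηb, 0) : (ε → Fin n → ℝ) × (κ → Fin n → ℝ)) r' := by
    have hcl : IsClosed (Metric.closedBall xb r ×ˢ
        Metric.closedBall ((ηb, 0) : (ε → Fin n → ℝ) × (κ → Fin n → ℝ)) r') :=
      Metric.isClosed_closedBall.prod Metric.isClosed_closedBall
    rw [← hcl.closure_eq]
    have hcw : ContinuousWithinAt s (Ico 0 T) T := (hsol.cont T hT).mono Ico_subset_Ici_self
    apply hcw.mem_closure
    · rw [closure_Ico hTpos.ne]; exact ⟨hT, le_rfl⟩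
    · intro t ht; exact hGK (hlt t ht.1 ht.2)
  have hDI : ∀ t ∈ Icc 0 T, s t ∈ Dom n ν ε κ Ωn Ωe := by
    intro t ht
    rcases ht.2.eq_or_lt with h | h
    · rw [h]; exact hKD hTK
    · exact hKD (hGK (hlt t ht.1 h))
  have hVT := V_anti hs hsol (convex_Icc 0 T) Icc_subset_Ici_self hDI
    (⟨le_rfl, hT⟩ : (0:ℝ) ∈ Icc 0 T) (⟨hT, le_rfl⟩ : T ∈ Icc 0 T) hT
  simp only at hVT
  obtain ⟨g1, g2, g3⟩ := V_ge (S := S) hs (hKD hTK)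
  obtain ⟨-, u1, u2, u3⟩ := hU hs0
  have hTx := hTK.1
  have hTe := hTK.2
  have hrho := (hr'Ω hTe).2
  rw [Metric.mem_closedBall, dist_pi_le_iff hr.le] at hTx
  rw [Metric.mem_closedBall, Prod.dist_eq, max_le_iff, dist_pi_le_iff hr'.le,
    dist_pi_le_iff hr'.le] at hTe
  refine ⟨?_, ?_⟩
  · rw [Metric.mem_ball, dist_pi_lt_iff hr]
    intro i
    refine lt_of_le_of_ne (hTx i) fun heq => ?_
    by_cases hi : i ∈ S
    · linarith [h1 i _ heq, g1 i hi, u1 i]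
    · have ha := hsol.alg T hT i hi
      rw [Fx_eq, sub_eq_zero] at ha
      have := hmi i _ heq
      rw [ha] at this
      exact absurd (hrho i) (not_lt.2 this)
  · rw [Metric.mem_ball, Prod.dist_eq, max_lt_iff, dist_pi_lt_iff hr', dist_pi_lt_iff hr']
    refine ⟨fun k => lt_of_le_of_ne (hTe.1 k) fun heq => ?_,
      fun j => lt_of_le_of_ne (hTe.2 j) fun heq => ?_⟩
    · linarith [h2 k _ heq, g2 k, u2 k]
    · linarith [h3 _ heq, g3 j, u3]

lemma uc_of_deriv {f : ℝ → Fin n → ℝ} {F : St n ν ε κ → Fin n → ℝ} {K : Set (St n ν ε κ)}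
    (hK : IsCompact K) (hF : ContinuousOn F K) (hsK : ∀ t, 0 ≤ t → s t ∈ K)
    (hf : ∀ t, 0 ≤ t → HasDerivWithinAt f (F (s t)) (Ici 0) t) :
    UniformContinuousOn f (Ici 0) := by
  obtain ⟨C, hC⟩ := hK.exists_bound_of_continuousOn hF
  have := (convex_Ici (0:ℝ)).lipschitzOnWith_of_nnnorm_hasDerivWithin_le (C := C.toNNReal)
    (f := f) (f' := fun t => F (s t)) (fun t ht => hf t ht) (fun t ht => by
      rw [← NNReal.coe_le_coe, coe_nnnorm]
      exact (hC _ (hsK t ht)).trans (Real.le_coe_toNNReal C))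
  exact this.uniformContinuousOn

lemma uc_pi {ι : Type*} {X : Type*} [UniformSpace X] {f : ℝ → ι → X} {T : Set ℝ}
    (h : ∀ i, UniformContinuousOn (fun t => f t i) T) : UniformContinuousOn f T := by
  rw [uniformContinuousOn_iff_restrict, uniformContinuous_pi]
  intro i
  exact uniformContinuousOn_iff_restrict.1 (h i)

lemma uc_prod {X Y : Type*} [UniformSpace X] [UniformSpace Y] {f : ℝ → X} {g : ℝ → Y} {T : Set ℝ}
    (hf : UniformContinuousOn f T) (hg : UniformContinuousOn g T) :
    UniformContinuousOn (fun t => (f t, g t)) T := by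
  rw [uniformContinuousOn_iff_restrict] at *
  exact hf.prodMk hg

lemma uc_comp {X Y : Type*} [UniformSpace X] [UniformSpace Y] {f : ℝ → X} {g : X → Y}
    {K : Set X} (hK : IsCompact K) (hg : ContinuousOn g K)
    (hf : UniformContinuousOn f (Ici 0)) (hm : ∀ t, 0 ≤ t → f t ∈ K) :
    UniformContinuousOn (fun t => g (f t)) (Ici 0) :=
  (hK.uniformContinuousOn_of_continuous hg).comp hf hm

theorem convergence (hs : Sys A B P Gc gx ge DX DE Ωn Ωe xb ηb)
    (hsol : Sol A B c P Gc gx ge S s) {r r' : ℝ}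
    (hKD : Metric.closedBall xb r ×ˢ
        Metric.closedBall ((ηb, 0) : (ε → Fin n → ℝ) × (κ → Fin n → ℝ)) r' ⊆ Dom n ν ε κ Ωn Ωe)
    (hsK : ∀ t, 0 ≤ t → s t ∈ Metric.closedBall xb r ×ˢ
          Metric.closedBall ((ηb, 0) : (ε → Fin n → ℝ) × (κ → Fin n → ℝ)) r') :
    ∃ ηt : ε → Fin n → ℝ, (∀ k, ηt k ∈ Ωe) ∧ (∀ i, ∑ k, B i k • ge k (ηt k) = 0) ∧
      Tendsto s atTop (𝓝 (xb, ηt, 0)) := by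
  set K := Metric.closedBall xb r ×ˢ
        Metric.closedBall ((ηb, 0) : (ε → Fin n → ℝ) × (κ → Fin n → ℝ)) r' with hKdef
  have hKc : IsCompact K := (isCompact_closedBall _ _).prod (isCompact_closedBall _ _)
  have uce : UniformContinuousOn (fun t => (s t).2.1) (Ici 0) := uc_pi fun k =>
    uc_of_deriv hKc ((Fe_cont hs k).mono hKD) hsK (fun t ht => hsol.de t ht k)
  have ucc : UniformContinuousOn (fun t => (s t).2.2) (Ici 0) := uc_pi fun j =>
    uc_of_deriv hKc ((Fc_cont hs j).mono hKD) hsK (fun t ht => hsol.dc t ht j)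
  have uc2 : UniformContinuousOn (fun t => (s t).2) (Ici 0) := uc_prod uce ucc
  have ucx : UniformContinuousOn (fun t => (s t).1) (Ici 0) := by
    refine uc_pi fun i => ?_
    by_cases hi : i ∈ S
    · exact uc_of_deriv hKc ((Fx_cont hs i).mono hKD) hsK (fun t ht => hsol.dx t ht i hi)
    · -- algebraic node
      have hKi : IsCompact ((fun q : St n ν ε κ => q.1 i) '' K) :=
        hKc.image (by fun_prop)
      have hsub : (fun q : St n ν ε κ => q.1 i) '' K ⊆ Ωn := by
        rintro _ ⟨q, hq, rfl⟩
        exact (hKD hq).1 i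
      refine uc_reflect hKi (f := fun x => A i *ᵥ gx i x)
        (contOn_mulVec _ ((hs.px i).cont.mono hsub)) ?_
        (fun t ht => ⟨s t, hsK t ht, rfl⟩) ?_
      · intro a ha b hb hab
        apply (hs.px i).inj (hsub ha) (hsub hb)
        rw [← sub_eq_zero]
        apply A_inj hs i
        rw [mulVec_sub]
        exact sub_eq_zero.2 hab
      · have hK2 : IsCompact (Prod.snd '' K) := hKc.image continuous_snd
        have h := uc_comp hK2 ((rho_cont (c := c) hs i).mono
          (by rintro _ ⟨q, hq, rfl⟩; exact (hKD hq).2)) uc2 (fun t ht => ⟨s t, hsK t ht, rfl⟩)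
        refine h.congr fun t ht => ?_
        have ha := hsol.alg t ht i hi
        rw [Fx_eq, sub_eq_zero] at ha
        exact ha.symm
  have ucs : UniformContinuousOn s (Ici 0) := uc_prod ucx uc2
  -- the dissipation tends to zero
  have hVlim : ∃ L, Tendsto (fun t => Vl S DX DE (s t)) atTop (𝓝 L) := by
    have hanti := V_anti hs hsol (convex_Ici 0) subset_rfl (fun t ht => hKD (hsK t ht))
    have h1 : Antitone (fun t : ℝ => Vl S DX DE (s (max t 0))) := fun a b hab =>
      hanti (le_max_right a 0) (le_max_right b 0) (max_le_max_right 0 hab)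
    have h2 := tendsto_atTop_ciInf h1 ⟨0, by
      rintro _ ⟨t, rfl⟩
      exact V_nonneg hs (hKD (hsK _ (le_max_right t 0)))⟩
    refine ⟨_, h2.congr' ?_⟩
    filter_upwards [eventually_ge_atTop 0] with t ht
    rw [max_eq_left ht]
  obtain ⟨L, hL⟩ := hVlim
  have hW : Tendsto (fun t => Wd A Gc gx (s t)) atTop (𝓝 0) :=
    barbalat (fun t ht => V_deriv hs hsol ht (hKD (hsK t ht))) hL
      (uc_comp hKc ((Wd_cont hs).mono hKD) ucs hsK)
  have hWp : ∀ p ∈ K, MapClusterPt p atTop s → Wd A Gc gx p = 0 := fun p hp hc =>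
    cluster_zero hsK ((Wd_cont hs).mono hKD) hp hc hW
  have hWzero : ∀ p ∈ K, Wd A Gc gx p = 0 →
      (∀ i, gx i (p.1 i) = 0) ∧ p.1 = xb ∧ ∀ j l, p.2.2 j = p.2.2 l := by
    intro p hp h
    have ha := Finset.sum_nonpos fun i (_ : i ∈ Finset.univ) => A_nonpos hs i (gx i (p.1 i))
    have hb := lap_nonpos Gc p.2.2
    unfold Wd at h
    have ha0 := le_antisymm ha (by linarith)
    have hb0 := le_antisymm hb (by linarith)
    have hg : ∀ i, gx i (p.1 i) = 0 := by
      intro i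
      have := (Finset.sum_eq_zero_iff_of_nonpos
        (fun i (_ : i ∈ Finset.univ) => A_nonpos hs i (gx i (p.1 i)))).1 ha0 i (Finset.mem_univ _)
      by_contra hne
      exact absurd this (hs.hA i _ hne).ne
    exact ⟨hg, funext fun i => (hs.px i).gne ((hKD hp).1 i) (hg i), lap_zero Gc hs.hG _ hb0⟩
  -- convergence of x
  have hx : Tendsto (fun t => (s t).1) atTop (𝓝 xb) := by
    have hsub : Tendsto s atTop (𝓝 xb ×ˢ ⊤) := by
      rw [tendsto_prod_iff']
      refine ⟨?_, tendsto_top⟩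
      refine (isCompact_closedBall xb r).tendsto_nhds_of_unique_mapClusterPt ?_ ?_
      · filter_upwards [eventually_ge_atTop 0] with t ht using (hsK t ht).1
      · intro x hx hc
        rw [mapClusterPt_iff_ultrafilter] at hc
        obtain ⟨u, hu, hux⟩ := hc
        have hKu : ∀ᶠ t in (u : Filter ℝ), s t ∈ K := by
          apply hu
          filter_upwards [eventually_ge_atTop 0] with t ht using hsK t ht
        obtain ⟨p, hp, hpu⟩ := hKc.ultrafilter_le_nhds (u.map s) (by
          rw [le_principal_iff]; exact hKu)
        have hpu' : Tendsto s u (𝓝 p) := hpu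
        have hc : MapClusterPt p atTop s := mapClusterPt_iff_ultrafilter.2 ⟨u, hu, hpu'⟩
        rw [← (hWzero p hp (hWp p hp hc)).2.1]
        exact tendsto_nhds_unique hux ((continuous_fst.tendsto p).comp hpu')
    exact (tendsto_prod_iff'.1 hsub).1
  -- the node vector field tends to zero
  have hF : ∀ i a, Tendsto (fun t => Fx A B c P gx ge (s t) i a) atTop (𝓝 0) := by
    intro i a
    by_cases hi : i ∈ S
    · have hcont : ContinuousOn (fun q => Fx A B c P gx ge q i a) K :=
        (continuous_apply a).comp_continuousOn ((Fx_cont hs i).mono hKD)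
      refine barbalat (f := fun t => (s t).1 i a) (L := xb i a) ?_ ?_
        (uc_comp hKc hcont ucs hsK)
      · intro t ht
        exact (hasDerivWithinAt_pi.1 (hsol.dx t ht i hi)) a
      · exact tendsto_pi_nhds.1 (tendsto_pi_nhds.1 hx i) a
    · refine tendsto_const_nhds.congr' ?_
      filter_upwards [eventually_ge_atTop 0] with t ht
      rw [hsol.alg t ht i hi]; rfl
  -- cluster points
  have hcl : ∀ p ∈ K, MapClusterPt p atTop s →
      p.1 = xb ∧ p.2.2 = 0 ∧ ∀ i, ∑ k, B i k • ge k (p.2.1 k) = 0 := by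
    intro p hp hc
    obtain ⟨hg, hpx, hξ⟩ := hWzero p hp (hWp p hp hc)
    have hFp : ∀ i, Fx A B c P gx ge p i = 0 := by
      intro i
      funext a
      have hcont : ContinuousOn (fun q => Fx A B c P gx ge q i a) K :=
        (continuous_apply a).comp_continuousOn ((Fx_cont hs i).mono hKD)
      exact cluster_zero hsK hcont hp hc (hF i a)
    have hρ : ∀ i, rho B c P ge i p.2 = 0 := by
      intro i
      have := hFp i
      rw [Fx_eq, hg, mulVec_zero, zero_sub, neg_eq_zero] at this
      exact this
    have hsum : ∑ i, rho B c P ge i p.2 = - ∑ j, P j *ᵥ p.2.2 j := by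
      simp only [rho, Finset.sum_sub_distrib]
      rw [Finset.sum_comm, Finset.sum_comm (s := Finset.univ) (t := (Finset.univ : Finset κ))]
      simp [← Finset.sum_smul, hs.hB]
    obtain ⟨j0⟩ := hs.hG.nonempty
    have hξ0 : p.2.2 j0 = 0 := by
      apply hs.hPs
      rw [Finset.sum_congr rfl (fun i _ => hρ i), Finset.sum_const_zero, zero_eq_neg] at hsum
      rw [sum_mulVec, ← hsum]
      exact Finset.sum_congr rfl fun j _ => by rw [hξ j j0]
    have hξz : p.2.2 = 0 := funext fun j => by rw [hξ j j0, hξ0]; rfl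
    refine ⟨hpx, hξz, fun i => ?_⟩
    have := hρ i
    rw [rho, hξz] at this
    simpa using this
  obtain ⟨p, hp, hpc⟩ := hKc.exists_mapClusterPt (f := (atTop : Filter ℝ)) (u := s) (by
    rw [le_principal_iff, mem_map]
    filter_upwards [eventually_ge_atTop 0] with t ht using hsK t ht)
  obtain ⟨hp1, hp2, hp3⟩ := hcl p hp hpc
  refine ⟨p.2.1, (hKD hp).2, hp3, ?_⟩
  have hpe : p = (xb, p.2.1, 0) := by rw [← hp1, ← hp2]
  rw [← hpe]
  refine hKc.tendsto_nhds_of_unique_mapClusterPt ?_ ?_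
  · filter_upwards [eventually_ge_atTop 0] with t ht using hsK t ht
  intro q hq hqc
  obtain ⟨hq1, hq2, hq3⟩ := hcl q hq hqc
  -- conserved quantity
  set w : ε → Fin n → ℝ := fun k => ge k (q.2.1 k) - ge k (p.2.1 k) with hw
  have hw0 : ∀ i, ∑ k, B i k • w k = 0 := by
    intro i
    simp only [hw, smul_sub, Finset.sum_sub_distrib, hp3, hq3, sub_zero]
  set φ : St n ν ε κ → ℝ := fun s => ∑ k, w k ⬝ᵥ s.2.1 k with hφ
  have hφc : ContinuousOn φ K := by
    apply continuousOn_finsetSum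
    intro k _
    exact contOn_dot continuousOn_const (by fun_prop)
  have hφd : ∀ t, 0 ≤ t → HasDerivWithinAt (fun r => φ (s r)) 0 (Ici 0) t := by
    intro t ht
    have h1 : HasDerivWithinAt (fun r => φ (s r)) (∑ k, w k ⬝ᵥ Fe B gx (s t) k) (Ici 0) t := by
      apply HasDerivWithinAt.fun_sum
      intro k _
      simp only [dotProduct]
      apply HasDerivWithinAt.fun_sum
      intro a _
      exact ((hasDerivWithinAt_pi.1 (hsol.de t ht k)) a).const_mul _
    refine h1.congr_deriv ?_
    have : ∑ k, w k ⬝ᵥ Fe B gx (s t) k = ∑ i, (∑ k, B i k • w k) ⬝ᵥ gx i ((s t).1 i) := by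
      simp only [Fe, dotProduct_sum, sum_dotProduct]
      rw [Finset.sum_comm]
      refine Finset.sum_congr rfl fun i _ => Finset.sum_congr rfl fun k _ => ?_
      rw [dotProduct_smul, smul_dotProduct]
    rw [this]
    simp [hw0]
  have hconst : ∀ t, 0 ≤ t → φ (s t) = φ (s 0) := by
    intro t ht
    refine constant_of_has_deriv_right_zero (f := fun r => φ (s r)) (a := 0) (b := t) ?_ ?_ t
      ⟨ht, le_rfl⟩
    · intro r hr
      exact (hφd r hr.1).continuousWithinAt.mono Icc_subset_Ici_self
    · intro r hr
      exact (hφd r hr.1).mono (Ici_subset_Ici.2 hr.1)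
  have hlim : Tendsto (fun t => φ (s t)) atTop (𝓝 (φ (s 0))) := by
    refine tendsto_const_nhds.congr' ?_
    filter_upwards [eventually_ge_atTop 0] with t ht using (hconst t ht).symm
  have e1 := cluster_zero hsK hφc hp hpc hlim
  have e2 := cluster_zero hsK hφc hq hqc hlim
  have e3 : ∑ k, w k ⬝ᵥ (q.2.1 k - p.2.1 k) = 0 := by
    simp only [dotProduct_sub, Finset.sum_sub_distrib]
    exact sub_eq_zero.2 (e2.trans e1.symm)
  have hnn : ∀ k ∈ Finset.univ, 0 ≤ w k ⬝ᵥ (q.2.1 k - p.2.1 k) := by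
    intro k _
    by_cases h : q.2.1 k = p.2.1 k
    · rw [h]; simp
    · exact ((hs.pe k).mono _ ((hKD hq).2 k) _ ((hKD hp).2 k) h).le
  have hηeq : q.2.1 = p.2.1 := by
    funext k
    by_contra h
    have := (Finset.sum_eq_zero_iff_of_nonneg hnn).1 e3 k (Finset.mem_univ _)
    exact absurd this ((hs.pe k).mono _ ((hKD hq).2 k) _ ((hKD hp).2 k) h).ne'
  exact Prod.ext (hq1.trans hp1.symm) (Prod.ext hηeq (hq2.trans hp2.symm))

end Conv

/-- Theorem 3: with `G_i = I_n`, under the feasibility condition,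
the distributed controller `ξ̇_i = Σ_{{i,j}∈E_c}(ξ_j − ξ_i) + Q_i⁻¹(y* − ∇H_{n,i}(x_i))`,
`u_i = Q_i⁻¹ξ_i` over a connected communication graph locally achieves output
agreement on `y*`, and each `u_i` converges to the optimal steady-state input
`ū_i = Q_i⁻¹λ`, which minimizes `(1/2)Σ ū_iᵀQ_iū_i` subject to the steady-state
balance constraint. -/
theorem output_agreement_optimal_distributed_control
    {n N M : ℕ} (hn : 0 < n) (hN : 0 < N) (hM : 0 < M)
    (B : Matrix (Fin N) (Fin M) ℝ)
    (hB1 : ∀ k, ∑ i, B i k = 0)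
    (hBker : LinearMap.ker (Matrix.mulVecLin Bᵀ) =
      Submodule.span ℝ {(fun _ => (1 : ℝ) : Fin N → ℝ)})
    (J R : Fin N → Matrix (Fin n) (Fin n) ℝ)
    (hJ : ∀ i, (J i)ᵀ = -(J i)) (hR : ∀ i, (R i).PosDef)
    (δ : Fin N → Fin n → ℝ)
    (Ωn : Set (Fin n → ℝ)) (hΩno : IsOpen Ωn) (hΩnc : Convex ℝ Ωn)
    (Ωe : Set (Fin n → ℝ)) (hΩeo : IsOpen Ωe) (hΩec : Convex ℝ Ωe)
    (Hn : Fin N → (Fin n → ℝ) → ℝ)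
    (hHnC : ∀ i, ContDiffOn ℝ 1 (Hn i) Ωn)
    (hHnconv : ∀ i, StrictConvexOn ℝ Ωn (Hn i))
    (He : Fin M → (Fin n → ℝ) → ℝ)
    (hHeC : ∀ k, ContDiffOn ℝ 1 (He k) Ωe)
    (hHeconv : ∀ k, StrictConvexOn ℝ Ωe (He k))
    -- partition of the node set, with I₁₁ nonempty:
    (I11 I12 I21 I22 : Finset (Fin N))
    (hpart : I11 ∪ I12 ∪ I21 ∪ I22 = Finset.univ)
    (h1112 : Disjoint I11 I12) (h1121 : Disjoint I11 I21)
    (h1122 : Disjoint I11 I22) (h1221 : Disjoint I12 I21)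
    (h1222 : Disjoint I12 I22) (h2122 : Disjoint I21 I22)
    (hI11 : I11.Nonempty)
    -- weights of the cost, indexed by the controlled nodes I_c = I₁₁ ∪ I₂₁:
    (Q : {i // i ∈ I11 ∪ I21} → Matrix (Fin n) (Fin n) ℝ)
    (hQ : ∀ i, (Q i).PosDef)
    -- the prescribed set point and the optimal multiplier λ:
    (ystar : Fin n → ℝ) (lam : Fin n → ℝ)
    (hlam : lam = -((∑ i : {i // i ∈ I11 ∪ I21}, (Q i)⁻¹)⁻¹ *ᵥ
      (∑ i, (J i - R i) *ᵥ ystar + ∑ i, δ i)))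
    -- the feasibility condition:
    (xbar : Fin N → Fin n → ℝ) (ηbar : Fin M → Fin n → ℝ)
    (hxbar : ∀ i, xbar i ∈ Ωn) (hηbar : ∀ k, ηbar k ∈ Ωe)
    (hxbarout : ∀ i, grad (Hn i) (xbar i) = ystar)
    (hfeasc : ∀ i, ∀ hi : i ∈ I11 ∪ I21, (0 : Fin n → ℝ) =
      (J i - R i) *ᵥ ystar - (∑ k, B i k • grad (He k) (ηbar k))
        + (Q ⟨i, hi⟩)⁻¹ *ᵥ lam + δ i)
    (hfeasu : ∀ i ∈ I12 ∪ I22, (0 : Fin n → ℝ) =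
      (J i - R i) *ᵥ ystar - (∑ k, B i k • grad (He k) (ηbar k)) + δ i)
    -- the connected undirected communication graph on I_c:
    (Gc : SimpleGraph {i // i ∈ I11 ∪ I21}) [DecidableRel Gc.Adj]
    (hGc : Gc.Connected)
    -- the steady-state controller value ξ̄:
    (ξbar : {i // i ∈ I11 ∪ I21} → Fin n → ℝ)
    (hξbar : ∀ i, ξbar i = lam) :
    ∃ U : Set ((Fin N → Fin n → ℝ) × (Fin M → Fin n → ℝ) ×
      ({i // i ∈ I11 ∪ I21} → Fin n → ℝ)),
      IsOpen U ∧ (xbar, ηbar, ξbar) ∈ U ∧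
      ∀ (x : ℝ → Fin N → Fin n → ℝ) (η : ℝ → Fin M → Fin n → ℝ)
        (ξ : ℝ → {i // i ∈ I11 ∪ I21} → Fin n → ℝ),
        -- (x, η, ξ) is a solution of the closed-loop system on [0, ∞):
        ContinuousOn (fun t => (x t, η t, ξ t)) (Ici 0) →
        (∀ t ∈ Ici (0 : ℝ), ∀ k,
          HasDerivWithinAt (fun s => η s k)
            (∑ i, B i k • grad (Hn i) (x t i)) (Ici 0) t) →
        (∀ t ∈ Ici (0 : ℝ), ∀ i, ∀ hi : i ∈ I11,
          HasDerivWithinAt (fun s => x s i)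
            ((J i - R i) *ᵥ grad (Hn i) (x t i)
              - (∑ k, B i k • grad (He k) (η t k))
              + (Q ⟨i, Finset.mem_union_left _ hi⟩)⁻¹ *ᵥ
                  ξ t ⟨i, Finset.mem_union_left _ hi⟩ + δ i)
            (Ici 0) t) →
        (∀ t ∈ Ici (0 : ℝ), ∀ i ∈ I12,
          HasDerivWithinAt (fun s => x s i)
            ((J i - R i) *ᵥ grad (Hn i) (x t i)
              - (∑ k, B i k • grad (He k) (η t k)) + δ i)
            (Ici 0) t) →
        (∀ t ∈ Ici (0 : ℝ), ∀ i, ∀ hi : i ∈ I21,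
          (0 : Fin n → ℝ) = (J i - R i) *ᵥ grad (Hn i) (x t i)
            - (∑ k, B i k • grad (He k) (η t k))
            + (Q ⟨i, Finset.mem_union_right _ hi⟩)⁻¹ *ᵥ
                ξ t ⟨i, Finset.mem_union_right _ hi⟩ + δ i) →
        (∀ t ∈ Ici (0 : ℝ), ∀ i ∈ I22,
          (0 : Fin n → ℝ) = (J i - R i) *ᵥ grad (Hn i) (x t i)
            - (∑ k, B i k • grad (He k) (η t k)) + δ i) →
        -- the distributed controller dynamics:
        (∀ t ∈ Ici (0 : ℝ), ∀ i : {i // i ∈ I11 ∪ I21},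
          HasDerivWithinAt (fun s => ξ s i)
            ((∑ j, if Gc.Adj i j then ξ t j - ξ t i else 0)
              + (Q i)⁻¹ *ᵥ (ystar - grad (Hn i.1) (x t i.1))) (Ici 0) t) →
        -- starting in U:
        (x 0, η 0, ξ 0) ∈ U →
        -- convergence to a closed-loop equilibrium with outputs equal to y*:
        (∃ (xt : Fin N → Fin n → ℝ) (ηt : Fin M → Fin n → ℝ)
          (ξt : {i // i ∈ I11 ∪ I21} → Fin n → ℝ),
          (∀ i, xt i ∈ Ωn) ∧ (∀ k, ηt k ∈ Ωe) ∧
          (∀ k, ∑ i, B i k • grad (Hn i) (xt i) = 0) ∧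
          (∀ i, ∀ hi : i ∈ I11, (0 : Fin n → ℝ) =
            (J i - R i) *ᵥ grad (Hn i) (xt i)
              - (∑ k, B i k • grad (He k) (ηt k))
              + (Q ⟨i, Finset.mem_union_left _ hi⟩)⁻¹ *ᵥ
                  ξt ⟨i, Finset.mem_union_left _ hi⟩ + δ i) ∧
          (∀ i ∈ I12, (0 : Fin n → ℝ) =
            (J i - R i) *ᵥ grad (Hn i) (xt i)
              - (∑ k, B i k • grad (He k) (ηt k)) + δ i) ∧
          (∀ i, ∀ hi : i ∈ I21, (0 : Fin n → ℝ) =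
            (J i - R i) *ᵥ grad (Hn i) (xt i)
              - (∑ k, B i k • grad (He k) (ηt k))
              + (Q ⟨i, Finset.mem_union_right _ hi⟩)⁻¹ *ᵥ
                  ξt ⟨i, Finset.mem_union_right _ hi⟩ + δ i) ∧
          (∀ i ∈ I22, (0 : Fin n → ℝ) =
            (J i - R i) *ᵥ grad (Hn i) (xt i)
              - (∑ k, B i k • grad (He k) (ηt k)) + δ i) ∧
          (∀ i : {i // i ∈ I11 ∪ I21},
            (∑ j, if Gc.Adj i j then ξt j - ξt i else 0)
              + (Q i)⁻¹ *ᵥ (ystar - grad (Hn i.1) (xt i.1)) = 0) ∧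
          Tendsto x atTop (𝓝 xt) ∧ Tendsto η atTop (𝓝 ηt) ∧
          Tendsto ξ atTop (𝓝 ξt) ∧
          ∀ i, grad (Hn i) (xt i) = ystar) ∧
        -- the controls converge to the optimal allocation ū_i = Q_i⁻¹ λ:
        (∀ i : {i // i ∈ I11 ∪ I21},
          Tendsto (fun t => (Q i)⁻¹ *ᵥ ξ t i) atTop (𝓝 ((Q i)⁻¹ *ᵥ lam))) ∧
        -- which minimizes the cost subject to the balance constraint:
        (∀ u : {i // i ∈ I11 ∪ I21} → Fin n → ℝ,
          (∑ i, u i) = -(∑ i, (J i - R i) *ᵥ ystar + ∑ i, δ i) →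
          (1 / 2) * ∑ i, ((Q i)⁻¹ *ᵥ lam) ⬝ᵥ (Q i *ᵥ ((Q i)⁻¹ *ᵥ lam)) ≤
          (1 / 2) * ∑ i, u i ⬝ᵥ (Q i *ᵥ u i)) := by
  classical
  haveI : Nonempty (Fin N) := ⟨⟨0, hN⟩⟩
  have hQI : ∀ j, ((Q j)⁻¹).PosDef := fun j => (hQ j).inv
  have hne : Nonempty {i // i ∈ I11 ∪ I21} := hGc.nonempty
  have hPS : (∑ j, (Q j)⁻¹).PosDef :=
    Matrix.posDef_sum Finset.univ_nonempty (fun j _ => hQI j)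
  have hPSdet : IsUnit (∑ j, (Q j)⁻¹).det := (Matrix.isUnit_iff_isUnit_det _).1 hPS.isUnit
  have hsys : Sys (fun i => J i - R i) B (fun j => (Q j)⁻¹) Gc
      (fun i x => grad (Hn i) x - ystar) (fun k y => grad (He k) y - grad (He k) (ηbar k))
      (fun i x => Hn i x - Hn i (xbar i) - grad (Hn i) (xbar i) ⬝ᵥ (x - xbar i))
      (fun k y => He k y - He k (ηbar k) - grad (He k) (ηbar k) ⬝ᵥ (y - ηbar k))
      Ωn Ωe xbar ηbar := by
    refine ⟨?_, ?_, ?_, hB1, hGc, ?_, ?_⟩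
    · intro i v hv
      have h1 : v ⬝ᵥ (J i *ᵥ v) = 0 := by
        have h2 : v ⬝ᵥ (J i *ᵥ v) = - (v ⬝ᵥ (J i *ᵥ v)) := by
          conv_lhs => rw [dotProduct_mulVec, ← mulVec_transpose, hJ, neg_mulVec, neg_dotProduct,
            dotProduct_comm]
        linarith
      have h3 := (hR i).dotProduct_mulVec_pos hv
      rw [star_trivial] at h3
      rw [sub_mulVec, dotProduct_sub, h1]
      linarith
    · intro j
      have := (hQI j).isHermitian
      rwa [Matrix.IsHermitian, conjTranspose_eq_transpose_of_trivial] at this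
    · intro v hv
      by_contra hne
      have := hPS.dotProduct_mulVec_pos hne
      rw [hv, dotProduct_zero] at this
      exact lt_irrefl _ this
    · intro i
      have := pot_of hΩno (hHnC i) (hHnconv i) (hxbar i)
      simpa only [hxbarout] using this
    · intro k
      exact pot_of hΩeo (hHeC k) (hHeconv k) (hηbar k)
  have hFc : ∀ (x : Fin N → Fin n → ℝ) (η : Fin M → Fin n → ℝ)
      (ξ : {i // i ∈ I11 ∪ I21} → Fin n → ℝ) (i : Fin N) (hi : i ∈ I11 ∪ I21),
      Fx (fun i => J i - R i) B Subtype.val (fun j => (Q j)⁻¹)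
        (fun i x => grad (Hn i) x - ystar) (fun k y => grad (He k) y - grad (He k) (ηbar k))
        (x, η, fun j => ξ j - lam) i = (J i - R i) *ᵥ grad (Hn i) (x i)
          - (∑ k, B i k • grad (He k) (η k)) + (Q ⟨i, hi⟩)⁻¹ *ᵥ ξ ⟨i, hi⟩ + δ i := by
    intro x η ξ i hi
    have h1 : (∑ j : {i // i ∈ I11 ∪ I21}, if j.1 = i then (Q j)⁻¹ *ᵥ (ξ j - lam) else 0) =
        (Q ⟨i, hi⟩)⁻¹ *ᵥ (ξ ⟨i, hi⟩ - lam) := by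
      rw [Finset.sum_eq_single ⟨i, hi⟩]
      · simp
      · intro j _ hj
        rw [if_neg]
        intro h
        exact hj (Subtype.ext h)
      · intro h; exact absurd (Finset.mem_univ _) h
    have h2 := hfeasc i hi
    unfold Fx
    beta_reduce
    dsimp only
    refine (congrArg _ h1).trans ?_
    simp only [mulVec_sub, smul_sub, Finset.sum_sub_distrib]
    funext a
    have h3 := congrFun h2 a
    simp only [Pi.add_apply, Pi.sub_apply, Pi.zero_apply] at h3 ⊢
    linarith
  have hFu : ∀ (x : Fin N → Fin n → ℝ) (η : Fin M → Fin n → ℝ)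
      (ξ : {i // i ∈ I11 ∪ I21} → Fin n → ℝ) (i : Fin N) (hi : i ∈ I12 ∪ I22),
      Fx (fun i => J i - R i) B Subtype.val (fun j => (Q j)⁻¹)
        (fun i x => grad (Hn i) x - ystar) (fun k y => grad (He k) y - grad (He k) (ηbar k))
        (x, η, fun j => ξ j - lam) i = (J i - R i) *ᵥ grad (Hn i) (x i)
          - (∑ k, B i k • grad (He k) (η k)) + δ i := by
    intro x η ξ i hi
    have h1 : (∑ j : {i // i ∈ I11 ∪ I21}, if j.1 = i then (Q j)⁻¹ *ᵥ (ξ j - lam) else 0) = 0 := by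
      apply Finset.sum_eq_zero
      intro j _
      rw [if_neg]
      intro h
      have hj := j.2
      rw [h] at hj
      rw [Finset.mem_union] at hi hj
      rw [Finset.disjoint_left] at h1112 h1122 h1221 h2122
      rcases hi with hi | hi <;> rcases hj with hj | hj
      · exact h1112 hj hi
      · exact h1221 hi hj
      · exact h1122 hj hi
      · exact h2122 hj hi
    have h2 := hfeasu i hi
    unfold Fx
    beta_reduce
    dsimp only
    refine (congrArg _ h1).trans ?_
    simp only [mulVec_sub, smul_sub, Finset.sum_sub_distrib]
    funext a
    have h3 := congrFun h2 a
    simp only [Pi.add_apply, Pi.sub_apply, Pi.zero_apply] at h3 ⊢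
    linarith
  obtain ⟨r, r', hKD, U, hUo, hUb, hU⟩ := trapping (c := Subtype.val) (S := I11 ∪ I12)
    hsys hΩno hΩeo
  refine ⟨(fun q => (q.1, q.2.1, fun j => q.2.2 j - lam)) ⁻¹' U, hUo.preimage (by fun_prop), ?_, ?_⟩
  · have : (fun j => ξbar j - lam) = 0 := funext fun j => by rw [hξbar, sub_self]; rfl
    simp only [mem_preimage, this]
    exact hUb
  intro x η ξ hcont hη hx11 hx12 hx21 hx22 hξ h0
  have hmem : ∀ i, i ∈ I11 ∨ i ∈ I12 ∨ i ∈ I21 ∨ i ∈ I22 := by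
    intro i
    have := Finset.mem_univ i
    rw [← hpart] at this
    simp only [Finset.mem_union] at this
    tauto
  have hsol : Sol (fun i => J i - R i) B Subtype.val (fun j => (Q j)⁻¹) Gc
      (fun i x => grad (Hn i) x - ystar) (fun k y => grad (He k) y - grad (He k) (ηbar k))
      (I11 ∪ I12) (fun t => (x t, η t, fun j => ξ t j - lam)) := by
    refine ⟨?_, ?_, ?_, ?_, ?_⟩
    · have hm : Continuous (fun q : (Fin N → Fin n → ℝ) × (Fin M → Fin n → ℝ) ×
        ({i // i ∈ I11 ∪ I21} → Fin n → ℝ) =>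
          ((q.1, q.2.1, fun j => q.2.2 j - lam) : (Fin N → Fin n → ℝ) × (Fin M → Fin n → ℝ) ×
        ({i // i ∈ I11 ∪ I21} → Fin n → ℝ))) := by fun_prop
      exact hm.comp_continuousOn hcont
    · intro t ht i hi
      rcases Finset.mem_union.1 hi with hi | hi
      · rw [hFc _ _ _ i (Finset.mem_union_left _ hi)]
        exact hx11 t ht i hi
      · rw [hFu _ _ _ i (Finset.mem_union_left _ hi)]
        exact hx12 t ht i hi
    · intro t ht i hi
      rw [Finset.mem_union] at hi
      rcases hmem i with h | h | h | h
      · exact absurd (Or.inl h) hi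
      · exact absurd (Or.inr h) hi
      · rw [hFc _ _ _ i (Finset.mem_union_right _ h)]
        exact (hx21 t ht i h).symm
      · rw [hFu _ _ _ i (Finset.mem_union_right _ h)]
        exact (hx22 t ht i h).symm
    · intro t ht k
      refine (hη t ht k).congr_deriv ?_
      simp only [Fe, smul_sub, Finset.sum_sub_distrib, ← Finset.sum_smul, hB1, zero_smul, sub_zero]
    · intro t ht j
      refine ((hξ t ht j).sub_const lam).congr_deriv ?_
      simp only [Fc, Lc, sub_sub_sub_cancel_right, mulVec_sub]
      abel
  obtain ⟨ηt, hηt, hBη, hlim⟩ := convergence hsys hsol hKD (hU _ hsol h0)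
  have hxl : Tendsto x atTop (𝓝 xbar) := (continuous_fst.tendsto _).comp hlim
  have hηl : Tendsto η atTop (𝓝 ηt) :=
    ((continuous_fst.comp continuous_snd).tendsto _).comp hlim
  have hξl0 : Tendsto (fun t => fun j => ξ t j - lam) atTop (𝓝 0) :=
    ((continuous_snd.comp continuous_snd).tendsto _).comp hlim
  have hξl : Tendsto ξ atTop (𝓝 (fun _ => lam)) := by
    rw [tendsto_pi_nhds] at hξl0 ⊢
    intro j
    have := (hξl0 j).add_const lam
    simpa using this
  have hFeq : ∀ i, Fx (fun i => J i - R i) B Subtype.val (fun j => (Q j)⁻¹)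
        (fun i x => grad (Hn i) x - ystar) (fun k y => grad (He k) y - grad (He k) (ηbar k))
        (xbar, ηt, fun j => (fun _ : {i // i ∈ I11 ∪ I21} => lam) j - lam) i = 0 := by
    intro i
    simp only [Fx, hBη i, hxbarout, sub_self, mulVec_zero]
    simp
  have hbal : ∑ j, (Q j)⁻¹ *ᵥ lam = -(∑ i, (J i - R i) *ᵥ ystar + ∑ i, δ i) := by
    rw [← sum_mulVec, hlam, mulVec_neg, mulVec_mulVec, mul_nonsing_inv _ hPSdet, one_mulVec]
  refine ⟨⟨xbar, ηt, fun _ => lam, hxbar, hηt, ?_, ?_, ?_, ?_, ?_, ?_, hxl, hηl, hξl, hxbarout⟩,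
    ?_, ?_⟩
  · intro k
    simp only [hxbarout, ← Finset.sum_smul, hB1, zero_smul]
  · intro i hi
    rw [← hFeq i, hFc _ _ _ i (Finset.mem_union_left _ hi)]
  · intro i hi
    rw [← hFeq i, hFu _ _ _ i (Finset.mem_union_left _ hi)]
  · intro i hi
    rw [← hFeq i, hFc _ _ _ i (Finset.mem_union_right _ hi)]
  · intro i hi
    rw [← hFeq i, hFu _ _ _ i (Finset.mem_union_right _ hi)]
  · intro i
    simp [hxbarout]
  · intro i
    have hc : Continuous (fun v : Fin n → ℝ => (Q i)⁻¹ *ᵥ v) :=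
      Continuous.matrix_mulVec continuous_const continuous_id
    exact (hc.tendsto lam).comp (tendsto_pi_nhds.1 hξl i)
  · intro u hu
    have hQd : ∀ j, Q j *ᵥ ((Q j)⁻¹ *ᵥ lam) = lam := fun j => by
      rw [mulVec_mulVec, mul_nonsing_inv _ ((Matrix.isUnit_iff_isUnit_det _).1 (hQ j).isUnit),
        one_mulVec]
    have hQT : ∀ j, (Q j)ᵀ = Q j := fun j => by
      have := (hQ j).isHermitian
      rwa [Matrix.IsHermitian, conjTranspose_eq_transpose_of_trivial] at this
    have key : ∀ j, ((Q j)⁻¹ *ᵥ lam) ⬝ᵥ (Q j *ᵥ ((Q j)⁻¹ *ᵥ lam)) +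
        2 * ((u j - (Q j)⁻¹ *ᵥ lam) ⬝ᵥ lam) ≤ u j ⬝ᵥ (Q j *ᵥ u j) := by
      intro j
      have hnn : 0 ≤ (u j - (Q j)⁻¹ *ᵥ lam) ⬝ᵥ (Q j *ᵥ (u j - (Q j)⁻¹ *ᵥ lam)) := by
        have := (hQ j).posSemidef.dotProduct_mulVec_nonneg (u j - (Q j)⁻¹ *ᵥ lam)
        rwa [star_trivial] at this
      have hsw : ((Q j)⁻¹ *ᵥ lam) ⬝ᵥ (Q j *ᵥ u j) = u j ⬝ᵥ lam := by
        rw [dotProduct_mulVec, ← mulVec_transpose, hQT, hQd, dotProduct_comm]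
      rw [mulVec_sub, sub_dotProduct, dotProduct_sub, dotProduct_sub, hsw, hQd] at hnn
      rw [hQd, sub_dotProduct]
      linarith
    have hsum := Finset.sum_le_sum fun j (_ : j ∈ Finset.univ) => key j
    rw [Finset.sum_add_distrib, ← Finset.mul_sum, ← sum_dotProduct, Finset.sum_sub_distrib,
      hu, hbal, sub_self, zero_dotProduct] at hsum
    linarith
end

section
/- Microgrid output agreement with optimal dispatch. Let q_i > 0 for i ∈ V_c := V_G ∪ V_I, set λ = −(Σ_{i∈V_c} q_i^{-1})^{-1} Σ_{i=1}^N δ_i and ū_i = q_i^{-1}λ for i ∈ V_c. Assume the feasibility condition: there exists η̄ ∈ (−π/2, π/2)^M such that 0 = −B_GΓ sin(η̄) + ū_G + δ_G, 0 = −B_IΓ sin(η̄) + ū_I + δ_I, and 0 = −B_LΓ sin(η̄) + δ_L (where ū_G, ū_I collect the ū_i and δ_G, δ_I, δ_L collect the δ_i of the respective node sets). Let G_c be a connected undirected communication graph on V_c and apply the distributed controller ξ̇_i = Σ_{\{i,j\}∈E_c}(ξ_j − ξ_i) − q_i^{-1}ω_i, u_i = q_i^{-1}ξ_i, for i ∈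 V_c. Then there exists an open set of initial conditions around the point (ω = 0, η = η̄, ξ = (λ,…,λ)) such that every closed-loop solution starting in it is defined for all t ≥ 0 and satisfies ω_i(t) → 0 as t → ∞ for every node i (zero frequency deviation), and u_i(t) → ū_i as t → ∞ for every i ∈ V_c (optimal steady-state power distribution). -/
open Matrix Filter Topology Set Real

namespace MG

/-- bounded on the half line -/
def Bd (f : ℝ → ℝ) : Prop := ∃ C, ∀ t, 0 ≤ t → |f t| ≤ C

/-- Lipschitz on the half line -/
def Lp (f : ℝ → ℝ) : Prop := ∃ C, ∀ s t, 0 ≤ s → 0 ≤ t → |f s - f t| ≤ C * |s - t|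

lemma Bd.const (c : ℝ) : Bd (fun _ => c) := ⟨|c|, fun _ _ => le_rfl⟩

lemma Bd.add {f g : ℝ → ℝ} (hf : Bd f) (hg : Bd g) : Bd (fun t => f t + g t) := by
  obtain ⟨C, hC⟩ := hf
  obtain ⟨D, hD⟩ := hg
  exact ⟨C + D, fun t ht => (abs_add_le _ _).trans (add_le_add (hC t ht) (hD t ht))⟩

lemma Bd.mul {f g : ℝ → ℝ} (hf : Bd f) (hg : Bd g) : Bd (fun t => f t * g t) := by
  obtain ⟨C, hC⟩ := hf
  obtain ⟨D, hD⟩ := hg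
  refine ⟨C * D, fun t ht => ?_⟩
  rw [abs_mul]
  exact mul_le_mul (hC t ht) (hD t ht) (abs_nonneg _) ((abs_nonneg _).trans (hC t ht))

lemma Bd.neg {f : ℝ → ℝ} (hf : Bd f) : Bd (fun t => - f t) := by
  obtain ⟨C, hC⟩ := hf
  exact ⟨C, fun t ht => by rw [abs_neg]; exact hC t ht⟩

lemma Bd.sub {f g : ℝ → ℝ} (hf : Bd f) (hg : Bd g) : Bd (fun t => f t - g t) := by
  simpa [sub_eq_add_neg] using hf.add hg.neg

lemma Bd.sum {ι : Type*} (s : Finset ι) {f : ι → ℝ → ℝ} (hf : ∀ i ∈ s, Bd (f i)) :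
    Bd (fun t => ∑ i ∈ s, f i t) := by
  classical
  induction s using Finset.induction_on with
  | empty => simpa using Bd.const 0
  | insert a s ha ih =>
    simp only [Finset.sum_insert ha]
    exact (hf a (by simp)).add (ih fun i hi => hf i (by simp [hi]))

lemma Bd.sin (f : ℝ → ℝ) : Bd (fun t => Real.sin (f t)) := ⟨1, fun _ _ => abs_sin_le_one _⟩

lemma Bd.congr {f g : ℝ → ℝ} (hf : Bd f) (h : ∀ t, 0 ≤ t → g t = f t) : Bd g := by
  obtain ⟨C, hC⟩ := hf
  exact ⟨C, fun t ht => by rw [h t ht]; exact hC t ht⟩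

lemma Lp.of_deriv {f f' : ℝ → ℝ} (hf : ∀ t ∈ Ici (0:ℝ), HasDerivWithinAt f (f' t) (Ici 0) t)
    (hb : Bd f') : Lp f := by
  obtain ⟨C, hC⟩ := hb
  refine ⟨C, fun s t hs ht => ?_⟩
  have := (convex_Ici (0:ℝ)).norm_image_sub_le_of_norm_hasDerivWithin_le (f := f) (f' := f')
    (C := C) (fun x hx => hf x hx) (fun x hx => hC x hx) (x := t) (y := s) ht hs
  simpa using this

/-- bounded and Lipschitz -/
def BL (f : ℝ → ℝ) : Prop := Bd f ∧ Lp f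

lemma BL.const (c : ℝ) : BL (fun _ => c) := ⟨Bd.const c, 0, fun _ _ _ _ => by simp⟩

lemma BL.add {f g : ℝ → ℝ} (hf : BL f) (hg : BL g) : BL (fun t => f t + g t) := by
  refine ⟨hf.1.add hg.1, ?_⟩
  obtain ⟨C, hC⟩ := hf.2
  obtain ⟨D, hD⟩ := hg.2
  refine ⟨C + D, fun s t hs ht => ?_⟩
  have h1 := hC s t hs ht
  have h2 := hD s t hs ht
  calc |f s + g s - (f t + g t)| = |(f s - f t) + (g s - g t)| := by ring_nf
    _ ≤ _ := abs_add_le _ _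
    _ ≤ _ := by rw [add_mul]; exact add_le_add h1 h2

lemma BL.mul {f g : ℝ → ℝ} (hf : BL f) (hg : BL g) : BL (fun t => f t * g t) := by
  refine ⟨hf.1.mul hg.1, ?_⟩
  obtain ⟨C, hC⟩ := hf.2
  obtain ⟨D, hD⟩ := hg.2
  obtain ⟨E, hE⟩ := hf.1
  obtain ⟨F, hF⟩ := hg.1
  refine ⟨C * F + E * D, fun s t hs ht => ?_⟩
  have h1 := hC s t hs ht
  have h2 := hD s t hs ht
  calc |f s * g s - f t * g t| = |(f s - f t) * g s + f t * (g s - g t)| := by ring_nf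
    _ ≤ |(f s - f t) * g s| + |f t * (g s - g t)| := abs_add_le _ _
    _ = |f s - f t| * |g s| + |f t| * |g s - g t| := by rw [abs_mul, abs_mul]
    _ ≤ (C * |s - t|) * F + E * (D * |s - t|) := by
        refine add_le_add (mul_le_mul h1 (hF s hs) (abs_nonneg _) ((abs_nonneg _).trans h1))
          (mul_le_mul (hE t ht) h2 (abs_nonneg _) ((abs_nonneg _).trans (hE t ht)))
    _ = _ := by ring

lemma BL.neg {f : ℝ → ℝ} (hf : BL f) : BL (fun t => - f t) := by
  simpa using (BL.const (-1)).mul hf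

lemma BL.sub {f g : ℝ → ℝ} (hf : BL f) (hg : BL g) : BL (fun t => f t - g t) := by
  simpa [sub_eq_add_neg] using hf.add hg.neg

lemma BL.sum {ι : Type*} (s : Finset ι) {f : ι → ℝ → ℝ} (hf : ∀ i ∈ s, BL (f i)) :
    BL (fun t => ∑ i ∈ s, f i t) := by
  classical
  induction s using Finset.induction_on with
  | empty => simpa using BL.const 0
  | insert a s ha ih =>
    simp only [Finset.sum_insert ha]
    exact (hf a (by simp)).add (ih fun i hi => hf i (by simp [hi]))

lemma BL.congr {f g : ℝ → ℝ} (hf : BL f) (h : ∀ t, 0 ≤ t → g t = f t) : BL g := by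
  refine ⟨hf.1.congr h, ?_⟩
  obtain ⟨C, hC⟩ := hf.2
  exact ⟨C, fun s t hs ht => by rw [h t ht, h s hs]; exact hC s t hs ht⟩

lemma BL.sin {f : ℝ → ℝ} (hf : Lp f) : BL (fun t => Real.sin (f t)) := by
  refine ⟨Bd.sin f, ?_⟩
  obtain ⟨C, hC⟩ := hf
  refine ⟨C, fun s t hs ht => le_trans ?_ (hC s t hs ht)⟩
  have := Real.lipschitzWith_sin.dist_le_mul (f s) (f t)
  simpa [Real.dist_eq] using this

/-- Barbalat -/
lemma barbalat {F f : ℝ → ℝ} {l : ℝ}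
    (hF : ∀ t ∈ Ici (0:ℝ), HasDerivWithinAt F (f t) (Ici 0) t) (hf : Lp f)
    (hl : Tendsto F atTop (𝓝 l)) : Tendsto f atTop (𝓝 0) := by
  obtain ⟨C, hC⟩ := hf
  have hC0 : 0 ≤ C := by
    have := (abs_nonneg _).trans (hC 0 1 le_rfl zero_le_one)
    simpa using this
  rw [Metric.tendsto_atTop]
  intro ε hε
  set h := ε / (2 * (C + 1)) with hh
  have hh0 : 0 < h := by positivity
  have hCh : C * h < ε / 2 := by
    have : (C + 1) * h = ε / 2 := by rw [hh]; field_simp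
    nlinarith
  rw [Metric.tendsto_atTop] at hl
  obtain ⟨T, hT⟩ := hl (h * ε / 4) (by positivity)
  refine ⟨max T 0, fun t ht => ?_⟩
  have htT : T ≤ t := (le_max_left _ _).trans ht
  have ht0 : 0 ≤ t := (le_max_right _ _).trans ht
  obtain ⟨c, hc, hce⟩ := exists_hasDerivAt_eq_slope F f (show t < t + h by linarith)
    (fun x hx => ((hF x (ht0.trans hx.1)).continuousWithinAt.mono
      (fun y hy => ht0.trans hy.1)))
    (fun x hx => (hF x (ht0.trans hx.1.le)).hasDerivAt (Ici_mem_nhds (ht0.trans_lt hx.1)))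
  have h1 := hT t htT
  have h2 := hT (t + h) (by linarith)
  rw [Real.dist_eq] at h1 h2
  rw [Real.dist_eq, sub_zero]
  have h3 := hC t c ht0 (ht0.trans hc.1.le)
  have h4 : |t - c| ≤ h := by
    rw [abs_le]; constructor <;> linarith [hc.1, hc.2]
  have h5 : |f c| < ε / 2 := by
    rw [hce, show t + h - t = h by ring, abs_div, abs_of_pos hh0, div_lt_iff₀ hh0]
    rw [abs_lt] at *
    constructor <;> linarith [h1.1, h1.2, h2.1, h2.2]
  have h6 : C * |t - c| ≤ C * h := mul_le_mul_of_nonneg_left h4 hC0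
  have h7 : |f t| ≤ |f t - f c| + |f c| := by
    have := abs_add_le (f t - f c) (f c)
    simpa using this
  linarith

lemma tendsto_of_deriv_nonpos {F f : ℝ → ℝ}
    (hF : ∀ t ∈ Ici (0:ℝ), HasDerivWithinAt F (f t) (Ici 0) t) (hf : ∀ t, 0 ≤ t → f t ≤ 0) :
    AntitoneOn F (Ici 0) := by
  refine antitoneOn_of_hasDerivWithinAt_nonpos (convex_Ici 0)
    (fun t ht => (hF t ht).continuousWithinAt) (f' := f) (fun t ht => ?_) (fun t ht => ?_)
  · exact (hF t (interior_subset ht)).mono interior_subset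
  · exact hf t (interior_subset ht)

lemma exists_lim {F : ℝ → ℝ} (hF : AntitoneOn F (Ici 0)) (h0 : ∀ t, 0 ≤ t → 0 ≤ F t) :
    ∃ l, Tendsto F atTop (𝓝 l) := by
  have hanti : Antitone (fun t => F (max t 0)) := fun s t hst =>
    hF (mem_Ici.2 (le_max_right _ _)) (mem_Ici.2 (le_max_right _ _)) (max_le_max_right 0 hst)
  have := tendsto_atTop_ciInf hanti ⟨0, by rintro _ ⟨t, rfl⟩; exact h0 _ (le_max_right _ _)⟩
  refine ⟨_, this.congr' ?_⟩
  filter_upwards [eventually_ge_atTop 0] with t ht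
  simp [ht]

/-- the (Bregman) potential of a line -/
noncomputable def pot (a x : ℝ) : ℝ := Real.cos a - Real.cos x - Real.sin a * (x - a)

lemma pot_pos {a x : ℝ} (ha : a ∈ Ioo (-(π / 2)) (π / 2)) (hx : x ∈ Ioo (-(π / 2)) (π / 2))
    (hne : x ≠ a) : 0 < pot a x := by
  have hd : ∀ y, HasDerivAt (fun y => pot a y) (Real.sin y - Real.sin a) y := by
    intro y
    have h1 : HasDerivAt (fun y => pot a y) (0 - (-Real.sin y) - Real.sin a * (1 - 0)) y := by
      unfold pot
      exact ((hasDerivAt_const _ _).sub (Real.hasDerivAt_cos y)).sub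
        (((hasDerivAt_id y).sub (hasDerivAt_const _ _)).const_mul _)
    convert h1 using 1; ring
  have h0 : pot a a = 0 := by simp [pot]
  have hcont : Continuous (fun y => pot a y) := by unfold pot; fun_prop
  rcases lt_or_gt_of_ne hne with h | h
  · obtain ⟨c, hc, hce⟩ := exists_hasDerivAt_eq_slope (fun y => pot a y) _ h hcont.continuousOn
      (fun y _ => hd y)
    have : Real.sin c < Real.sin a :=
      Real.sin_lt_sin_of_lt_of_le_pi_div_two (by linarith [hx.1, hc.1]) ha.2.le hc.2
    rw [eq_div_iff (by linarith), h0] at hce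
    nlinarith
  · obtain ⟨c, hc, hce⟩ := exists_hasDerivAt_eq_slope (fun y => pot a y) _ h hcont.continuousOn
      (fun y _ => hd y)
    have : Real.sin a < Real.sin c :=
      Real.sin_lt_sin_of_lt_of_le_pi_div_two ha.1.le (by linarith [hx.2, hc.2]) hc.1
    rw [eq_div_iff (by linarith), h0] at hce
    nlinarith

lemma pot_nonneg {a x : ℝ} (ha : a ∈ Ioo (-(π / 2)) (π / 2)) (hx : x ∈ Ioo (-(π / 2)) (π / 2)) :
    0 ≤ pot a x := by
  by_cases h : x = a
  · simp [h, pot]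
  · exact (pot_pos ha hx h).le

lemma sum_dite_sub {n : ℕ} (S : Finset (Fin n)) (f : {i // i ∈ S} → ℝ) :
    ∑ i, (if h : i ∈ S then f ⟨i, h⟩ else 0) = ∑ i, f i := by
  rw [← Finset.sum_subset (Finset.subset_univ S)
    (by intro x _ hx; simp [hx]), ← Finset.sum_coe_sort]
  exact Finset.sum_congr rfl fun i _ => by simp

lemma lap_form {V : Type*} [Fintype V] (G : SimpleGraph V) [DecidableRel G.Adj] (x : V → ℝ)
    (l : ℝ) :
    ∑ i, (x i - l) * (∑ j, if G.Adj i j then x j - x i else 0)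
      = - ((1 / 2) * ∑ i, ∑ j, if G.Adj i j then (x i - x j) * (x i - x j) else 0) := by
  have h1 : ∑ i, (x i - l) * (∑ j, if G.Adj i j then x j - x i else 0)
      = ∑ i, ∑ j, if G.Adj i j then (x i - l) * (x j - x i) else 0 := by
    simp only [Finset.mul_sum, mul_ite, mul_zero]
  have h2 : ∑ i, ∑ j, (if G.Adj i j then (x i - l) * (x j - x i) else 0)
      = ∑ i, ∑ j, if G.Adj i j then (x j - l) * (x i - x j) else 0 := by
    rw [Finset.sum_comm]
    simp only [G.adj_comm]
  have h3 : (∑ i, ∑ j, (if G.Adj i j then (x i - l) * (x j - x i) else 0))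
      + (∑ i, ∑ j, if G.Adj i j then (x j - l) * (x i - x j) else 0)
      = - ∑ i, ∑ j, if G.Adj i j then (x i - x j) * (x i - x j) else 0 := by
    simp only [← Finset.sum_add_distrib, ← Finset.sum_neg_distrib]
    refine Finset.sum_congr rfl fun i _ => Finset.sum_congr rfl fun j _ => ?_
    split_ifs <;> ring
  rw [h1]
  linarith

lemma hasDeriv_pot (a y : ℝ) : HasDerivAt (fun y => pot a y) (Real.sin y - Real.sin a) y := by
  have h1 : HasDerivAt (fun y => pot a y) (0 - (-Real.sin y) - Real.sin a * (1 - 0)) y := by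
    unfold pot
    exact ((hasDerivAt_const _ _).sub (Real.hasDerivAt_cos y)).sub
      (((hasDerivAt_id y).sub (hasDerivAt_const _ _)).const_mul _)
  convert h1 using 1; ring

lemma exists_r {M : ℕ} (a : Fin M → ℝ) (ha : ∀ k, a k ∈ Ioo (-(π / 2)) (π / 2)) :
    ∃ r > 0, ∀ k, ∀ x, |x - a k| ≤ r → x ∈ Ioo (-(π / 2)) (π / 2) := by
  have h : ∀ᶠ r in 𝓝[>] (0:ℝ), ∀ k, r < π / 2 - a k ∧ r < a k + π / 2 := by
    rw [eventually_all]
    intro k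
    have h1 : ∀ᶠ r in 𝓝 (0:ℝ), r < π / 2 - a k := eventually_lt_nhds (by linarith [(ha k).2])
    have h2 : ∀ᶠ r in 𝓝 (0:ℝ), r < a k + π / 2 := eventually_lt_nhds (by linarith [(ha k).1])
    exact (h1.and h2).filter_mono nhdsWithin_le_nhds
  obtain ⟨r, hr, hr0⟩ := (h.and self_mem_nhdsWithin).exists
  refine ⟨r, hr0, fun k x hx => ?_⟩
  rw [abs_le] at hx
  constructor <;> linarith [hx.1, hx.2, (hr k).1, (hr k).2]

lemma exists_c {M : ℕ} (f : Fin M → ℝ) (hf : ∀ k, 0 < f k) : ∃ c > 0, ∀ k, c < f k := by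
  have h : ∀ᶠ r in 𝓝[>] (0:ℝ), ∀ k, r < f k := by
    rw [eventually_all]
    intro k
    exact (eventually_lt_nhds (hf k)).filter_mono nhdsWithin_le_nhds
  obtain ⟨r, hr, hr0⟩ := (h.and self_mem_nhdsWithin).exists
  exact ⟨r, hr0, hr⟩

/-- trapping: a continuous curve starting in the box whose potential stays below the barrier
never leaves the box -/
lemma trap {M : ℕ} (Γ : Fin M → ℝ) (hΓ : ∀ k, 0 < Γ k)
    (a : Fin M → ℝ) (ha : ∀ k, a k ∈ Ioo (-(π / 2)) (π / 2)) :
    ∃ r > 0, ∃ c > 0, ∀ η : ℝ → Fin M → ℝ, ContinuousOn η (Ici 0) → ‖η 0 - a‖ < r →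
      (∀ t, 0 ≤ t → ∑ k, Γ k * pot (a k) (η t k) < c) →
      ∀ t, 0 ≤ t → ∀ k, 0 ≤ pot (a k) (η t k) := by
  obtain ⟨r, hr, hra⟩ := exists_r a ha
  have hp : ∀ k, 0 < pot (a k) (a k + r) := fun k =>
    pot_pos (ha k) (hra k _ (by simp [abs_of_pos hr])) (by linarith)
  have hm : ∀ k, 0 < pot (a k) (a k - r) := fun k =>
    pot_pos (ha k) (hra k _ (by simp [abs_of_pos hr])) (by linarith)
  obtain ⟨c, hc, hcf⟩ := exists_c (fun k => min (Γ k * pot (a k) (a k + r))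
    (Γ k * pot (a k) (a k - r))) (fun k => lt_min (mul_pos (hΓ k) (hp k)) (mul_pos (hΓ k) (hm k)))
  refine ⟨r, hr, c, hc, fun η hη h0 hV t ht k => ?_⟩
  have hin : ∀ t, ‖η t - a‖ ≤ r → ∀ k, 0 ≤ pot (a k) (η t k) := fun t h k =>
    pot_nonneg (ha k) (hra k _ ((norm_le_pi_norm (η t - a) k).trans h))
  refine hin t ?_ k
  by_contra! hlt
  have hcont : ContinuousOn (fun s => ‖η s - a‖) (Icc 0 t) :=
    ((hη.mono Icc_subset_Ici_self).sub continuousOn_const).norm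
  obtain ⟨s, hs, hse⟩ := intermediate_value_Icc ht hcont ⟨h0.le, hlt.le⟩
  simp only at hse
  have hj : ∃ j, r ≤ |η s j - a j| := by
    by_contra! hcon
    have := (pi_norm_lt_iff hr).2 (fun j => show ‖(η s - a) j‖ < r from hcon j)
    linarith
  obtain ⟨j, hj⟩ := hj
  have hj2 : |η s j - a j| = r :=
    le_antisymm ((norm_le_pi_norm (η s - a) j).trans hse.le) hj
  have h1 : Γ j * pot (a j) (η s j) ≤ ∑ k, Γ k * pot (a k) (η s k) :=
    Finset.single_le_sum (f := fun k => Γ k * pot (a k) (η s k))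
      (fun i _ => mul_nonneg (hΓ i).le (hin s hse.le i)) (Finset.mem_univ j)
  have h2 := hV s hs.1
  have h3 := lt_min_iff.1 (hcf j)
  rcases eq_or_eq_neg_of_abs_eq hj2 with h | h
  · rw [show η s j = a j + r by linarith] at h1
    linarith
  · rw [show η s j = a j - r by linarith] at h1
    linarith

lemma tendsto_diff {V : Type*} (G : SimpleGraph V) (hG : G.Connected) (x : ℝ → V → ℝ)
    (h : ∀ i j, G.Adj i j → Tendsto (fun t => x t i - x t j) atTop (𝓝 0)) (i j : V) :
    Tendsto (fun t => x t i - x t j) atTop (𝓝 0) := by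
  obtain ⟨w⟩ := hG.preconnected i j
  induction w with
  | nil => simp
  | cons hadj _ ih =>
    have := (h _ _ hadj).add ih
    simpa using this

lemma tendsto_of_mul_self {f D : ℝ → ℝ} {a : ℝ} (ha : 0 < a) (hD : Tendsto D atTop (𝓝 0))
    (h : ∀ t, a * (f t * f t) ≤ D t) : Tendsto f atTop (𝓝 0) := by
  have h1 : Tendsto (fun t => a⁻¹ * D t) atTop (𝓝 0) := by simpa using hD.const_mul a⁻¹
  have h2 : Tendsto (fun t => f t * f t) atTop (𝓝 0) := by
    refine squeeze_zero (fun t => mul_self_nonneg _) (fun t => ?_) h1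
    rw [inv_mul_eq_div, le_div_iff₀ ha, mul_comm]
    exact h t
  have h3 : Tendsto (fun t => Real.sqrt (f t * f t)) atTop (𝓝 0) := by
    simpa using h2.sqrt
  simp only [Real.sqrt_mul_self_eq_abs] at h3
  exact (tendsto_zero_iff_abs_tendsto_zero _).2 h3

lemma bd_of_sq {f : ℝ → ℝ} {a c C : ℝ} (ha : 0 < a)
    (h : ∀ t, 0 ≤ t → a * ((f t - c) * (f t - c)) ≤ C) : Bd f := by
  have : Bd (fun t => f t - c) := by
    refine ⟨C / a + 1, fun t ht => ?_⟩
    have h1 : (f t - c) * (f t - c) ≤ C / a := by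
      rw [le_div_iff₀ ha, mul_comm]; exact h t ht
    rw [abs_le]
    constructor <;> nlinarith
  simpa using this.add (Bd.const c)

end MG

/-- microgrid output agreement with optimal dispatch.  Under the
feasibility condition, the distributed controller
`ξ̇_i = Σ_{{i,j}∈E_c}(ξ_j − ξ_i) − q_i⁻¹ω_i`, `u_i = q_i⁻¹ξ_i` on the
generators and inverters `V_c = V_G ∪ V_I` locally achieves zero frequency
deviation `ω_i(t) → 0` at every bus, and `u_i(t) → ū_i = q_i⁻¹λ`, the optimal
steady-state power distribution. -/
theorem microgrid_zero_frequency_optimal_dispatch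
    {N M : ℕ} (hN : 0 < N) (hM : 0 < M)
    (B : Matrix (Fin N) (Fin M) ℝ)
    (hB1 : ∀ k, ∑ i, B i k = 0)
    (hBker : LinearMap.ker (Matrix.mulVecLin Bᵀ) =
      Submodule.span ℝ {(fun _ => (1 : ℝ) : Fin N → ℝ)})
    -- partition of the buses into generators, inverters and loads:
    (VG VI VL : Finset (Fin N))
    (hpart : VG ∪ VI ∪ VL = Finset.univ)
    (hGI : Disjoint VG VI) (hGL : Disjoint VG VL) (hIL : Disjoint VI VL)
    -- line coefficients, inertias, damping coefficients, loads:
    (Γ : Fin M → ℝ) (hΓ : ∀ k, 0 < Γ k)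
    (Miner : Fin N → ℝ) (hMiner : ∀ i ∈ VG, 0 < Miner i)
    (A : Fin N → ℝ) (hA : ∀ i, 0 < A i)
    (δ : Fin N → ℝ)
    -- cost weights on the controlled buses V_c = V_G ∪ V_I:
    (q : {i // i ∈ VG ∪ VI} → ℝ) (hq : ∀ i, 0 < q i)
    -- the optimal multiplier λ and optimal inputs ū_i = q_i⁻¹ λ:
    (lam : ℝ)
    (hlam : lam = -(∑ i : {i // i ∈ VG ∪ VI}, (q i)⁻¹)⁻¹ * ∑ i, δ i)
    -- the feasibility condition:
    (ηbar : Fin M → ℝ) (hηbar : ∀ k, ηbar k ∈ Ioo (-(π / 2)) (π / 2))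
    (hfeasG : ∀ i, ∀ hi : i ∈ VG,
      0 = -(∑ k, B i k * (Γ k * Real.sin (ηbar k)))
        + (q ⟨i, Finset.mem_union_left _ hi⟩)⁻¹ * lam + δ i)
    (hfeasI : ∀ i, ∀ hi : i ∈ VI,
      0 = -(∑ k, B i k * (Γ k * Real.sin (ηbar k)))
        + (q ⟨i, Finset.mem_union_right _ hi⟩)⁻¹ * lam + δ i)
    (hfeasL : ∀ i ∈ VL,
      0 = -(∑ k, B i k * (Γ k * Real.sin (ηbar k))) + δ i)
    -- the connected undirected communication graph on V_c:
    (Gc : SimpleGraph {i // i ∈ VG ∪ VI}) [DecidableRel Gc.Adj]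
    (hGc : Gc.Connected) :
    ∃ U : Set ((Fin N → ℝ) × (Fin M → ℝ) × ({i // i ∈ VG ∪ VI} → ℝ)),
      IsOpen U ∧ ((fun _ => 0), ηbar, fun _ => lam) ∈ U ∧
      ∀ (ω : ℝ → Fin N → ℝ) (η : ℝ → Fin M → ℝ)
        (ξ : ℝ → {i // i ∈ VG ∪ VI} → ℝ),
        -- (ω, η, ξ) is a closed-loop solution on [0, ∞):
        ContinuousOn (fun t => (ω t, η t, ξ t)) (Ici 0) →
        (∀ t ∈ Ici (0 : ℝ), ∀ k,
          HasDerivWithinAt (fun s => η s k) (∑ i, B i k * ω t i) (Ici 0) t) →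
        -- synchronous generators (with u_i = q_i⁻¹ ξ_i):
        (∀ t ∈ Ici (0 : ℝ), ∀ i, ∀ hi : i ∈ VG,
          HasDerivWithinAt (fun s => ω s i)
            ((Miner i)⁻¹ * (-(A i) * ω t i
              - (∑ k, B i k * (Γ k * Real.sin (η t k)))
              + (q ⟨i, Finset.mem_union_left _ hi⟩)⁻¹ *
                  ξ t ⟨i, Finset.mem_union_left _ hi⟩ + δ i)) (Ici 0) t) →
        -- droop-controlled inverters:
        (∀ t ∈ Ici (0 : ℝ), ∀ i, ∀ hi : i ∈ VI,
          0 = -(A i) * ω t i - (∑ k, B i k * (Γ k * Real.sin (η t k)))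
            + (q ⟨i, Finset.mem_union_right _ hi⟩)⁻¹ *
                ξ t ⟨i, Finset.mem_union_right _ hi⟩ + δ i) →
        -- frequency-dependent loads:
        (∀ t ∈ Ici (0 : ℝ), ∀ i ∈ VL,
          0 = -(A i) * ω t i - (∑ k, B i k * (Γ k * Real.sin (η t k))) + δ i) →
        -- the distributed controller:
        (∀ t ∈ Ici (0 : ℝ), ∀ i : {i // i ∈ VG ∪ VI},
          HasDerivWithinAt (fun s => ξ s i)
            ((∑ j, if Gc.Adj i j then ξ t j - ξ t i else 0)
              - (q i)⁻¹ * ω t i.1) (Ici 0) t) →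
        -- starting in U:
        (ω 0, η 0, ξ 0) ∈ U →
        -- zero frequency deviation and optimal dispatch in the limit:
        (∀ i, Tendsto (fun t => ω t i) atTop (𝓝 0)) ∧
        (∀ i : {i // i ∈ VG ∪ VI},
          Tendsto (fun t => (q i)⁻¹ * ξ t i) atTop (𝓝 ((q i)⁻¹ * lam))) := by
  classical
  obtain ⟨r, hr, c, hc, htrap⟩ := MG.trap Γ hΓ ηbar hηbar
  let W : ((Fin N → ℝ) × (Fin M → ℝ) × ({i // i ∈ VG ∪ VI} → ℝ)) → ℝ := fun p =>
    (∑ i ∈ VG, (Miner i / 2) * (p.1 i * p.1 i)) + (∑ k, Γ k * MG.pot (ηbar k) (p.2.1 k))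
      + ∑ i, (1 / 2) * ((p.2.2 i - lam) * (p.2.2 i - lam))
  have hWc : Continuous W := by
    simp only [W, MG.pot]
    fun_prop
  refine ⟨{p | ‖p.2.1 - ηbar‖ < r ∧ W p < c}, ?_, ?_, ?_⟩
  · exact (isOpen_lt (show Continuous fun p : (Fin N → ℝ) × (Fin M → ℝ) × ({i // i ∈ VG ∪ VI} → ℝ) =>
      ‖p.2.1 - ηbar‖ from by fun_prop) continuous_const).inter (isOpen_lt hWc continuous_const)
  · simp [W, MG.pot, hr, hc]
  intro ω η ξ hcont hη hωG hωI hωL hξ hU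
  obtain ⟨hU1, hU2⟩ := hU
  have hcη : ContinuousOn η (Ici 0) := hcont.snd.fst
  -- the inputs and the residuals
  let u : ℝ → Fin N → ℝ := fun t i =>
    if h : i ∈ VG ∪ VI then (q ⟨i, h⟩)⁻¹ * ξ t ⟨i, h⟩ else 0
  let e : ℝ → Fin N → ℝ := fun t i =>
    -(A i) * ω t i - (∑ k, B i k * (Γ k * Real.sin (η t k))) + u t i + δ i
  have hcase : ∀ i, i ∈ VG ∨ i ∈ VI ∨ i ∈ VL := by
    intro i
    have : i ∈ VG ∪ VI ∪ VL := by rw [hpart]; exact Finset.mem_univ i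
    simp only [Finset.mem_union] at this
    tauto
  have hLnot : ∀ i ∈ VL, i ∉ VG ∪ VI := by
    intro i hi h
    rcases Finset.mem_union.1 h with h | h
    · exact Finset.disjoint_left.1 hGL h hi
    · exact Finset.disjoint_left.1 hIL h hi
  have heG : ∀ t ∈ Ici (0:ℝ), ∀ i ∈ VG,
      HasDerivWithinAt (fun s => ω s i) ((Miner i)⁻¹ * e t i) (Ici 0) t := by
    intro t ht i hi
    have h := hωG t ht i hi
    have hu : u t i = (q ⟨i, Finset.mem_union_left _ hi⟩)⁻¹ *
        ξ t ⟨i, Finset.mem_union_left _ hi⟩ := dif_pos _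
    simp only [e, hu]
    exact h
  have he0 : ∀ t ∈ Ici (0:ℝ), ∀ i, i ∉ VG → e t i = 0 := by
    intro t ht i hi
    rcases hcase i with h | h | h
    · exact absurd h hi
    · have hu : u t i = (q ⟨i, Finset.mem_union_right _ h⟩)⁻¹ *
        ξ t ⟨i, Finset.mem_union_right _ h⟩ := dif_pos _
      simp only [e, hu]
      exact (hωI t ht i h).symm
    · have hu : u t i = 0 := dif_neg (hLnot i h)
      simp only [e, hu]
      linarith [hωL t ht i h]
  let v : ℝ → Fin N → ℝ := fun t i =>
    if h : i ∈ VG ∪ VI then (q ⟨i, h⟩)⁻¹ * (ξ t ⟨i, h⟩ - lam) else 0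
  have hev : ∀ t i, e t i = -(A i) * ω t i
      - (∑ k, B i k * (Γ k * (Real.sin (η t k) - Real.sin (ηbar k)))) + v t i := by
    intro t i
    simp only [mul_sub, Finset.sum_sub_distrib]
    rcases hcase i with h | h | h
    · have h' := Finset.mem_union_left VI h
      simp only [e, u, v, dif_pos h']
      linarith [hfeasG i h]
    · have h' := Finset.mem_union_right VG h
      simp only [e, u, v, dif_pos h']
      linarith [hfeasI i h]
    · simp only [e, u, v, dif_neg (hLnot i h)]
      linarith [hfeasL i h]
  -- the Lyapunov function and its derivative
  let V : ℝ → ℝ := fun t => W (ω t, η t, ξ t)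
  let D : ℝ → ℝ := fun t => (∑ i, A i * (ω t i * ω t i))
    + (1 / 2) * ∑ i, ∑ j, if Gc.Adj i j then (ξ t i - ξ t j) * (ξ t i - ξ t j) else 0
  have hVd : ∀ t ∈ Ici (0:ℝ), HasDerivWithinAt V (-(D t)) (Ici 0) t := by
    intro t ht
    have h1 : HasDerivWithinAt (fun s => ∑ i ∈ VG, (Miner i / 2) * (ω s i * ω s i))
        (∑ i ∈ VG, (Miner i / 2) * (((Miner i)⁻¹ * e t i) * ω t i
          + ω t i * ((Miner i)⁻¹ * e t i))) (Ici 0) t :=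
      HasDerivWithinAt.fun_sum fun i hi =>
        ((heG t ht i hi).mul (heG t ht i hi)).const_mul _
    have h2 : HasDerivWithinAt (fun s => ∑ k, Γ k * MG.pot (ηbar k) (η s k))
        (∑ k, Γ k * ((Real.sin (η t k) - Real.sin (ηbar k)) * (∑ i, B i k * ω t i)))
        (Ici 0) t :=
      HasDerivWithinAt.fun_sum fun k _ =>
        ((MG.hasDeriv_pot (ηbar k) (η t k)).comp_hasDerivWithinAt t (hη t ht k)).const_mul _
    have h3 : HasDerivWithinAt (fun s => ∑ i, (1 / 2 : ℝ) * ((ξ s i - lam) * (ξ s i - lam)))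
        (∑ i, (1 / 2 : ℝ) * ((((∑ j, if Gc.Adj i j then ξ t j - ξ t i else 0)
              - (q i)⁻¹ * ω t i.1) * (ξ t i - lam)) + (ξ t i - lam) *
              ((∑ j, if Gc.Adj i j then ξ t j - ξ t i else 0)
              - (q i)⁻¹ * ω t i.1))) (Ici 0) t :=
      HasDerivWithinAt.fun_sum fun i _ =>
        (((hξ t ht i).sub_const lam).mul ((hξ t ht i).sub_const lam)).const_mul _
    refine ((h1.add h2).add h3).congr_deriv ?_
    have e1 : (∑ i ∈ VG, (Miner i / 2) * (((Miner i)⁻¹ * e t i) * ω t i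
          + ω t i * ((Miner i)⁻¹ * e t i))) = ∑ i, ω t i * e t i := by
      rw [← Finset.sum_subset (Finset.subset_univ VG)
        (fun i _ hi => by rw [he0 t ht i hi, mul_zero])]
      refine Finset.sum_congr rfl fun i hi => ?_
      have := (hMiner i hi).ne'
      field_simp
      ring
    have e2 : (∑ k, Γ k * ((Real.sin (η t k) - Real.sin (ηbar k)) * (∑ i, B i k * ω t i)))
        = ∑ i, ω t i * ∑ k, B i k * (Γ k * (Real.sin (η t k) - Real.sin (ηbar k))) := by
      simp only [Finset.mul_sum]
      rw [Finset.sum_comm]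
      exact Finset.sum_congr rfl fun i _ => Finset.sum_congr rfl fun k _ => by ring
    have e3 : ∑ i, ω t i * v t i = ∑ i : {i // i ∈ VG ∪ VI},
        (ξ t i - lam) * ((q i)⁻¹ * ω t i.1) := by
      rw [← MG.sum_dite_sub (VG ∪ VI)
        (fun i : {i // i ∈ VG ∪ VI} => (ξ t i - lam) * ((q i)⁻¹ * ω t i.1))]
      refine Finset.sum_congr rfl fun i _ => ?_
      by_cases h : i ∈ VG ∪ VI
      · simp only [v, dif_pos h]; ring
      · simp only [v, dif_neg h]; ring
    have e4 := MG.lap_form Gc (ξ t) lam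
    have e5 : (∑ i, (1 / 2 : ℝ) * ((((∑ j, if Gc.Adj i j then ξ t j - ξ t i else 0)
              - (q i)⁻¹ * ω t i.1) * (ξ t i - lam)) + (ξ t i - lam) *
              ((∑ j, if Gc.Adj i j then ξ t j - ξ t i else 0)
              - (q i)⁻¹ * ω t i.1))) =
        (∑ i, (ξ t i - lam) * (∑ j, if Gc.Adj i j then ξ t j - ξ t i else 0))
          - ∑ i : {i // i ∈ VG ∪ VI}, (ξ t i - lam) * ((q i)⁻¹ * ω t i.1) := by
      rw [← Finset.sum_sub_distrib]
      exact Finset.sum_congr rfl fun i _ => by ring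
    have e6 : ∑ i, ω t i * e t i = - (∑ i, A i * (ω t i * ω t i))
        - (∑ i, ω t i * ∑ k, B i k * (Γ k * (Real.sin (η t k) - Real.sin (ηbar k))))
        + ∑ i, ω t i * v t i := by
      rw [← Finset.sum_neg_distrib, ← Finset.sum_sub_distrib, ← Finset.sum_add_distrib]
      refine Finset.sum_congr rfl fun i _ => ?_
      rw [hev]; ring
    rw [e1, e2, e5, e6, e3, e4]
    simp only [D]
    ring
  have hD1 : ∀ t i, 0 ≤ A i * (ω t i * ω t i) := fun t i =>
    mul_nonneg (hA i).le (mul_self_nonneg _)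
  have hD2 : ∀ t i j, 0 ≤ (if Gc.Adj i j then (ξ t i - ξ t j) * (ξ t i - ξ t j) else 0) := by
    intro t i j
    split_ifs
    · exact mul_self_nonneg _
    · exact le_rfl
  have hD2' : ∀ t, 0 ≤ ∑ i, ∑ j, (if Gc.Adj i j then (ξ t i - ξ t j) * (ξ t i - ξ t j) else 0) :=
    fun t => Finset.sum_nonneg fun i _ => Finset.sum_nonneg fun j _ => hD2 t i j
  have hD1' : ∀ t, 0 ≤ ∑ i, A i * (ω t i * ω t i) :=
    fun t => Finset.sum_nonneg fun i _ => hD1 t i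
  have hD0 : ∀ t, 0 ≤ D t := fun t => by
    have := hD1' t
    have := hD2' t
    simp only [D]
    positivity
  have hVanti : AntitoneOn V (Ici 0) :=
    MG.tendsto_of_deriv_nonpos hVd fun t _ => by linarith [hD0 t]
  have hVlt : ∀ t, 0 ≤ t → V t < c := fun t ht =>
    (hVanti (mem_Ici.2 le_rfl) (mem_Ici.2 ht) ht).trans_lt hU2
  have hK : ∀ t, ∀ i ∈ VG, 0 ≤ (Miner i / 2) * (ω t i * ω t i) := fun t i hi =>
    mul_nonneg (by linarith [hMiner i hi]) (mul_self_nonneg _)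
  have hK' : ∀ t, 0 ≤ ∑ i ∈ VG, (Miner i / 2) * (ω t i * ω t i) := fun t =>
    Finset.sum_nonneg (hK t)
  have hX : ∀ t, ∀ i, 0 ≤ (1 / 2) * ((ξ t i - lam) * (ξ t i - lam)) := fun t i =>
    mul_nonneg (by norm_num) (mul_self_nonneg _)
  have hX' : ∀ t, 0 ≤ ∑ i, (1 / 2) * ((ξ t i - lam) * (ξ t i - lam)) := fun t =>
    Finset.sum_nonneg fun i _ => hX t i
  have hVeq : ∀ t, V t = (∑ i ∈ VG, (Miner i / 2) * (ω t i * ω t i))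
    + (∑ k, Γ k * MG.pot (ηbar k) (η t k)) + ∑ i, (1 / 2) * ((ξ t i - lam) * (ξ t i - lam)) :=
    fun t => rfl
  have hpot := htrap η hcη hU1 (fun t ht => by
    linarith [hVlt t ht, hVeq t, hK' t, hX' t])
  have hP' : ∀ t, 0 ≤ t → 0 ≤ ∑ k, Γ k * MG.pot (ηbar k) (η t k) := fun t ht =>
    Finset.sum_nonneg fun k _ => mul_nonneg (hΓ k).le (hpot t ht k)
  have hV0 : ∀ t, 0 ≤ t → 0 ≤ V t := fun t ht => by
    linarith [hVeq t, hK' t, hX' t, hP' t ht]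
  -- boundedness
  have hξB : ∀ i, MG.Bd (fun t => ξ t i) := fun i =>
    MG.bd_of_sq (a := 1 / 2) (c := lam) (C := c) (by norm_num) fun t ht => by
      have := Finset.single_le_sum (f := fun i => (1 / 2) * ((ξ t i - lam) * (ξ t i - lam)))
        (fun i _ => hX t i) (Finset.mem_univ i)
      linarith [hVeq t, hK' t, hP' t ht, hVlt t ht]
  have huB : ∀ i, MG.Bd (fun t => u t i) := by
    intro i
    by_cases h : i ∈ VG ∪ VI
    · simp only [u, dif_pos h]
      exact (MG.Bd.const _).mul (hξB _)
    · simp only [u, dif_neg h]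
      exact MG.Bd.const 0
  have hsB : ∀ i, MG.Bd (fun t => ∑ k, B i k * (Γ k * Real.sin (η t k))) := fun i =>
    MG.Bd.sum _ fun k _ => (MG.Bd.const _).mul ((MG.Bd.const _).mul (MG.Bd.sin _))
  have hωsol : ∀ i, i ∉ VG → ∀ t, 0 ≤ t → ω t i = (A i)⁻¹ *
      (u t i + δ i - ∑ k, B i k * (Γ k * Real.sin (η t k))) := by
    intro i hi t ht
    have h := he0 t ht i hi
    have hAi := (hA i).ne'
    rw [eq_inv_mul_iff_mul_eq₀ hAi]
    simp only [e] at h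
    linarith
  have hωB : ∀ i, MG.Bd (fun t => ω t i) := by
    intro i
    by_cases hi : i ∈ VG
    · refine MG.bd_of_sq (a := Miner i / 2) (c := 0) (C := c) (by linarith [hMiner i hi])
        fun t ht => ?_
      have := Finset.single_le_sum (f := fun i => (Miner i / 2) * (ω t i * ω t i))
        (fun i hi => hK t i hi) hi
      simp only [sub_zero] at this ⊢
      linarith [hVeq t, hX' t, hP' t ht, hVlt t ht]
    · exact MG.Bd.congr ((MG.Bd.const _).mul (((huB i).add (MG.Bd.const _)).sub (hsB i)))
        (hωsol i hi)
  -- Lipschitz bounds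
  have hηL : ∀ k, MG.Lp (fun t => η t k) := fun k =>
    MG.Lp.of_deriv (fun t ht => hη t ht k)
      (MG.Bd.sum _ fun i _ => (MG.Bd.const _).mul (hωB i))
  have hξL : ∀ i, MG.BL (fun t => ξ t i) := fun i =>
    ⟨hξB i, MG.Lp.of_deriv (fun t ht => hξ t ht i)
      ((MG.Bd.sum _ fun j _ => by
        by_cases h : Gc.Adj i j
        · simp only [if_pos h]
          exact (hξB j).sub (hξB i)
        · simp only [if_neg h]
          exact MG.Bd.const 0).sub ((MG.Bd.const _).mul (hωB _)))⟩
  have huL : ∀ i, MG.BL (fun t => u t i) := by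
    intro i
    by_cases h : i ∈ VG ∪ VI
    · simp only [u, dif_pos h]
      exact (MG.BL.const _).mul (hξL _)
    · simp only [u, dif_neg h]
      exact MG.BL.const 0
  have hsL : ∀ i, MG.BL (fun t => ∑ k, B i k * (Γ k * Real.sin (η t k))) := fun i =>
    MG.BL.sum _ fun k _ => (MG.BL.const _).mul ((MG.BL.const _).mul (MG.BL.sin (hηL k)))
  have heB : ∀ i, MG.Bd (fun t => e t i) := fun i =>
    ((((MG.Bd.const _).mul (hωB i)).sub (hsB i)).add (huB i)).add (MG.Bd.const _)
  have hωL' : ∀ i, MG.BL (fun t => ω t i) := by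
    intro i
    by_cases hi : i ∈ VG
    · exact ⟨hωB i, MG.Lp.of_deriv (fun t ht => heG t ht i hi) ((MG.Bd.const _).mul (heB i))⟩
    · exact MG.BL.congr ((MG.BL.const _).mul (((huL i).add (MG.BL.const _)).sub (hsL i)))
        (hωsol i hi)
  have heL : ∀ i, MG.BL (fun t => e t i) := fun i =>
    ((((MG.BL.const _).mul (hωL' i)).sub (hsL i)).add (huL i)).add (MG.BL.const _)
  have hDL : MG.BL D := by
    refine (MG.BL.sum _ fun i _ => (MG.BL.const _).mul ((hωL' i).mul (hωL' i))).add
      ((MG.BL.const _).mul (MG.BL.sum _ fun i _ => MG.BL.sum _ fun j _ => ?_))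
    by_cases h : Gc.Adj i j
    · simp only [if_pos h]
      exact ((hξL i).sub (hξL j)).mul ((hξL i).sub (hξL j))
    · simp only [if_neg h]
      exact MG.BL.const 0
  obtain ⟨l, hl⟩ := MG.exists_lim hVanti hV0
  have hDlim : Tendsto D atTop (𝓝 0) := by
    have := MG.barbalat hVd hDL.neg.2 hl
    simpa using this.neg
  have hω0 : ∀ i, Tendsto (fun t => ω t i) atTop (𝓝 0) := by
    intro i
    refine MG.tendsto_of_mul_self (hA i) hDlim fun t => ?_
    have := Finset.single_le_sum (f := fun i => A i * (ω t i * ω t i))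
        (fun i _ => hD1 t i) (Finset.mem_univ i)
    have h2 := hD2' t
    simp only [D] at this ⊢
    linarith
  have hξadj : ∀ i j, Gc.Adj i j → Tendsto (fun t => ξ t i - ξ t j) atTop (𝓝 0) := by
    intro i j hij
    refine MG.tendsto_of_mul_self (a := 1 / 2) (by norm_num) hDlim fun t => ?_
    have h1 := Finset.single_le_sum
      (f := fun j => if Gc.Adj i j then (ξ t i - ξ t j) * (ξ t i - ξ t j) else 0)
      (fun j _ => hD2 t i j) (Finset.mem_univ j)
    have h2 := Finset.single_le_sum
      (f := fun i => ∑ j, if Gc.Adj i j then (ξ t i - ξ t j) * (ξ t i - ξ t j) else 0)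
      (fun i _ => Finset.sum_nonneg fun j _ => hD2 t i j) (Finset.mem_univ i)
    have h3 := hD1' t
    simp only [if_pos hij] at h1
    simp only [D] at h2 ⊢
    linarith
  have hξdiff := MG.tendsto_diff Gc hGc ξ hξadj
  -- total balance
  have hSd : ∀ t ∈ Ici (0:ℝ), HasDerivWithinAt (fun s => ∑ i ∈ VG, Miner i * ω s i)
      (∑ i, e t i) (Ici 0) t := by
    intro t ht
    have h1 : HasDerivWithinAt (fun s => ∑ i ∈ VG, Miner i * ω s i)
        (∑ i ∈ VG, Miner i * ((Miner i)⁻¹ * e t i)) (Ici 0) t :=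
      HasDerivWithinAt.fun_sum fun i hi => (heG t ht i hi).const_mul _
    refine h1.congr_deriv ?_
    rw [← Finset.sum_subset (Finset.subset_univ VG) (fun i _ hi => he0 t ht i hi)]
    refine Finset.sum_congr rfl fun i hi => ?_
    rw [mul_inv_cancel_left₀ (hMiner i hi).ne']
  have hS0 : Tendsto (fun s => ∑ i ∈ VG, Miner i * ω s i) atTop (𝓝 0) := by
    have := tendsto_finsetSum VG fun i (_ : i ∈ VG) => (hω0 i).const_mul (Miner i)
    simpa using this
  have hE : Tendsto (fun t => ∑ i, e t i) atTop (𝓝 0) :=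
    MG.barbalat hSd (MG.BL.sum _ fun i _ => heL i).2 hS0
  have hEeq : ∀ t, ∑ i, e t i = -(∑ i, A i * ω t i) + (∑ i, (q i)⁻¹ * ξ t i) + ∑ i, δ i := by
    intro t
    have h1 : ∑ i, ∑ k, B i k * (Γ k * Real.sin (η t k)) = 0 := by
      rw [Finset.sum_comm]
      refine Finset.sum_eq_zero fun k _ => ?_
      rw [← Finset.sum_mul, hB1, zero_mul]
    have h2 : ∑ i, u t i = ∑ i, (q i)⁻¹ * ξ t i :=
      MG.sum_dite_sub (VG ∪ VI) (fun i => (q i)⁻¹ * ξ t i)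
    simp only [e, Finset.sum_add_distrib, Finset.sum_sub_distrib, h1, h2, neg_mul,
      Finset.sum_neg_distrib]
    ring
  have hAω : Tendsto (fun t => ∑ i, A i * ω t i) atTop (𝓝 0) := by
    have := tendsto_finsetSum Finset.univ fun i (_ : i ∈ Finset.univ) => (hω0 i).const_mul (A i)
    simpa using this
  have hqξ : Tendsto (fun t => ∑ i, (q i)⁻¹ * ξ t i) atTop (𝓝 (-∑ i, δ i)) := by
    have h := (hE.add hAω).sub_const (∑ i, δ i)
    simp only [hEeq] at h
    refine (h.congr fun t => ?_).trans (by simp)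
    ring
  refine ⟨hω0, fun i => Tendsto.const_mul _ ?_⟩
  have hQ : 0 < ∑ j, (q j)⁻¹ :=
    Finset.sum_pos (fun j _ => inv_pos.2 (hq j)) ⟨i, Finset.mem_univ i⟩
  have hd : Tendsto (fun t => ∑ j, (q j)⁻¹ * (ξ t j - ξ t i)) atTop (𝓝 0) := by
    have := tendsto_finsetSum Finset.univ
      fun j (_ : j ∈ Finset.univ) => (hξdiff j i).const_mul (q j)⁻¹
    simpa using this
  have h := (hqξ.sub hd).const_mul (∑ j, (q j)⁻¹)⁻¹
  have hl2 : (∑ j, (q j)⁻¹)⁻¹ * (-(∑ i, δ i) - 0) = lam := by rw [hlam]; ring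
  rw [hl2] at h
  refine h.congr fun t => ?_
  have h9 : ∑ j, (q j)⁻¹ * (ξ t j - ξ t i)
      = ∑ j, (q j)⁻¹ * ξ t j - (∑ j, (q j)⁻¹) * ξ t i := by
    simp only [mul_sub, Finset.sum_sub_distrib, ← Finset.sum_mul]
  rw [h9, sub_sub_cancel, inv_mul_cancel_left₀ hQ.ne']
end

section
/- Microgrid output agreement with optimal dispatch under generator failures. Suppose a proper subset V_F ⊊ V_G of generators fails: for i ∈ V_F the input u_i is frozen at an unknown constant, which is absorbed into δ_i, so these nodes obey M_i ω̇_i = −A_i ω_i − (BΓ sin(η))_i + δ_i, while all other equations are unchanged. Let q_i > 0 for i ∈ V_c := (V_G ∖ V_F) ∪ V_I, set λ = −(Σ_{i∈V_c} q_i^{-1})^{-1} Σ_{i=1}^N δ_i and ū_i = q_i^{-1}λ for i ∈ V_c. Assume there exists η̄ ∈ (−π/2, π/2)^M such that 0 = −(BΓ sin(η̄))_i + ū_i + δ_i for every i ∈ V_c and 0 = −(BΓ sin(η̄))_i + δ_i for every i ∈ V_F ∪ V_L. Then the distributed controller ξ̇_i = Σ_{\{i,j\}∈E_c}(ξ_j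 − ξ_i) − q_i^{-1}ω_i, u_i = q_i^{-1}ξ_i (i ∈ V_c), over a connected undirected communication graph G_c on V_c, achieves, for all closed-loop solutions starting in a suitable open set of initial conditions around (ω = 0, η = η̄, ξ = (λ,…,λ)): ω_i(t) → 0 as t → ∞ for every node i, and u_i(t) → ū_i as t → ∞ for every i ∈ V_c. -/
open Matrix Filter Topology Set Real

/-- bounded and Lipschitz on `[0, ∞)` -/
def MgNice (f : ℝ → ℝ) : Prop :=
  (∃ C, ∀ t, 0 ≤ t → |f t| ≤ C) ∧ (∃ K, ∀ s, 0 ≤ s → ∀ t, 0 ≤ t → |f s - f t| ≤ K * |s - t|)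

theorem MgNice.const (c : ℝ) : MgNice (fun _ => c) :=
  ⟨⟨|c|, fun _ _ => le_rfl⟩, ⟨0, fun s _ t _ => by simp⟩⟩

theorem MgNice.add {f g : ℝ → ℝ} (hf : MgNice f) (hg : MgNice g) :
    MgNice (fun t => f t + g t) := by
  obtain ⟨⟨C, hC⟩, K, hK⟩ := hf
  obtain ⟨⟨D, hD⟩, J, hJ⟩ := hg
  refine ⟨⟨C + D, fun t ht => (abs_add_le _ _).trans (add_le_add (hC t ht) (hD t ht))⟩, K + J, ?_⟩
  intro s hs t ht
  have : f s + g s - (f t + g t) = (f s - f t) + (g s - g t) := by ring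
  rw [this, add_mul]
  exact (abs_add_le _ _).trans (add_le_add (hK s hs t ht) (hJ s hs t ht))

theorem MgNice.mul {f g : ℝ → ℝ} (hf : MgNice f) (hg : MgNice g) :
    MgNice (fun t => f t * g t) := by
  obtain ⟨⟨C, hC⟩, K, hK⟩ := hf
  obtain ⟨⟨D, hD⟩, J, hJ⟩ := hg
  have hC0 : 0 ≤ C := (abs_nonneg _).trans (hC 0 le_rfl)
  have hD0 : 0 ≤ D := (abs_nonneg _).trans (hD 0 le_rfl)
  refine ⟨⟨C * D, fun t ht => ?_⟩, C * J + K * D, ?_⟩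
  · rw [abs_mul]
    exact mul_le_mul (hC t ht) (hD t ht) (abs_nonneg _) hC0
  intro s hs t ht
  have : f s * g s - (f t * g t) = f s * (g s - g t) + (f s - f t) * g t := by ring
  rw [this]
  refine (abs_add_le _ _).trans ?_
  rw [abs_mul, abs_mul]
  have h1 : |f s| * |g s - g t| ≤ C * (J * |s - t|) :=
    mul_le_mul (hC s hs) (hJ s hs t ht) (abs_nonneg _) hC0
  have h2 : |f s - f t| * |g t| ≤ (K * |s - t|) * D :=
    mul_le_mul (hK s hs t ht) (hD t ht) (abs_nonneg _) ((abs_nonneg _).trans (hK s hs t ht))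
  linarith

theorem MgNice.neg {f : ℝ → ℝ} (hf : MgNice f) : MgNice (fun t => -f t) := by
  have := (MgNice.const (-1)).mul hf
  simpa using this

theorem MgNice.sub {f g : ℝ → ℝ} (hf : MgNice f) (hg : MgNice g) :
    MgNice (fun t => f t - g t) := by
  have := hf.add hg.neg
  simpa [sub_eq_add_neg] using this

theorem MgNice.sum {ι : Type*} (s : Finset ι) {f : ι → ℝ → ℝ} (hf : ∀ i ∈ s, MgNice (f i)) :
    MgNice (fun t => ∑ i ∈ s, f i t) := by
  classical
  induction s using Finset.induction_on with
  | empty => simpa using MgNice.const 0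
  | insert a s ha ih =>
    simp only [Finset.sum_insert ha]
    exact (hf a (by simp)).add (ih fun i hi => hf i (by simp [hi]))

theorem MgNice.sin {f : ℝ → ℝ} (hf : MgNice f) : MgNice (fun t => Real.sin (f t)) := by
  obtain ⟨-, K, hK⟩ := hf
  refine ⟨⟨1, fun t _ => Real.abs_sin_le_one _⟩, K, fun s hs t ht => ?_⟩
  exact (Real.abs_sin_sub_sin_le _ _).trans (hK s hs t ht)

theorem MgNice.congr {f g : ℝ → ℝ} (hf : MgNice f) (h : ∀ t, 0 ≤ t → g t = f t) : MgNice g := by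
  obtain ⟨⟨C, hC⟩, K, hK⟩ := hf
  exact ⟨⟨C, fun t ht => by rw [h t ht]; exact hC t ht⟩, K,
    fun s hs t ht => by rw [h t ht, h s hs]; exact hK s hs t ht⟩

def MgBdd (f : ℝ → ℝ) : Prop := ∃ C, ∀ t, 0 ≤ t → |f t| ≤ C

theorem MgBdd.const (c : ℝ) : MgBdd (fun _ => c) := ⟨|c|, fun _ _ => le_rfl⟩

theorem MgBdd.add {f g : ℝ → ℝ} (hf : MgBdd f) (hg : MgBdd g) :
    MgBdd (fun t => f t + g t) := by
  obtain ⟨C, hC⟩ := hf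
  obtain ⟨D, hD⟩ := hg
  exact ⟨C + D, fun t ht => (abs_add_le _ _).trans (add_le_add (hC t ht) (hD t ht))⟩

theorem MgBdd.mul {f g : ℝ → ℝ} (hf : MgBdd f) (hg : MgBdd g) :
    MgBdd (fun t => f t * g t) := by
  obtain ⟨C, hC⟩ := hf
  obtain ⟨D, hD⟩ := hg
  have hC0 : 0 ≤ C := (abs_nonneg _).trans (hC 0 le_rfl)
  refine ⟨C * D, fun t ht => ?_⟩
  rw [abs_mul]
  exact mul_le_mul (hC t ht) (hD t ht) (abs_nonneg _) hC0

theorem MgBdd.neg {f : ℝ → ℝ} (hf : MgBdd f) : MgBdd (fun t => -f t) := by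
  have := (MgBdd.const (-1)).mul hf
  simpa using this

theorem MgBdd.sub {f g : ℝ → ℝ} (hf : MgBdd f) (hg : MgBdd g) :
    MgBdd (fun t => f t - g t) := by
  have := hf.add hg.neg
  simpa [sub_eq_add_neg] using this

theorem MgBdd.sum {ι : Type*} (s : Finset ι) {f : ι → ℝ → ℝ} (hf : ∀ i ∈ s, MgBdd (f i)) :
    MgBdd (fun t => ∑ i ∈ s, f i t) := by
  classical
  induction s using Finset.induction_on with
  | empty => simpa using MgBdd.const 0
  | insert a s ha ih =>
    simp only [Finset.sum_insert ha]
    exact (hf a (by simp)).add (ih fun i hi => hf i (by simp [hi]))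

theorem MgBdd.sin (f : ℝ → ℝ) : MgBdd (fun t => Real.sin (f t)) :=
  ⟨1, fun _ _ => Real.abs_sin_le_one _⟩

theorem MgBdd.congr {f g : ℝ → ℝ} (hf : MgBdd f) (h : ∀ t, 0 ≤ t → g t = f t) : MgBdd g := by
  obtain ⟨C, hC⟩ := hf
  exact ⟨C, fun t ht => by rw [h t ht]; exact hC t ht⟩

theorem MgNice.of_deriv {f g : ℝ → ℝ} (hf : MgBdd f) (hg : MgBdd g)
    (h : ∀ t, 0 ≤ t → HasDerivWithinAt f (g t) (Ici 0) t) : MgNice f := by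
  obtain ⟨C, hC⟩ := hg
  refine ⟨hf, C, fun s hs t ht => ?_⟩
  have := (convex_Ici (0:ℝ)).norm_image_sub_le_of_norm_hasDerivWithin_le (f := f) (f' := g)
    (C := C) (fun x hx => h x hx) (fun x hx => hC x hx) (show t ∈ Ici 0 from ht)
    (show s ∈ Ici 0 from hs)
  simpa using this

theorem mg_barbalat {f g : ℝ → ℝ} {l : ℝ} (hg : MgNice g)
    (h : ∀ t, 0 ≤ t → HasDerivWithinAt f (g t) (Ici 0) t)
    (hl : Tendsto f atTop (𝓝 l)) : Tendsto g atTop (𝓝 0) := by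
  obtain ⟨-, K, hK⟩ := hg
  have hK0 : 0 ≤ K := by
    have := (abs_nonneg _).trans (hK 0 le_rfl 1 zero_le_one)
    simpa using this
  rw [Metric.tendsto_atTop]
  intro ε hε
  set d : ℝ := ε / (2 * (K + 1)) with hd
  have hd0 : 0 < d := by positivity
  have hKd : K * d ≤ ε / 2 := by
    rw [hd]
    have : K * (ε / (2 * (K + 1))) = (ε / 2) * (K / (K + 1)) := by field_simp
    rw [this]
    have : K / (K + 1) ≤ 1 := by rw [div_le_one (by positivity)]; linarith
    nlinarith
  have hshift : Tendsto (fun t => f (t + d) - f t) atTop (𝓝 0) := by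
    have := (hl.comp (tendsto_atTop_add_const_right atTop d tendsto_id)).sub hl
    simpa using this
  rw [Metric.tendsto_atTop] at hshift
  obtain ⟨T, hT⟩ := hshift (ε / 2 * d) (by positivity)
  refine ⟨max T 0, fun t ht => ?_⟩
  have ht0 : 0 ≤ t := (le_max_right _ _).trans ht
  have htT : T ≤ t := (le_max_left _ _).trans ht
  have h1 := hT t htT
  obtain ⟨c, hc, hcs⟩ := exists_hasDerivAt_eq_slope f g (show t < t + d by linarith)
    (fun x hx => ((h x (ht0.trans hx.1)).continuousWithinAt).mono
      (fun y hy => ht0.trans hy.1))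
    (fun x hx => (h x (ht0.trans hx.1.le)).hasDerivAt (Ici_mem_nhds (ht0.trans_lt hx.1)))
  have h2 : f (t + d) - f t = g c * d := by
    rw [hcs, add_sub_cancel_left, div_mul_cancel₀ _ hd0.ne']
  rw [Real.dist_eq, sub_zero, h2, abs_mul, abs_of_pos hd0] at h1
  have h3 : |g c| < ε / 2 := lt_of_mul_lt_mul_right h1 hd0.le
  have h4 := hK t ht0 c (ht0.trans hc.1.le)
  have h5 : |t - c| ≤ d := by rw [abs_le]; constructor <;> linarith [hc.1, hc.2]
  have h6 : |g t| ≤ |g t - g c| + |g c| := by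
    have := abs_add_le (g t - g c) (g c); simpa using this
  rw [Real.dist_eq, sub_zero]
  have h7 : K * |t - c| ≤ K * d := mul_le_mul_of_nonneg_left h5 hK0
  linarith

theorem mg_phi_pos {a x : ℝ} (ha : a ∈ Ioo (-(π / 2)) (π / 2)) (hx : x ∈ Ioo (-(π / 2)) (π / 2))
    (hne : x ≠ a) : 0 < Real.cos a - Real.cos x - Real.sin a * (x - a) := by
  rcases lt_or_gt_of_ne hne with h | h
  · obtain ⟨c, hc, hcs⟩ := exists_hasDerivAt_eq_slope Real.cos (fun x => -Real.sin x) h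
      Real.continuous_cos.continuousOn (fun x _ => Real.hasDerivAt_cos x)
    have h2 : Real.cos a - Real.cos x = -Real.sin c * (a - x) := by
      rw [hcs]; field_simp [sub_ne_zero.2 h.ne']
    have h3 : Real.sin c < Real.sin a :=
      Real.sin_lt_sin_of_lt_of_le_pi_div_two (by linarith [hx.1, hc.1]) ha.2.le hc.2
    rw [h2]; nlinarith
  · obtain ⟨c, hc, hcs⟩ := exists_hasDerivAt_eq_slope Real.cos (fun x => -Real.sin x) h
      Real.continuous_cos.continuousOn (fun x _ => Real.hasDerivAt_cos x)
    have h2 : Real.cos x - Real.cos a = -Real.sin c * (x - a) := by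
      rw [hcs]; field_simp [sub_ne_zero.2 h.ne']
    have h3 : Real.sin a < Real.sin c :=
      Real.sin_lt_sin_of_lt_of_le_pi_div_two ha.1.le (by linarith [hx.2, hc.2]) hc.1
    nlinarith

/-- extension by zero -/
noncomputable def mgExt {N : ℕ} (Vc : Finset (Fin N)) (v : {i // i ∈ Vc} → ℝ) (i : Fin N) : ℝ :=
  if h : i ∈ Vc then v ⟨i, h⟩ else 0

theorem mgExt_sum {N : ℕ} (Vc : Finset (Fin N)) (v : {i // i ∈ Vc} → ℝ) (f : Fin N → ℝ) :
    ∑ i, f i * mgExt Vc v i = ∑ j : {i // i ∈ Vc}, f j.1 * v j := by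
  classical
  have h1 : ∑ i, f i * mgExt Vc v i = ∑ i ∈ Vc, f i * mgExt Vc v i := by
    symm
    apply Finset.sum_subset (Finset.subset_univ _)
    intro i _ hi
    simp [mgExt, hi]
  rw [h1, ← Finset.sum_coe_sort Vc]
  apply Finset.sum_congr rfl
  intro j _
  simp [mgExt]

theorem mg_lap {ι : Type*} [Fintype ι] (G : SimpleGraph ι) [DecidableRel G.Adj] (x : ι → ℝ)
    (c : ℝ) :
    ∑ i, (x i - c) * (∑ j, if G.Adj i j then x j - x i else 0) =
      -(1 / 2) * ∑ i, ∑ j, if G.Adj i j then (x i - x j) ^ 2 else 0 := by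
  have h1 : ∑ i, (x i - c) * (∑ j, if G.Adj i j then x j - x i else 0) =
      ∑ i, ∑ j, if G.Adj i j then (x i - c) * (x j - x i) else 0 := by
    simp only [Finset.mul_sum, mul_ite, mul_zero]
  have h2 : ∑ i, ∑ j, (if G.Adj i j then (x i - c) * (x j - x i) else 0) =
      ∑ i, ∑ j, if G.Adj i j then (x j - c) * (x i - x j) else 0 := by
    rw [Finset.sum_comm]
    simp only [G.adj_comm]
  have h3 : ∑ i, ∑ j, (if G.Adj i j then (x i - c) * (x j - x i) else 0) +
      ∑ i, ∑ j, (if G.Adj i j then (x j - c) * (x i - x j) else 0) =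
      - ∑ i, ∑ j, if G.Adj i j then (x i - x j) ^ 2 else 0 := by
    simp only [← Finset.sum_add_distrib, ← Finset.sum_neg_distrib]
    refine Finset.sum_congr rfl fun i _ => Finset.sum_congr rfl fun j _ => ?_
    split_ifs <;> ring
  rw [h1]; linarith

/-- the Lyapunov function -/
noncomputable def mgV {N M : ℕ} {ι : Type*} [Fintype ι] (VG : Finset (Fin N)) (Γ : Fin M → ℝ)
    (Miner : Fin N → ℝ) (lam : ℝ) (ηbar : Fin M → ℝ)
    (ω : Fin N → ℝ) (η : Fin M → ℝ) (ξ : ι → ℝ) : ℝ :=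
  ∑ i ∈ VG, 1 / 2 * Miner i * ω i ^ 2
    + ∑ k, Γ k * (Real.cos (ηbar k) - Real.cos (η k) - Real.sin (ηbar k) * (η k - ηbar k))
    + ∑ j, 1 / 2 * (ξ j - lam) ^ 2

/-- the dissipation -/
noncomputable def mgW {N : ℕ} {ι : Type*} [Fintype ι] (A : Fin N → ℝ)
    (G : SimpleGraph ι) [DecidableRel G.Adj] (ω : Fin N → ℝ) (ξ : ι → ℝ) : ℝ :=
  ∑ i, A i * ω i ^ 2 + 1 / 2 * ∑ i, ∑ j, if G.Adj i j then (ξ i - ξ j) ^ 2 else 0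

/-- right-hand side of the swing equation -/
noncomputable def mgF {N M : ℕ} (B : Matrix (Fin N) (Fin M) ℝ) (Γ : Fin M → ℝ)
    (A δ : Fin N → ℝ) (Vc : Finset (Fin N)) (q : {i // i ∈ Vc} → ℝ)
    (ω : Fin N → ℝ) (η : Fin M → ℝ) (ξ : {i // i ∈ Vc} → ℝ) (i : Fin N) : ℝ :=
  -(A i) * ω i - (∑ k, B i k * (Γ k * Real.sin (η k))) + mgExt Vc (fun j => (q j)⁻¹ * ξ j) i + δ i

/-- the algebraic dissipation identity -/
theorem mg_dissipation {N M : ℕ} (B : Matrix (Fin N) (Fin M) ℝ) (VG Vc : Finset (Fin N))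
    (Γ : Fin M → ℝ) (A δ : Fin N → ℝ) (q : {i // i ∈ Vc} → ℝ) (lam : ℝ) (ηbar : Fin M → ℝ)
    (hfeas : ∀ i, mgF B Γ A δ Vc q (fun _ => 0) ηbar (fun _ => lam) i = 0)
    (Gc : SimpleGraph {i // i ∈ Vc}) [DecidableRel Gc.Adj]
    (ω : Fin N → ℝ) (η : Fin M → ℝ) (ξ : {i // i ∈ Vc} → ℝ)
    (halg : ∀ i, i ∉ VG → mgF B Γ A δ Vc q ω η ξ i = 0) :
    ∑ i ∈ VG, ω i * mgF B Γ A δ Vc q ω η ξ i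
      + ∑ k, Γ k * (Real.sin (η k) - Real.sin (ηbar k)) * (∑ i, B i k * ω i)
      + ∑ j, (ξ j - lam) * ((∑ l, if Gc.Adj j l then ξ l - ξ j else 0) - (q j)⁻¹ * ω j.1)
    = - mgW A Gc ω ξ := by
  have h1 : ∑ i ∈ VG, ω i * mgF B Γ A δ Vc q ω η ξ i = ∑ i, ω i * mgF B Γ A δ Vc q ω η ξ i := by
    apply Finset.sum_subset (Finset.subset_univ _)
    intro i _ hi
    rw [halg i hi, mul_zero]
  have h2 : ∀ i, ω i * mgF B Γ A δ Vc q ω η ξ i =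
      -(A i * ω i ^ 2) - ∑ k, Γ k * (Real.sin (η k) - Real.sin (ηbar k)) * (B i k * ω i)
        + ω i * mgExt Vc (fun j => (q j)⁻¹ * (ξ j - lam)) i := by
    intro i
    have h3 : mgF B Γ A δ Vc q ω η ξ i = mgF B Γ A δ Vc q ω η ξ i -
      mgF B Γ A δ Vc q (fun _ => 0) ηbar (fun _ => lam) i := by rw [hfeas i, sub_zero]
    have h4 : mgExt Vc (fun j => (q j)⁻¹ * (ξ j - lam)) i =
      mgExt Vc (fun j => (q j)⁻¹ * ξ j) i - mgExt Vc (fun j => (q j)⁻¹ * lam) i := by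
      unfold mgExt
      split_ifs <;> ring
    have h5 : ∑ k, Γ k * (Real.sin (η k) - Real.sin (ηbar k)) * (B i k * ω i) =
      ω i * (∑ k, B i k * (Γ k * Real.sin (η k)) - ∑ k, B i k * (Γ k * Real.sin (ηbar k))) := by
      rw [← Finset.sum_sub_distrib, Finset.mul_sum]
      exact Finset.sum_congr rfl fun k _ => by ring
    rw [h3, h4, h5]
    unfold mgF
    ring
  have h6 : ∑ k, Γ k * (Real.sin (η k) - Real.sin (ηbar k)) * (∑ i, B i k * ω i) =
      ∑ i, ∑ k, Γ k * (Real.sin (η k) - Real.sin (ηbar k)) * (B i k * ω i) := by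
    rw [Finset.sum_comm]
    simp only [Finset.mul_sum]
  have h7 : ∑ j, (ξ j - lam) * ((∑ l, if Gc.Adj j l then ξ l - ξ j else 0) - (q j)⁻¹ * ω j.1) =
      ∑ j, (ξ j - lam) * (∑ l, if Gc.Adj j l then ξ l - ξ j else 0)
      - ∑ j : {i // i ∈ Vc}, ω j.1 * ((q j)⁻¹ * (ξ j - lam)) := by
    rw [← Finset.sum_sub_distrib]
    exact Finset.sum_congr rfl fun k _ => by ring
  rw [h1, h6, h7, mg_lap, Finset.sum_congr rfl (fun i _ => h2 i), Finset.sum_add_distrib,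
    Finset.sum_sub_distrib, mgExt_sum, Finset.sum_neg_distrib]
  unfold mgW
  ring

theorem mg_core {N M : ℕ} (hM : 0 < M)
    (B : Matrix (Fin N) (Fin M) ℝ) (hB1 : ∀ k, ∑ i, B i k = 0)
    (VG Vc : Finset (Fin N))
    (Γ : Fin M → ℝ) (hΓ : ∀ k, 0 < Γ k)
    (Miner : Fin N → ℝ) (hMiner : ∀ i ∈ VG, 0 < Miner i)
    (A : Fin N → ℝ) (hA : ∀ i, 0 < A i) (δ : Fin N → ℝ)
    (q : {i // i ∈ Vc} → ℝ) (hq : ∀ i, 0 < q i) (lam : ℝ)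
    (ηbar : Fin M → ℝ) (hηbar : ∀ k, ηbar k ∈ Ioo (-(π / 2)) (π / 2))
    (hfeas : ∀ i, mgF B Γ A δ Vc q (fun _ => 0) ηbar (fun _ => lam) i = 0)
    (Gc : SimpleGraph {i // i ∈ Vc}) [DecidableRel Gc.Adj] (hGc : Gc.Connected) :
    ∃ U : Set ((Fin N → ℝ) × (Fin M → ℝ) × ({i // i ∈ Vc} → ℝ)),
      IsOpen U ∧ ((fun _ => 0), ηbar, fun _ => lam) ∈ U ∧
      ∀ (ω : ℝ → Fin N → ℝ) (η : ℝ → Fin M → ℝ) (ξ : ℝ → {i // i ∈ Vc} → ℝ),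
        (∀ t, 0 ≤ t → ∀ k,
          HasDerivWithinAt (fun s => η s k) (∑ i, B i k * ω t i) (Ici 0) t) →
        (∀ t, 0 ≤ t → ∀ i ∈ VG,
          HasDerivWithinAt (fun s => ω s i)
            ((Miner i)⁻¹ * mgF B Γ A δ Vc q (ω t) (η t) (ξ t) i) (Ici 0) t) →
        (∀ t, 0 ≤ t → ∀ i, i ∉ VG → mgF B Γ A δ Vc q (ω t) (η t) (ξ t) i = 0) →
        (∀ t, 0 ≤ t → ∀ j : {i // i ∈ Vc},
          HasDerivWithinAt (fun s => ξ s j)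
            ((∑ l, if Gc.Adj j l then ξ t l - ξ t j else 0)
              - (q j)⁻¹ * ω t j.1) (Ici 0) t) →
        (ω 0, η 0, ξ 0) ∈ U →
        (∀ i, Tendsto (fun t => ω t i) atTop (𝓝 0)) ∧
        (∀ j, Tendsto (fun t => ξ t j) atTop (𝓝 lam)) := by
  classical
  have : Nonempty (Fin M) := ⟨⟨0, hM⟩⟩
  have := hGc.nonempty
  -- the radius
  obtain ⟨r, hr0, hr⟩ : ∃ r : ℝ, 0 < r ∧ ∀ k x, |x - ηbar k| ≤ r → x ∈ Ioo (-(π / 2)) (π / 2) := by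
    obtain ⟨k0, hk0⟩ := Finite.exists_min
      (fun k => min (π / 2 - ηbar k) (π / 2 + ηbar k) / 2)
    have hpos : ∀ k, 0 < min (π / 2 - ηbar k) (π / 2 + ηbar k) := fun k =>
      lt_min (by linarith [(hηbar k).2]) (by linarith [(hηbar k).1])
    refine ⟨_, half_pos (hpos k0), fun k x hx => ?_⟩
    have h1 := hx.trans (hk0 k)
    have h2 := hpos k
    have h3 := min_le_left (π / 2 - ηbar k) (π / 2 + ηbar k)
    have h4 := min_le_right (π / 2 - ηbar k) (π / 2 + ηbar k)
    rw [abs_le] at h1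
    constructor <;> linarith [h1.1, h1.2]
  set φ : Fin M → ℝ → ℝ := fun k x =>
    Γ k * (Real.cos (ηbar k) - Real.cos x - Real.sin (ηbar k) * (x - ηbar k)) with hφ
  have hφnn : ∀ k x, |x - ηbar k| ≤ r → 0 ≤ φ k x := by
    intro k x hx
    by_cases h : x = ηbar k
    · simp [hφ, h]
    · exact (mul_pos (hΓ k) (mg_phi_pos (hηbar k) (hr k x hx) h)).le
  obtain ⟨m, hm0, hm⟩ : ∃ m : ℝ, 0 < m ∧ ∀ k x, |x - ηbar k| = r → m ≤ φ k x := by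
    obtain ⟨k0, hk0⟩ := Finite.exists_min
      (fun k => min (φ k (ηbar k + r)) (φ k (ηbar k - r)))
    refine ⟨_, lt_min (a := 0) (b := φ k0 (ηbar k0 + r)) (c := φ k0 (ηbar k0 - r)) ?_ ?_, ?_⟩
    · exact mul_pos (hΓ k0) (mg_phi_pos (hηbar k0)
        (hr k0 _ (by simp [abs_of_pos hr0])) (by linarith))
    · exact mul_pos (hΓ k0) (mg_phi_pos (hηbar k0)
        (hr k0 _ (by simp [abs_of_pos hr0])) (by linarith))
    · intro k x hx
      refine (hk0 k).trans ?_
      rcases (abs_eq hr0.le).1 hx with h | h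
      · have : x = ηbar k + r := by linarith
        rw [this]; exact min_le_left _ _
      · have : x = ηbar k - r := by linarith
        rw [this]; exact min_le_right _ _
  refine ⟨{p | mgV VG Γ Miner lam ηbar p.1 p.2.1 p.2.2 < m} ∩ {p | ‖p.2.1 - ηbar‖ < r}, ?_, ?_, ?_⟩
  · apply IsOpen.inter
    · apply isOpen_lt _ continuous_const
      unfold mgV
      fun_prop
    · apply isOpen_lt _ continuous_const
      fun_prop
  · constructor
    · simp [mgV, hm0]
    · simp [hr0]
  intro ω η ξ hη hω halg hξ h0
  obtain ⟨hV0, hη0⟩ := h0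
  simp only [mem_ofPred_eq] at hV0 hη0
  -- derivative of V
  have hVd : ∀ t, 0 ≤ t → HasDerivWithinAt (fun s => mgV VG Γ Miner lam ηbar (ω s) (η s) (ξ s))
      (- mgW A Gc (ω t) (ξ t)) (Ici 0) t := by
    intro t ht
    rw [← mg_dissipation B VG Vc Γ A δ q lam ηbar hfeas Gc (ω t) (η t) (ξ t) (halg t ht)]
    unfold mgV
    refine HasDerivWithinAt.fun_add (HasDerivWithinAt.fun_add ?_ ?_) ?_
    · apply HasDerivWithinAt.fun_sum
      intro i hi
      refine (((hω t ht i hi).fun_pow 2).const_mul (1 / 2 * Miner i)).congr_deriv ?_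
      have := (hMiner i hi).ne'
      simp only [Nat.cast_ofNat, Nat.add_one_sub_one, pow_one]
      field_simp
    · apply HasDerivWithinAt.fun_sum
      intro k _
      refine ((((hη t ht k).cos.const_sub (Real.cos (ηbar k))).fun_sub
        (((hη t ht k).sub_const (ηbar k)).const_mul (Real.sin (ηbar k)))).const_mul
          (Γ k)).congr_deriv ?_
      ring
    · apply HasDerivWithinAt.fun_sum
      intro j _
      refine ((((hξ t ht j).sub_const lam).fun_pow 2).const_mul (1 / 2)).congr_deriv ?_
      simp only [Nat.cast_ofNat, Nat.add_one_sub_one, pow_one]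
      ring
  have hWnn : ∀ w x, 0 ≤ mgW A Gc w x := by
    intro w x
    unfold mgW
    have h1 : 0 ≤ ∑ i, A i * w i ^ 2 :=
      Finset.sum_nonneg fun i _ => mul_nonneg (hA i).le (sq_nonneg _)
    have h2 : 0 ≤ ∑ i, ∑ j, if Gc.Adj i j then (x i - x j) ^ 2 else 0 :=
      Finset.sum_nonneg fun i _ => Finset.sum_nonneg fun j _ => by
        split_ifs
        · exact sq_nonneg _
        · exact le_rfl
    linarith
  have hVanti : AntitoneOn (fun s => mgV VG Γ Miner lam ηbar (ω s) (η s) (ξ s)) (Ici 0) := by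
    apply antitoneOn_of_hasDerivWithinAt_nonpos (convex_Ici 0)
      (fun t ht => (hVd t ht).continuousWithinAt)
    · intro t ht
      rw [interior_Ici] at ht ⊢
      exact (hVd t (le_of_lt ht)).mono Ioi_subset_Ici_self
    · intro t ht
      simpa using hWnn _ _
  have hVlt : ∀ t, 0 ≤ t → mgV VG Γ Miner lam ηbar (ω t) (η t) (ξ t) < m := fun t ht =>
    (hVanti (show (0:ℝ) ∈ Ici (0:ℝ) from mem_Ici.2 le_rfl) (show t ∈ Ici (0:ℝ) from ht) ht).trans_lt hV0
  have hGnn : ∀ w : Fin N → ℝ, ∀ i ∈ VG, 0 ≤ 1 / 2 * Miner i * w i ^ 2 := fun w i hi => by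
    have := hMiner i hi
    positivity
  have hξnn : ∀ (x : {i // i ∈ Vc} → ℝ) j, j ∈ Finset.univ → 0 ≤ 1 / 2 * (x j - lam) ^ 2 :=
    fun x j _ => by positivity
  -- trapping
  have htrap : ∀ t, 0 ≤ t → ‖η t - ηbar‖ < r := by
    intro t ht
    by_contra hcon
    push Not at hcon
    have hηc : ContinuousOn (fun s => ‖η s - ηbar‖) (Icc 0 t) := by
      apply ContinuousOn.norm
      apply ContinuousOn.sub _ continuousOn_const
      apply continuousOn_pi.2
      intro k s hs
      exact ((hη s hs.1 k).continuousWithinAt).mono (fun y hy => hy.1)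
    obtain ⟨s, hs, hsr⟩ := intermediate_value_Icc ht hηc (show r ∈ Icc _ _ from ⟨hη0.le, hcon⟩)
    simp only at hsr
    have hle : ∀ k, |η s k - ηbar k| ≤ r := fun k => by
      rw [← hsr]; exact norm_le_pi_norm (η s - ηbar) k
    obtain ⟨k, hk⟩ : ∃ k, |η s k - ηbar k| = r := by
      by_contra hno
      push Not at hno
      have : ‖η s - ηbar‖ < r := (pi_norm_lt_iff hr0).2 fun k => lt_of_le_of_ne (hle k) (hno k)
      linarith
    have h1 := hm k _ hk
    have h2 : φ k (η s k) ≤ ∑ k, φ k (η s k) :=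
      Finset.single_le_sum (f := fun k => φ k (η s k)) (fun k _ => hφnn k _ (hle k))
        (Finset.mem_univ k)
    have h3 := hVlt s hs.1
    unfold mgV at h3
    have h4 := Finset.sum_nonneg (hGnn (ω s))
    have h5 := Finset.sum_nonneg (hξnn (ξ s))
    simp only [hφ] at h1 h2
    linarith
  have htrap' : ∀ t, 0 ≤ t → ∀ k, |η t k - ηbar k| ≤ r := fun t ht k =>
    (norm_le_pi_norm (η t - ηbar) k).trans (htrap t ht).le
  have hPnn : ∀ t, 0 ≤ t → 0 ≤ ∑ k, φ k (η t k) := fun t ht =>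
    Finset.sum_nonneg fun k _ => hφnn k _ (htrap' t ht k)
  have hVnn : ∀ t, 0 ≤ t → 0 ≤ mgV VG Γ Miner lam ηbar (ω t) (η t) (ξ t) := by
    intro t ht
    have h1 := hPnn t ht
    have h4 := Finset.sum_nonneg (hGnn (ω t))
    have h5 := Finset.sum_nonneg (hξnn (ξ t))
    unfold mgV
    simp only [hφ] at h1
    linarith
  -- boundedness
  have hξb : ∀ j, MgBdd (fun t => ξ t j) := by
    intro j
    refine MgBdd.congr (f := fun t => (ξ t j - lam) + lam) (MgBdd.add ?_ (MgBdd.const _))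
      (fun t _ => by ring)
    refine ⟨1 + 2 * m, fun t ht => ?_⟩
    have h1 := hPnn t ht
    have h4 := Finset.sum_nonneg (hGnn (ω t))
    have h5 := Finset.single_le_sum (hξnn (ξ t)) (Finset.mem_univ j)
    have h3 := hVlt t ht
    unfold mgV at h3
    simp only [hφ] at h1
    rw [abs_le]
    constructor <;> nlinarith
  have hωGb : ∀ i ∈ VG, MgBdd (fun t => ω t i) := by
    intro i hi
    have hMi := hMiner i hi
    refine ⟨1 + 2 * m * (Miner i)⁻¹, fun t ht => ?_⟩
    have h1 := hPnn t ht
    have h4 := Finset.single_le_sum (hGnn (ω t)) hi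
    have h5 := Finset.sum_nonneg (hξnn (ξ t))
    have h3 := hVlt t ht
    unfold mgV at h3
    simp only [hφ] at h1
    have h6 : ω t i ^ 2 ≤ 2 * m * (Miner i)⁻¹ := by
      rw [← div_eq_mul_inv, le_div_iff₀ hMi]
      linarith
    rw [abs_le]
    constructor <;> nlinarith
  have hηb : ∀ k, MgBdd (fun t => η t k) := by
    intro k
    refine MgBdd.congr (f := fun t => (η t k - ηbar k) + ηbar k) (MgBdd.add ?_ (MgBdd.const _))
      (fun t _ => by ring)
    exact ⟨r, fun t ht => htrap' t ht k⟩
  have hextb : ∀ i, MgBdd (fun t => mgExt Vc (fun j => (q j)⁻¹ * ξ t j) i) := by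
    intro i
    unfold mgExt
    split_ifs with h
    · exact (MgBdd.const _).mul (hξb _)
    · exact MgBdd.const 0
  have hsol : ∀ i, i ∉ VG → ∀ t, 0 ≤ t → ω t i = (A i)⁻¹ * (-(∑ k, B i k * (Γ k * Real.sin (η t k)))
      + mgExt Vc (fun j => (q j)⁻¹ * ξ t j) i + δ i) := by
    intro i hi t ht
    have h1 := halg t ht i hi
    unfold mgF at h1
    rw [eq_inv_mul_iff_mul_eq₀ (hA i).ne']
    linarith
  have hωb : ∀ i, MgBdd (fun t => ω t i) := by
    intro i
    by_cases hi : i ∈ VG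
    · exact hωGb i hi
    · refine MgBdd.congr ?_ (hsol i hi)
      exact (MgBdd.const _).mul (((MgBdd.sum _ fun k _ => (MgBdd.const _).mul
        ((MgBdd.const _).mul (MgBdd.sin _))).neg.add (hextb i)).add (MgBdd.const _))
  have hFb : ∀ i, MgBdd (fun t => mgF B Γ A δ Vc q (ω t) (η t) (ξ t) i) := by
    intro i
    unfold mgF
    exact ((((MgBdd.const _).mul (hωb i)).sub (MgBdd.sum _ fun k _ => (MgBdd.const _).mul
        ((MgBdd.const _).mul (MgBdd.sin _)))).add (hextb i)).add (MgBdd.const _)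
  -- Lipschitz
  have hηn : ∀ k, MgNice (fun t => η t k) := fun k =>
    MgNice.of_deriv (hηb k) (MgBdd.sum _ fun i _ => (MgBdd.const (B i k)).mul (hωb i))
      (fun t ht => hη t ht k)
  have hξn : ∀ j, MgNice (fun t => ξ t j) := fun j =>
    MgNice.of_deriv (hξb j) (g := fun t => (∑ l, if Gc.Adj j l then ξ t l - ξ t j else 0)
              - (q j)⁻¹ * ω t j.1)
      ((MgBdd.sum _ fun l _ => by
        by_cases h : Gc.Adj j l
        · simp only [h, if_true]; exact (hξb l).sub (hξb j)
        · simp only [h, if_false]; exact MgBdd.const 0).sub ((MgBdd.const _).mul (hωb j.1)))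
      (fun t ht => hξ t ht j)
  have hextn : ∀ i, MgNice (fun t => mgExt Vc (fun j => (q j)⁻¹ * ξ t j) i) := by
    intro i
    unfold mgExt
    split_ifs with h
    · exact (MgNice.const _).mul (hξn _)
    · exact MgNice.const 0
  have hsinn : ∀ i, MgNice (fun t => ∑ k, B i k * (Γ k * Real.sin (η t k))) := fun i =>
    MgNice.sum _ fun k _ => (MgNice.const _).mul ((MgNice.const _).mul (hηn k).sin)
  have hωn : ∀ i, MgNice (fun t => ω t i) := by
    intro i
    by_cases hi : i ∈ VG
    · exact MgNice.of_deriv (hωb i) ((MgBdd.const _).mul (hFb i)) (fun t ht => hω t ht i hi)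
    · refine MgNice.congr ?_ (hsol i hi)
      exact (MgNice.const _).mul (((hsinn i).neg.add (hextn i)).add (MgNice.const _))
  have hFn : ∀ i, MgNice (fun t => mgF B Γ A δ Vc q (ω t) (η t) (ξ t) i) := by
    intro i
    unfold mgF
    exact ((((MgNice.const _).mul (hωn i)).sub (hsinn i)).add (hextn i)).add (MgNice.const _)
  have hWn : MgNice (fun t => mgW A Gc (ω t) (ξ t)) := by
    unfold mgW
    refine (MgNice.sum _ fun i _ => ?_).add ((MgNice.const _).mul
      (MgNice.sum _ fun i _ => MgNice.sum _ fun j _ => ?_))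
    · simp only [pow_two]
      exact (MgNice.const _).mul ((hωn i).mul (hωn i))
    · by_cases h : Gc.Adj i j
      · simp only [h, if_true, pow_two]
        exact ((hξn i).sub (hξn j)).mul ((hξn i).sub (hξn j))
      · simp only [h, if_false]; exact MgNice.const 0
  -- V converges
  obtain ⟨l, hl⟩ : ∃ l, Tendsto (fun s => mgV VG Γ Miner lam ηbar (ω s) (η s) (ξ s)) atTop (𝓝 l) := by
    set V := (fun s => mgV VG Γ Miner lam ηbar (ω s) (η s) (ξ s)) with hVdef
    have hanti : Antitone (fun s => V (max s 0)) := fun a b hab =>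
      hVanti (show max a 0 ∈ Ici (0:ℝ) from mem_Ici.2 (le_max_right _ _))
        (show max b 0 ∈ Ici (0:ℝ) from mem_Ici.2 (le_max_right _ _)) (max_le_max_right 0 hab)
    have hbdd : BddBelow (range (fun s => V (max s 0))) :=
      ⟨0, by rintro _ ⟨s, rfl⟩; exact hVnn _ (le_max_right _ _)⟩
    refine ⟨_, (tendsto_atTop_ciInf hanti hbdd).congr' ?_⟩
    filter_upwards [eventually_ge_atTop (0:ℝ)] with s hs
    rw [max_eq_left hs]
  have hW0 : Tendsto (fun t => mgW A Gc (ω t) (ξ t)) atTop (𝓝 0) := by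
    have := mg_barbalat hWn.neg hVd hl
    simpa using this.neg
  have hω0 : ∀ i, Tendsto (fun t => ω t i) atTop (𝓝 0) := by
    intro i
    have h1 : Tendsto (fun t => ω t i ^ 2) atTop (𝓝 0) := by
      have h2 : Tendsto (fun t => (A i)⁻¹ * mgW A Gc (ω t) (ξ t)) atTop (𝓝 0) := by
        simpa using hW0.const_mul (A i)⁻¹
      refine squeeze_zero (fun t => sq_nonneg _) (fun t => ?_) h2
      rw [le_inv_mul_iff₀ (hA i)]
      have h3 : A i * ω t i ^ 2 ≤ ∑ i, A i * ω t i ^ 2 :=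
        Finset.single_le_sum (f := fun i => A i * ω t i ^ 2)
          (fun i _ => mul_nonneg (hA i).le (sq_nonneg _)) (Finset.mem_univ i)
      have h4 : 0 ≤ ∑ i, ∑ j, if Gc.Adj i j then (ξ t i - ξ t j) ^ 2 else 0 :=
        Finset.sum_nonneg fun i _ => Finset.sum_nonneg fun j _ => by
          split_ifs
          · exact sq_nonneg _
          · exact le_rfl
      unfold mgW
      linarith
    have h5 := h1.sqrt
    simp only [Real.sqrt_sq_eq_abs, Real.sqrt_zero] at h5
    exact (tendsto_zero_iff_abs_tendsto_zero _).2 h5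
  have hadj : ∀ i j, Gc.Adj i j → Tendsto (fun t => ξ t i - ξ t j) atTop (𝓝 0) := by
    intro i j hij
    have h1 : Tendsto (fun t => (ξ t i - ξ t j) ^ 2) atTop (𝓝 0) := by
      have h2 : Tendsto (fun t => 2 * mgW A Gc (ω t) (ξ t)) atTop (𝓝 0) := by
        simpa using hW0.const_mul 2
      refine squeeze_zero (fun t => sq_nonneg _) (fun t => ?_) h2
      have h3 : 0 ≤ ∑ i, A i * ω t i ^ 2 :=
        Finset.sum_nonneg fun i _ => mul_nonneg (hA i).le (sq_nonneg _)
      have hnn : ∀ i j, 0 ≤ if Gc.Adj i j then (ξ t i - ξ t j) ^ 2 else 0 := fun i j => by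
        split_ifs
        · exact sq_nonneg _
        · exact le_rfl
      have h4 : (∑ j, if Gc.Adj i j then (ξ t i - ξ t j) ^ 2 else 0) ≤
          ∑ i, ∑ j, if Gc.Adj i j then (ξ t i - ξ t j) ^ 2 else 0 :=
        Finset.single_le_sum (f := fun i => ∑ j, if Gc.Adj i j then (ξ t i - ξ t j) ^ 2 else 0)
          (fun i _ => Finset.sum_nonneg fun j _ => hnn i j) (Finset.mem_univ i)
      have h5 : (if Gc.Adj i j then (ξ t i - ξ t j) ^ 2 else 0) ≤
          ∑ j, if Gc.Adj i j then (ξ t i - ξ t j) ^ 2 else 0 :=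
        Finset.single_le_sum (f := fun j => if Gc.Adj i j then (ξ t i - ξ t j) ^ 2 else 0)
          (fun j _ => hnn i j) (Finset.mem_univ j)
      rw [if_pos hij] at h5
      unfold mgW
      linarith
    have h5 := h1.sqrt
    simp only [Real.sqrt_sq_eq_abs, Real.sqrt_zero] at h5
    exact (tendsto_zero_iff_abs_tendsto_zero _).2 h5
  have hcons : ∀ i j, Tendsto (fun t => ξ t i - ξ t j) atTop (𝓝 0) := by
    intro i j
    obtain ⟨p⟩ := hGc.preconnected i j
    induction p with
    | nil => simp
    | cons h p ih =>
      have := (hadj _ _ h).add ih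
      simpa using this
  refine ⟨hω0, ?_⟩
  -- total momentum
  have hSd : ∀ t, 0 ≤ t → HasDerivWithinAt (fun s => ∑ i ∈ VG, Miner i * ω s i)
      (∑ i, mgF B Γ A δ Vc q (ω t) (η t) (ξ t) i) (Ici 0) t := by
    intro t ht
    have h1 : ∑ i, mgF B Γ A δ Vc q (ω t) (η t) (ξ t) i =
        ∑ i ∈ VG, mgF B Γ A δ Vc q (ω t) (η t) (ξ t) i := by
      symm
      apply Finset.sum_subset (Finset.subset_univ _)
      intro i _ hi
      exact halg t ht i hi
    rw [h1]
    apply HasDerivWithinAt.fun_sum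
    intro i hi
    refine ((hω t ht i hi).const_mul (Miner i)).congr_deriv ?_
    rw [mul_inv_cancel_left₀ (hMiner i hi).ne']
  have hS0 : Tendsto (fun s => ∑ i ∈ VG, Miner i * ω s i) atTop (𝓝 0) := by
    have := tendsto_finsetSum VG (fun i _ => (hω0 i).const_mul (Miner i))
    simpa using this
  have hF0 := mg_barbalat (MgNice.sum Finset.univ fun i _ => hFn i) hSd hS0
  have hFsum : ∀ w e x, ∑ i, mgF B Γ A δ Vc q w e x i =
      - ∑ i, A i * w i + ∑ j, (q j)⁻¹ * x j + ∑ i, δ i := by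
    intro w e x
    have h1 : ∑ i, ∑ k, B i k * (Γ k * Real.sin (e k)) = 0 := by
      rw [Finset.sum_comm]
      apply Finset.sum_eq_zero
      intro k _
      rw [← Finset.sum_mul, hB1, zero_mul]
    have h2 := mgExt_sum Vc (fun j => (q j)⁻¹ * x j) (fun _ => 1)
    simp only [one_mul] at h2
    unfold mgF
    simp only [Finset.sum_add_distrib, Finset.sum_sub_distrib, h1, h2, neg_mul,
      Finset.sum_neg_distrib]
    ring
  have hbal : ∑ j, (q j)⁻¹ * lam + ∑ i, δ i = 0 := by
    have h1 := hFsum (fun _ => 0) ηbar (fun _ => lam)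
    rw [Finset.sum_eq_zero fun i _ => hfeas i] at h1
    simp only [mul_zero, Finset.sum_const_zero] at h1
    linarith
  intro j
  set Q : ℝ := ∑ j, (q j)⁻¹ with hQ
  have hQ0 : 0 < Q := Finset.sum_pos (fun j _ => inv_pos.2 (hq j)) Finset.univ_nonempty
  -- `Q (ξ_j - λ) = ∑ F + ∑ A ω - ∑ q⁻¹ (ξ_l - ξ_j)`
  have hid : ∀ t, ξ t j = Q⁻¹ * (∑ i, mgF B Γ A δ Vc q (ω t) (η t) (ξ t) i + ∑ i, A i * ω t i
      - ∑ l, (q l)⁻¹ * (ξ t l - ξ t j)) + lam := by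
    intro t
    rw [hFsum]
    have h1 : ∑ l, (q l)⁻¹ * (ξ t l - ξ t j) = ∑ l, (q l)⁻¹ * ξ t l - Q * ξ t j := by
      rw [hQ, Finset.sum_mul, ← Finset.sum_sub_distrib]
      exact Finset.sum_congr rfl fun l _ => by ring
    rw [← Finset.sum_mul] at hbal
    rw [h1]
    have h2 : ∑ i, δ i = - (Q * lam) := by linarith
    rw [h2]
    field_simp
    ring
  have h1 : Tendsto (fun t => ∑ i, A i * ω t i) atTop (𝓝 0) := by
    have := tendsto_finsetSum Finset.univ (fun i _ => (hω0 i).const_mul (A i))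
    simpa using this
  have h2 : Tendsto (fun t => ∑ l, (q l)⁻¹ * (ξ t l - ξ t j)) atTop (𝓝 0) := by
    have := tendsto_finsetSum Finset.univ (fun l _ => (hcons l j).const_mul (q l)⁻¹)
    simpa using this
  have h3 := (((hF0.add h1).sub h2).const_mul Q⁻¹).add_const lam
  simp only [add_zero, sub_zero, mul_zero, zero_add] at h3
  exact h3.congr fun t => (hid t).symm

/-- microgrid output agreement with optimal dispatch under
generator failures.  A proper subset `V_F ⊊ V_G` of generators has its input
frozen (absorbed into `δ_i`); with `V_c = (V_G ∖ V_F) ∪ V_I`, under the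
modified feasibility condition, the distributed controller
`ξ̇_i = Σ_{{i,j}∈E_c}(ξ_j − ξ_i) − q_i⁻¹ω_i`, `u_i = q_i⁻¹ξ_i` on `V_c`
locally achieves `ω_i(t) → 0` at every bus and `u_i(t) → ū_i = q_i⁻¹λ`. -/
theorem microgrid_failures_zero_frequency_optimal_dispatch
    {N M : ℕ} (hN : 0 < N) (hM : 0 < M)
    (B : Matrix (Fin N) (Fin M) ℝ)
    (hB1 : ∀ k, ∑ i, B i k = 0)
    (hBker : LinearMap.ker (Matrix.mulVecLin Bᵀ) =
      Submodule.span ℝ {(fun _ => (1 : ℝ) : Fin N → ℝ)})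
    -- partition of the buses into generators, inverters and loads:
    (VG VI VL : Finset (Fin N))
    (hpart : VG ∪ VI ∪ VL = Finset.univ)
    (hGI : Disjoint VG VI) (hGL : Disjoint VG VL) (hIL : Disjoint VI VL)
    -- the failed generators, a proper subset of V_G:
    (VF : Finset (Fin N)) (hVFsub : VF ⊆ VG) (hVFne : VF ≠ VG)
    -- line coefficients, inertias, damping coefficients, loads:
    (Γ : Fin M → ℝ) (hΓ : ∀ k, 0 < Γ k)
    (Miner : Fin N → ℝ) (hMiner : ∀ i ∈ VG, 0 < Miner i)
    (A : Fin N → ℝ) (hA : ∀ i, 0 < A i)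
    (δ : Fin N → ℝ)
    -- cost weights on the controlled buses V_c = (V_G \ V_F) ∪ V_I:
    (q : {i // i ∈ (VG \ VF) ∪ VI} → ℝ) (hq : ∀ i, 0 < q i)
    -- the optimal multiplier λ and optimal inputs ū_i = q_i⁻¹ λ:
    (lam : ℝ)
    (hlam : lam = -(∑ i : {i // i ∈ (VG \ VF) ∪ VI}, (q i)⁻¹)⁻¹ * ∑ i, δ i)
    -- the feasibility condition:
    (ηbar : Fin M → ℝ) (hηbar : ∀ k, ηbar k ∈ Ioo (-(π / 2)) (π / 2))
    (hfeasc : ∀ i : {i // i ∈ (VG \ VF) ∪ VI},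
      0 = -(∑ k, B i.1 k * (Γ k * Real.sin (ηbar k))) + (q i)⁻¹ * lam + δ i.1)
    (hfeasu : ∀ i ∈ VF ∪ VL,
      0 = -(∑ k, B i k * (Γ k * Real.sin (ηbar k))) + δ i)
    -- the connected undirected communication graph on V_c:
    (Gc : SimpleGraph {i // i ∈ (VG \ VF) ∪ VI}) [DecidableRel Gc.Adj]
    (hGc : Gc.Connected) :
    ∃ U : Set ((Fin N → ℝ) × (Fin M → ℝ) × ({i // i ∈ (VG \ VF) ∪ VI} → ℝ)),
      IsOpen U ∧ ((fun _ => 0), ηbar, fun _ => lam) ∈ U ∧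
      ∀ (ω : ℝ → Fin N → ℝ) (η : ℝ → Fin M → ℝ)
        (ξ : ℝ → {i // i ∈ (VG \ VF) ∪ VI} → ℝ),
        -- (ω, η, ξ) is a closed-loop solution on [0, ∞):
        ContinuousOn (fun t => (ω t, η t, ξ t)) (Ici 0) →
        (∀ t ∈ Ici (0 : ℝ), ∀ k,
          HasDerivWithinAt (fun s => η s k) (∑ i, B i k * ω t i) (Ici 0) t) →
        -- healthy synchronous generators (with u_i = q_i⁻¹ ξ_i):
        (∀ t ∈ Ici (0 : ℝ), ∀ i, ∀ hi : i ∈ VG \ VF,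
          HasDerivWithinAt (fun s => ω s i)
            ((Miner i)⁻¹ * (-(A i) * ω t i
              - (∑ k, B i k * (Γ k * Real.sin (η t k)))
              + (q ⟨i, Finset.mem_union_left _ hi⟩)⁻¹ *
                  ξ t ⟨i, Finset.mem_union_left _ hi⟩ + δ i)) (Ici 0) t) →
        -- failed generators (input frozen, absorbed into δ_i):
        (∀ t ∈ Ici (0 : ℝ), ∀ i ∈ VF,
          HasDerivWithinAt (fun s => ω s i)
            ((Miner i)⁻¹ * (-(A i) * ω t i
              - (∑ k, B i k * (Γ k * Real.sin (η t k))) + δ i)) (Ici 0) t) →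
        -- droop-controlled inverters:
        (∀ t ∈ Ici (0 : ℝ), ∀ i, ∀ hi : i ∈ VI,
          0 = -(A i) * ω t i - (∑ k, B i k * (Γ k * Real.sin (η t k)))
            + (q ⟨i, Finset.mem_union_right _ hi⟩)⁻¹ *
                ξ t ⟨i, Finset.mem_union_right _ hi⟩ + δ i) →
        -- frequency-dependent loads:
        (∀ t ∈ Ici (0 : ℝ), ∀ i ∈ VL,
          0 = -(A i) * ω t i - (∑ k, B i k * (Γ k * Real.sin (η t k))) + δ i) →
        -- the distributed controller:
        (∀ t ∈ Ici (0 : ℝ), ∀ i : {i // i ∈ (VG \ VF) ∪ VI},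
          HasDerivWithinAt (fun s => ξ s i)
            ((∑ j, if Gc.Adj i j then ξ t j - ξ t i else 0)
              - (q i)⁻¹ * ω t i.1) (Ici 0) t) →
        -- starting in U:
        (ω 0, η 0, ξ 0) ∈ U →
        -- zero frequency deviation and optimal dispatch in the limit:
        (∀ i, Tendsto (fun t => ω t i) atTop (𝓝 0)) ∧
        (∀ i : {i // i ∈ (VG \ VF) ∪ VI},
          Tendsto (fun t => (q i)⁻¹ * ξ t i) atTop (𝓝 ((q i)⁻¹ * lam))) := by
  have hVG : ∀ i, i ∉ VG → i ∈ VI ∨ i ∈ VL := by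
    intro i hi
    have := Finset.mem_univ i
    rw [← hpart] at this
    simp only [Finset.mem_union] at this
    tauto
  have hnc : ∀ i, i ∈ VF ∪ VL → i ∉ (VG \ VF) ∪ VI := by
    intro i hi hc
    simp only [Finset.mem_union, Finset.mem_sdiff] at hi hc
    rcases hi with hi | hi
    · rcases hc with hc | hc
      · exact hc.2 hi
      · exact Finset.disjoint_left.1 hGI (hVFsub hi) hc
    · rcases hc with hc | hc
      · exact Finset.disjoint_left.1 hGL hc.1 hi
      · exact Finset.disjoint_left.1 hIL hc hi
  obtain ⟨U, hU, hmem, hmain⟩ := mg_core hM B hB1 VG ((VG \ VF) ∪ VI) Γ hΓ Miner hMiner A hA δ q hq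
    lam ηbar hηbar (by
      intro i
      unfold mgF mgExt
      by_cases hi : i ∈ (VG \ VF) ∪ VI
      · rw [dif_pos hi]
        have := hfeasc ⟨i, hi⟩
        simp only at this
        linarith
      · rw [dif_neg hi]
        have hi' : i ∈ VF ∪ VL := by
          by_cases h : i ∈ VG
          · simp only [Finset.mem_union, Finset.mem_sdiff] at hi ⊢
            tauto
          · have := hVG i h
            simp only [Finset.mem_union] at hi ⊢
            tauto
        have := hfeasu i hi'
        linarith) Gc hGc
  refine ⟨U, hU, hmem, ?_⟩
  intro ω η ξ _ hη hωh hωf hinv hload hξ h0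
  obtain ⟨h1, h2⟩ := hmain ω η ξ hη (by
      intro t ht i hi
      by_cases hF : i ∈ VF
      · have := hωf t ht i hF
        unfold mgF mgExt
        rw [dif_neg (hnc i (Finset.mem_union_left _ hF)), add_zero]
        exact this
      · have hi' : i ∈ VG \ VF := Finset.mem_sdiff.2 ⟨hi, hF⟩
        have := hωh t ht i hi'
        unfold mgF mgExt
        rw [dif_pos (Finset.mem_union_left _ hi')]
        exact this) (by
      intro t ht i hi
      unfold mgF mgExt
      rcases hVG i hi with h | h
      · rw [dif_pos (Finset.mem_union_right _ h)]
        exact (hinv t ht i h).symm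
      · rw [dif_neg (hnc i (Finset.mem_union_right _ h)), add_zero]
        exact (hload t ht i h).symm) hξ h0
  exact ⟨h1, fun i => (h2 i).const_mul _⟩
end
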